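/- arXiv:2507.05231 — 11 statements merged into one kernel-verified Lean document; each statement's English description precedes it below -/
import Mathlib

section
/- There exist absolute constants c > 0 and K > 0 such that for every integer D ≥ 1 and every integer n > (2D)^{100D}, one has η(3n) ≥ c · D^{-K} · (3/4)^{D/2} · n^{-2/D}. -/
/-- `eta m` is the maximum of `e(G)/m²` over all simple graphs `G` on `m` vertices
in which every edge is contained in exactly one triangle. -/
noncomputable def eta (m : ℕ) : ℝ :=
  sSup {x : ℝ | ∃ G : SimpleGraph (Fin m),
    (∀ ⦃u v⦄, G.Adj u v → ∃! w, G.Adj u w ∧ G.Adj v w) ∧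
    x = (G.edgeSet.ncard : ℝ) / m ^ 2}

open SimpleGraph in
lemma locLin_unique {V : Type*} (G : SimpleGraph V) (h : G.LocallyLinear) :
    ∀ ⦃u v⦄, G.Adj u v → ∃! w, G.Adj u w ∧ G.Adj v w := by
  classical
  intro u v huv
  obtain ⟨s, hs, hu, hv⟩ := h.2 huv
  have key : ∀ w, G.Adj u w → G.Adj v w → G.IsNClique 3 {u, v, w} := by
    intro w h1 h2
    rw [is3Clique_triple_iff]
    exact ⟨huv, h1, h2⟩
  have huniq : ∀ w w', G.Adj u w → G.Adj v w → G.Adj u w' → G.Adj v w' → w = w' := by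
    intro w w' h1 h2 h3 h4
    have k1 := key w h1 h2
    have k2 := key w' h3 h4
    by_contra hne
    have hne' : ({u, v, w} : Finset V) ≠ {u, v, w'} := by
      intro he
      have : w ∈ ({u, v, w'} : Finset V) := by rw [← he]; simp
      simp only [Finset.mem_insert, Finset.mem_singleton] at this
      rcases this with h | h | h
      · exact h1.ne h.symm
      · exact h2.ne h.symm
      · exact hne h
    have := h.1 k1 k2 hne'
    exact huv.ne (this (x := u) (y := v) (by simp) (by simp))
  rw [is3Clique_iff] at hs
  obtain ⟨a, b, c, hab, hac, hbc, rfl⟩ := hs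
  have hex : ∃ w, G.Adj u w ∧ G.Adj v w := by
    have hne := huv.ne
    simp only [Finset.mem_insert, Finset.mem_singleton] at hu hv
    rcases hu with rfl | rfl | rfl <;> rcases hv with rfl | rfl | rfl <;>
      first
      | exact absurd rfl hne
      | exact ⟨_, hab, hbc.symm⟩
      | exact ⟨_, hbc.symm, hab⟩
      | exact ⟨_, hac, hbc⟩
      | exact ⟨_, hbc, hac⟩
      | exact ⟨_, hab.symm, hac.symm⟩
      | exact ⟨_, hac.symm, hab.symm⟩
  obtain ⟨w, hw1, hw2⟩ := hex
  exact ⟨w, ⟨hw1, hw2⟩, fun w' h' => huniq _ _ h'.1 h'.2 hw1 hw2⟩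

lemma eta_ge (m : ℕ) (G : SimpleGraph (Fin m)) (h : G.LocallyLinear) :
    (G.edgeSet.ncard : ℝ) / m ^ 2 ≤ eta m := by
  apply le_csSup
  · refine Set.Finite.bddAbove ?_
    have : {x : ℝ | ∃ G : SimpleGraph (Fin m),
      (∀ ⦃u v⦄, G.Adj u v → ∃! w, G.Adj u w ∧ G.Adj v w) ∧
      x = (G.edgeSet.ncard : ℝ) / m ^ 2} ⊆
      Set.range (fun G : SimpleGraph (Fin m) => (G.edgeSet.ncard : ℝ) / m ^ 2) := by
      rintro x ⟨G, _, rfl⟩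
      exact ⟨G, rfl⟩
    exact (Set.finite_range _).subset this
  · exact ⟨G, locLin_unique G h, rfl⟩

open SimpleGraph in
lemma eta_ge_tri {α : Type*} [Fintype α] [DecidableEq α] (n : ℕ) (hn : Fintype.card α ≤ n)
    (t : Finset (α × α × α)) [TripartiteFromTriangles.ExplicitDisjoint t]
    [TripartiteFromTriangles.NoAccidental t] :
    (3 * t.card : ℝ) / (3 * n) ^ 2 ≤ eta (3 * n) := by
  classical
  have hl := TripartiteFromTriangles.locallyLinear t
  set G := TripartiteFromTriangles.graph t with hG
  have hc := hl.card_edgeFinset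
  have hc2 : (G.cliqueFinset 3).card = t.card := by
    have := TripartiteFromTriangles.card_triangles t
    convert this
  have : Nonempty ((α ⊕ α ⊕ α) ↪ Fin (3 * n)) := by
    apply Function.Embedding.nonempty_of_card_le
    simp
    omega
  obtain ⟨f⟩ := this
  have h1 := eta_ge (3 * n) (G.map f) (hl.map f)
  have h2 : (G.map f).edgeSet.ncard = 3 * t.card := by
    rw [SimpleGraph.edgeSet_map, ← hc2, ← hc, Set.ncard_image_of_injective _ f.sym2Map.injective,
      ← SimpleGraph.coe_edgeFinset, Set.ncard_coe_finset]
  rw [h2] at h1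
  push_cast at h1
  exact h1

lemma eta_ge_lattice (D n m : ℕ) (S : Finset (Fin D → ℤ)) (hS : S.card ≤ n)
    (hm : 0 < m)
    (hf : ∀ x ∈ S, ∀ y ∈ S, ∑ i, (x i - y i) ^ 2 < (m : ℤ)) :
    (((S ×ˢ S).filter (fun p => -(p.1 + p.2) ∈ S)).card : ℝ) / m * 3 / (3 * n) ^ 2
      ≤ eta (3 * n) := by
  classical
  set P := (S ×ˢ S).filter (fun p => -(p.1 + p.2) ∈ S) with hP
  let f : (Fin D → ℤ) × (Fin D → ℤ) → ℕ := fun p => (∑ i, (p.1 i - p.2 i) ^ 2).toNat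
  have hnn : ∀ x y : Fin D → ℤ, 0 ≤ ∑ i, (x i - y i) ^ 2 := fun x y =>
    Finset.sum_nonneg fun i _ => sq_nonneg _
  have hmaps : ∀ p ∈ P, f p ∈ Finset.range m := by
    intro p hp
    simp only [hP, Finset.mem_filter, Finset.mem_product] at hp
    have h1 := hf _ hp.1.1 _ hp.1.2
    have h2 := hnn p.1 p.2
    simp only [f, Finset.mem_range]
    omega
  obtain ⟨k, -, hk⟩ : ∃ k ∈ Finset.range m, (P.card : ℝ) / m ≤
      ((P.filter (fun p => f p = k)).card : ℝ) := by
    have := Finset.exists_le_card_fiber_of_nsmul_le_card_of_maps_to (M := ℝ)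
      (b := (P.card : ℝ) / m) hmaps (Finset.nonempty_range_iff.2 hm.ne') (by
        have : (m : ℝ) ≠ 0 := by positivity
        simp
        rw [mul_div_cancel₀ _ this])
    exact this
  let t : Finset (S × S × S) := Finset.univ.filter (fun q =>
    (q.1 : Fin D → ℤ) + q.2.1 + q.2.2 = 0 ∧ ∑ i, ((q.1 : Fin D → ℤ) i - (q.2.1 : Fin D → ℤ) i) ^ 2 = (k : ℤ))
  have ht : (P.filter (fun p => f p = k)).card ≤ t.card := by
    apply Finset.card_le_card_of_surjOn
      (fun q : S × S × S => ((q.1 : Fin D → ℤ), (q.2.1 : Fin D → ℤ)))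
    rintro ⟨x, y⟩ hp
    simp only [hP, Finset.coe_filter, Finset.mem_filter, Finset.mem_product, Set.mem_ofPred_eq] at hp
    obtain ⟨⟨⟨hx, hy⟩, hz⟩, hfk⟩ := hp
    refine ⟨(⟨x, hx⟩, ⟨y, hy⟩, ⟨_, hz⟩), ?_, rfl⟩
    simp only [t, Finset.coe_filter, Finset.mem_univ, true_and, Set.mem_ofPred_eq]
    refine ⟨by abel, ?_⟩
    have h2 := hnn x y
    simp only [f] at hfk
    omega
  have i1 : SimpleGraph.TripartiteFromTriangles.ExplicitDisjoint t := by
    constructor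
    · intro a b c a' h h'
      simp only [t, Finset.mem_filter, Finset.mem_univ, true_and] at h h'
      apply Subtype.ext
      have := h.1.trans h'.1.symm
      simpa using this
    · intro a b c a' h h'
      simp only [t, Finset.mem_filter, Finset.mem_univ, true_and] at h h'
      apply Subtype.ext
      have := h.1.trans h'.1.symm
      simpa using this
    · intro a b c a' h h'
      simp only [t, Finset.mem_filter, Finset.mem_univ, true_and] at h h'
      apply Subtype.ext
      have := h.1.trans h'.1.symm
      simpa using this
  have i2 : SimpleGraph.TripartiteFromTriangles.NoAccidental t := by
    constructor
    intro a a' b b' c c' h1 h2 h3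
    simp only [t, Finset.mem_filter, Finset.mem_univ, true_and] at h1 h2 h3
    left
    apply Subtype.ext
    obtain ⟨a, ha⟩ := a
    obtain ⟨a', ha'⟩ := a'
    obtain ⟨b, hb⟩ := b
    obtain ⟨b', hb'⟩ := b'
    obtain ⟨c, hc⟩ := c
    obtain ⟨c', hc'⟩ := c'
    simp only at h1 h2 h3 ⊢
    have e1 : ∀ i, a' i + b i + c i = 0 := fun i => congrFun h1.1 i
    have e2 : ∀ i, a i + b' i + c i = 0 := fun i => congrFun h2.1 i
    have hsum : ∑ i, (a i - a' i) ^ 2 = 0 := by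
      have : ∀ i, 2 * (a i - a' i) ^ 2 =
        (a' i - b i) ^ 2 + (a i - b' i) ^ 2 - 2 * (a i - b i) ^ 2 := by
        intro i
        have hb' : b' i = a' i + b i - a i := by linarith [e1 i, e2 i]
        rw [hb']; ring
      have h4 : 2 * ∑ i, (a i - a' i) ^ 2 = 0 := by
        rw [Finset.mul_sum, Finset.sum_congr rfl (fun i _ => this i),
          Finset.sum_sub_distrib, Finset.sum_add_distrib, ← Finset.mul_sum, h1.2, h2.2, h3.2]
        ring
      linarith
    rw [Finset.sum_eq_zero_iff_of_nonneg (fun i _ => sq_nonneg _)] at hsum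
    funext i
    have := hsum i (Finset.mem_univ i)
    have := pow_eq_zero_iff (two_ne_zero) |>.1 this
    linarith
  have := eta_ge_tri n (by simpa using hS) t
  refine le_trans ?_ this
  have h5 : (P.card : ℝ) / m ≤ t.card := hk.trans (by exact_mod_cast ht)
  rw [mul_comm]
  gcongr

abbrev EE (D : ℕ) := EuclideanSpace ℝ (Fin D)

/-- lattice embedding -/
noncomputable def emb {D : ℕ} (z : Fin D → ℤ) : EE D := WithLp.toLp 2 (fun i => (z i : ℝ))

/-- half-open cubes -/
def cub {D : ℕ} (c : Fin D → ℝ) (h : ℝ) : Set (EE D) :=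
  WithLp.ofLp ⁻¹' (Set.univ.pi fun i => Set.Ico (c i - h) (c i + h))

open MeasureTheory Metric

lemma cub_meas {D : ℕ} (c : Fin D → ℝ) (h : ℝ) : MeasurableSet (cub c h) := by
  apply (PiLp.volume_preserving_ofLp (Fin D)).measurable
  exact MeasurableSet.univ_pi fun i => measurableSet_Ico

lemma cub_vol {D : ℕ} (c : Fin D → ℝ) (h : ℝ) (hh : 0 ≤ h) :
    volume (cub c h) = ENNReal.ofReal ((2 * h) ^ D) := by
  unfold cub
  rw [(PiLp.volume_preserving_ofLp (Fin D)).measure_preimage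
    (MeasurableSet.univ_pi fun i => measurableSet_Ico).nullMeasurableSet, Real.volume_pi_Ico]
  have : ∀ i, c i + h - (c i - h) = 2 * h := fun i => by ring
  simp only [this, Finset.prod_const, Finset.card_univ, Fintype.card_fin]
  rw [ENNReal.ofReal_pow (by positivity)]

lemma cub_vol_real {D : ℕ} (c : Fin D → ℝ) (h : ℝ) (hh : 0 ≤ h) :
    volume.real (cub c h) = (2 * h) ^ D := by
  rw [measureReal_def, cub_vol c h hh, ENNReal.toReal_ofReal (by positivity)]

lemma cub_norm {D : ℕ} (c : Fin D → ℝ) (h : ℝ) (hh : 0 ≤ h) (u : EE D) (hu : u ∈ cub c h) :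
    ‖u - WithLp.toLp 2 c‖ ≤ √D * h := by
  have : ‖u - WithLp.toLp 2 c‖ ^ 2 ≤ (√D * h) ^ 2 := by
    rw [EuclideanSpace.real_norm_sq_eq, mul_pow, Real.sq_sqrt (by positivity)]
    calc _ ≤ ∑ i : Fin D, h ^ 2 := by
          apply Finset.sum_le_sum
          intro i _
          simp only [cub, Set.mem_preimage, Set.mem_pi, Set.mem_univ, true_imp_iff, Set.mem_Ico] at hu
          have := hu i
          apply sq_le_sq'
          · simp; linarith
          · simp; linarith
      _ = _ := by simp
  exact le_of_sq_le_sq this (by positivity)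

lemma exists_cub {D : ℕ} (u : EE D) : ∃ z : Fin D → ℤ, u ∈ cub (fun i => (z i : ℝ)) (1/2) := by
  refine ⟨fun i => ⌊u i + 1/2⌋, ?_⟩
  simp only [cub, Set.mem_preimage, Set.mem_pi, Set.mem_univ, true_imp_iff, Set.mem_Ico]
  intro i
  have h1 := Int.floor_le (u i + 1/2)
  have h2 := Int.lt_floor_add_one (u i + 1/2)
  constructor <;> linarith

lemma cub_disj {D : ℕ} (z z' : Fin D → ℤ) (u : EE D) (h : u ∈ cub (fun i => (z i : ℝ)) (1/2))
    (h' : u ∈ cub (fun i => (z' i : ℝ)) (1/2)) : z = z' := by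
  simp only [cub, Set.mem_preimage, Set.mem_pi, Set.mem_univ, true_imp_iff, Set.mem_Ico] at h h'
  funext i
  have a := h i
  have b := h' i
  have h1 : (z i : ℝ) < z' i + 1 := by linarith
  have h2 : (z' i : ℝ) < z i + 1 := by linarith
  have h1 : z i < z' i + 1 := by exact_mod_cast h1
  have h2 : z' i < z i + 1 := by exact_mod_cast h2
  omega

lemma count_ge {D : ℕ} (A : Set (EE D)) (S : Finset (Fin D → ℤ))
    (h : ∀ u ∈ A, ∀ z : Fin D → ℤ, ‖u - emb z‖ ≤ √D / 2 → z ∈ S) :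
    volume.real A ≤ S.card := by
  have hsub : A ⊆ ⋃ z ∈ S, cub (fun i => (z i : ℝ)) (1/2) := by
    intro u hu
    obtain ⟨z, hz⟩ := exists_cub u
    have := cub_norm _ _ (by norm_num) u hz
    simp only [Set.mem_iUnion]
    exact ⟨z, h u hu z (by unfold emb; linarith), hz⟩
  calc volume.real A ≤ volume.real (⋃ z ∈ S, cub (fun i => (z i : ℝ)) (1/2)) := by
        refine measureReal_mono hsub (ne_of_lt ?_)
        refine (measure_biUnion_finset_le _ _).trans_lt ?_
        rw [ENNReal.sum_lt_top]
        intro z _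
        rw [cub_vol _ _ (by norm_num)]
        exact ENNReal.ofReal_lt_top
    _ ≤ ∑ z ∈ S, volume.real (cub (fun i => (z i : ℝ)) (1/2)) := measureReal_biUnion_finset_le _ _
    _ = S.card := by
        simp [cub_vol_real]

lemma count_le {D : ℕ} (R : ℝ) (S : Finset (Fin D → ℤ))
    (h : ∀ z ∈ S, ‖emb z‖ ≤ R) :
    (S.card : ℝ) ≤ volume.real (closedBall (0 : EE D) (R + √D / 2)) := by
  have e : volume.real (⋃ z ∈ S, cub (fun i => (z i : ℝ)) (1/2)) = (S.card : ℝ) := by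
    have hfin : ∀ z ∈ S, volume (cub (fun i => (z i : ℝ)) (1/2)) ≠ ⊤ := by
      intro z _
      rw [cub_vol _ _ (by norm_num)]
      exact ENNReal.ofReal_ne_top
    rw [measureReal_biUnion_finset (h := hfin)]
    · simp [cub_vol_real]
    · intro z _ z' _ hne
      rw [Function.onFun, Set.disjoint_left]
      intro u hu hu'
      exact hne (cub_disj z z' u hu hu')
    · intro z _
      exact cub_meas _ _
  rw [← e]
  apply measureReal_mono
  · intro u hu
    simp only [Set.mem_iUnion] at hu
    obtain ⟨z, hz, hu⟩ := hu
    have h1 := cub_norm _ _ (by norm_num) u hu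
    have h2 := h z hz
    rw [mem_closedBall_zero_iff]
    unfold emb at h2
    have := norm_le_norm_add_norm_sub' u (WithLp.toLp 2 (fun i => (z i : ℝ)))
    linarith
  · exact measure_closedBall_lt_top.ne

/-- volume of unit ball -/
noncomputable def VV (D : ℕ) : ℝ := volume.real (ball (0 : EE D) 1)

lemma vol_ball {D : ℕ} (x : EE D) (r : ℝ) (hr : 0 ≤ r) :
    volume.real (closedBall x r) = r ^ D * VV D := by
  rw [Measure.addHaar_real_closedBall _ _ hr]
  simp [VV]

lemma VV_le {D : ℕ} : VV D ≤ 4 ^ D := by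
  have h : ball (0 : EE D) 1 ⊆ cub (fun _ => 0) 2 := by
    intro u hu
    rw [mem_ball_zero_iff] at hu
    simp only [cub, Set.mem_preimage, Set.mem_pi, Set.mem_univ, true_imp_iff, Set.mem_Ico]
    intro i
    have h1 := PiLp.norm_apply_le u i
    rw [Real.norm_eq_abs] at h1
    have := abs_le.1 (h1.trans hu.le)
    constructor <;> linarith [this.1, this.2]
  have := measureReal_mono (μ := volume) h (by
    rw [cub_vol _ _ (by norm_num)]; exact ENNReal.ofReal_ne_top)
  rw [cub_vol_real _ _ (by norm_num)] at this
  norm_num at this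
  exact this

lemma VV_ge {D : ℕ} (hD : 1 ≤ D) : (2 / √D) ^ D ≤ VV D := by
  have hD' : 0 < √(D : ℝ) := by apply Real.sqrt_pos.2; exact_mod_cast hD
  have h : cub (fun _ => 0) (1 / √D) ⊆ closedBall (0 : EE D) 1 := by
    intro u hu
    have := cub_norm _ _ (by positivity) u hu
    rw [mul_one_div_cancel hD'.ne'] at this
    rw [mem_closedBall_zero_iff]
    have h0 : (WithLp.toLp 2 (fun _ => 0) : EE D) = 0 := by ext i; simp
    rwa [h0, sub_zero] at this
  have := measureReal_mono (μ := volume) h measure_closedBall_lt_top.ne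
  rw [cub_vol_real _ _ (by positivity), vol_ball _ _ (by norm_num)] at this
  simpa [div_eq_mul_inv] using this

lemma slab {D : ℕ} (x : EE D) (ρ ε : ℝ) (hε : 0 < ε) (K : ℕ) (hK : ρ * ‖x‖ ≤ K * ε) :
    volume.real (closedBall (0 : EE D) ρ) ≤
      (2 * K + 1) * volume.real {w : EE D | ‖w‖ ≤ ρ ∧ |inner ℝ w x| ≤ ε} := by
  set S := {w : EE D | ‖w‖ ≤ ρ ∧ |inner ℝ w x| ≤ ε} with hS
  have hSfin : volume S ≠ ⊤ := by
    refine ne_of_lt (lt_of_le_of_lt (measure_mono (?_ : S ⊆ closedBall 0 ρ)) measure_closedBall_lt_top)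
    intro w hw
    rw [mem_closedBall_zero_iff]
    exact hw.1
  by_cases hx : x = 0
  · have : closedBall (0 : EE D) ρ ⊆ S := by
      intro w hw
      rw [mem_closedBall_zero_iff] at hw
      refine ⟨hw, ?_⟩
      simp [hx, hε.le]
    have h1 := measureReal_mono (μ := volume) this hSfin
    have h2 : 0 ≤ volume.real S := measureReal_nonneg
    have h3 : (0 : ℝ) ≤ K := by positivity
    nlinarith
  have hx2 : 0 < ‖x‖ ^ 2 := by have := norm_pos_iff.2 hx; positivity
  let e : ℤ → EE D := fun k => (-(k * ε / ‖x‖ ^ 2)) • x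
  have hsub : closedBall (0 : EE D) ρ ⊆ ⋃ k ∈ Finset.Icc (-(K : ℤ)) K, (fun w => e k + w) ⁻¹' S := by
    intro w hw
    rw [mem_closedBall_zero_iff] at hw
    set p := inner ℝ w x with hp
    have hpb : |p| ≤ K * ε :=
      ((abs_real_inner_le_norm w x).trans (by gcongr)).trans hK
    -- choose k
    obtain ⟨k, hk1, hk2, hk3⟩ : ∃ k : ℤ, |k| ≤ K ∧ |p - k * ε| ≤ ε ∧ 0 ≤ k * ε * (2 * p - k * ε) := by
      rcases le_total 0 p with h0 | h0
      · have a1 := Int.floor_le (p / ε)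
        have a2 := Int.lt_floor_add_one (p / ε)
        have a3 : 0 ≤ ⌊p / ε⌋ := Int.floor_nonneg.2 (by positivity)
        rw [le_div_iff₀ hε] at a1
        rw [div_lt_iff₀ hε] at a2
        have a3' : (0 : ℝ) ≤ ⌊p / ε⌋ := by exact_mod_cast a3
        have a4 : (0 : ℝ) ≤ ⌊p / ε⌋ * ε := by positivity
        refine ⟨⌊p / ε⌋, ?_, ?_, ?_⟩
        · rw [abs_of_nonneg a3]
          rw [abs_of_nonneg h0] at hpb
          have : (⌊p / ε⌋ : ℝ) ≤ K := by
            by_contra hc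
            push Not at hc
            nlinarith
          exact_mod_cast this
        · rw [abs_le]; constructor <;> linarith
        · apply mul_nonneg a4; linarith
      · have h0' : 0 ≤ -p := by linarith
        have a1 := Int.floor_le (-p / ε)
        have a2 := Int.lt_floor_add_one (-p / ε)
        have a3 : 0 ≤ ⌊-p / ε⌋ := Int.floor_nonneg.2 (by positivity)
        rw [le_div_iff₀ hε] at a1
        rw [div_lt_iff₀ hε] at a2
        have a3' : (0 : ℝ) ≤ ⌊-p / ε⌋ := by exact_mod_cast a3
        have a4 : (0 : ℝ) ≤ ⌊-p / ε⌋ * ε := by positivity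
        refine ⟨-⌊-p / ε⌋, ?_, ?_, ?_⟩
        · rw [abs_neg, abs_of_nonneg a3]
          rw [abs_of_nonpos h0] at hpb
          have : (⌊-p / ε⌋ : ℝ) ≤ K := by
            by_contra hc
            push Not at hc
            nlinarith
          exact_mod_cast this
        · push_cast
          rw [abs_le]; constructor <;> linarith
        · push_cast
          nlinarith
    simp only [Set.mem_iUnion]
    refine ⟨k, ?_, ?_⟩
    · rw [Finset.mem_Icc]; exact abs_le.1 hk1
    · simp only [Set.mem_preimage, hS, Set.mem_ofPred_eq, e]
      constructor
      · refine le_trans ?_ hw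
        apply le_of_sq_le_sq _ (norm_nonneg _)
        rw [norm_add_sq_real, norm_smul, inner_smul_left, real_inner_comm, ← hp, mul_pow]
        simp only [Real.norm_eq_abs, sq_abs, conj_trivial]
        have : (-(k * ε / ‖x‖ ^ 2)) ^ 2 * ‖x‖ ^ 2 + 2 * (-(k * ε / ‖x‖ ^ 2) * p) + ‖w‖ ^ 2
          = ‖w‖ ^ 2 - (k * ε * (2 * p - k * ε)) / ‖x‖ ^ 2 := by
          field_simp
          ring
        rw [this]
        have : 0 ≤ (k * ε * (2 * p - k * ε)) / ‖x‖ ^ 2 := by positivity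
        linarith
      · rw [inner_add_left, inner_smul_left, real_inner_self_eq_norm_sq, ← hp]
        simp only [conj_trivial]
        have : -(k * ε / ‖x‖ ^ 2) * ‖x‖ ^ 2 + p = p - k * ε := by field_simp; ring
        rw [this]
        exact hk2
  have hvol : ∀ k, volume ((fun w => e k + w) ⁻¹' S) = volume S := fun k =>
    measure_preimage_add volume (e k) S
  calc _ ≤ volume.real (⋃ k ∈ Finset.Icc (-(K : ℤ)) K, (fun w => e k + w) ⁻¹' S) := by
        refine measureReal_mono hsub (ne_of_lt ?_)
        refine (measure_biUnion_finset_le _ _).trans_lt ?_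
        rw [ENNReal.sum_lt_top]
        intro z _
        rw [hvol]
        exact hSfin.lt_top
    _ ≤ ∑ k ∈ Finset.Icc (-(K : ℤ)) K, volume.real ((fun w => e k + w) ⁻¹' S) :=
        measureReal_biUnion_finset_le _ _
    _ = _ := by
        simp only [measureReal_def, hvol, Finset.sum_const, Int.card_Icc, nsmul_eq_mul]
        congr 1
        have : ((K : ℤ) + 1 - -K).toNat = 2 * K + 1 := by omega
        rw [this]
        push_cast
        ring

lemma lens {D : ℕ} (hD : 1 ≤ D) (R : ℝ) (hR : 0 < R) (x : EE D) (hx : ‖x‖ ≤ R) :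
    (√3 / 2 * R) ^ D * VV D / (14 * D) ≤ volume.real {v : EE D | ‖v‖ ≤ R ∧ ‖x + v‖ ≤ R} := by
  have hD1 : (1 : ℝ) ≤ D := by exact_mod_cast hD
  set δ : ℝ := 1 / (2 * D) with hδ
  have hδ0 : 0 < δ := by positivity
  have hδ1 : δ ≤ 1 / 2 := by
    rw [hδ]; apply one_div_le_one_div_of_le <;> linarith
  have hs3 : √3 ^ 2 = (3 : ℝ) := Real.sq_sqrt (by norm_num)
  have hs0 : 0 < √(3 : ℝ) := by positivity
  have hs2 : √(3 : ℝ) ≤ 2 := by nlinarith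
  set ρ := √3 / 2 * R * (1 - δ) with hρ
  have hρ0 : 0 ≤ ρ := by
    have : 0 ≤ 1 - δ := by linarith
    positivity
  have hρ2 : ρ ^ 2 = 3 / 4 * R ^ 2 * (1 - δ) ^ 2 := by
    rw [hρ, mul_pow, mul_pow, div_pow, hs3]; ring
  have hρR : ρ ≤ R := by
    apply le_of_sq_le_sq _ hR.le
    rw [hρ2]
    have : (1 - δ) ^ 2 ≤ 1 := by nlinarith
    nlinarith [sq_nonneg R]
  have hsl := slab x ρ (3 / 4 * R ^ 2 * δ) (by positivity) (3 * D) (by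
    have h1 : ρ * ‖x‖ ≤ R * R := by gcongr
    have h2 : ((3 * D : ℕ) : ℝ) * (3 / 4 * R ^ 2 * δ) = 9 / 8 * R ^ 2 := by
      rw [hδ]; push_cast; field_simp; norm_num
    rw [h2]; nlinarith)
  set S := {w : EE D | ‖w‖ ≤ ρ ∧ |inner ℝ w x| ≤ 3 / 4 * R ^ 2 * δ} with hS
  have hmono : volume.real S ≤ volume.real {v : EE D | ‖v‖ ≤ R ∧ ‖x + v‖ ≤ R} := by
    have e1 : volume ((fun w => ((1/2 : ℝ) • x) + w) ⁻¹' S) = volume S := measure_preimage_add volume _ S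
    rw [measureReal_def, ← e1, ← measureReal_def]
    apply measureReal_mono
    · intro v hv
      simp only [Set.mem_preimage, hS, Set.mem_ofPred_eq] at hv
      set w := (1/2 : ℝ) • x + v with hw
      have hv1 : v = w - (1/2 : ℝ) • x := by rw [hw]; abel
      have hv2 : x + v = w + (1/2 : ℝ) • x := by
        rw [hv1]
        have : x = (1/2 : ℝ) • x + (1/2 : ℝ) • x := by rw [← add_smul]; norm_num
        nth_rewrite 1 [this]
        abel
      have hxx : ‖x‖ ^ 2 ≤ R ^ 2 := by gcongr
      have hww : ‖w‖ ^ 2 ≤ ρ ^ 2 := by have := hv.1; gcongr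
      have hab := abs_le.1 hv.2
      have hfin : 3 / 4 * R ^ 2 * (1 - δ) ^ 2 + 3 / 4 * R ^ 2 * δ + R ^ 2 / 4 ≤ R ^ 2 := by
        have : (1 - δ) ^ 2 + δ ≤ 1 := by nlinarith
        nlinarith [sq_nonneg R]
      have hn : ‖(1/2 : ℝ) • x‖ ^ 2 = ‖x‖ ^ 2 / 4 := by
        rw [norm_smul, mul_pow]; norm_num; ring
      constructor
      · apply le_of_sq_le_sq _ hR.le
        rw [hv1, norm_sub_sq_real, hn, inner_smul_right]
        linarith
      · apply le_of_sq_le_sq _ hR.le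
        rw [hv2, norm_add_sq_real, hn, inner_smul_right]
        linarith
    · refine ne_of_lt (lt_of_le_of_lt (measure_mono
        (?_ : {v : EE D | ‖v‖ ≤ R ∧ ‖x + v‖ ≤ R} ⊆ closedBall 0 R)) measure_closedBall_lt_top)
      intro w hw
      rw [mem_closedBall_zero_iff]
      exact hw.1
  refine le_trans ?_ hmono
  rw [vol_ball _ _ hρ0] at hsl
  have hb : (1 : ℝ) / 2 ≤ (1 - δ) ^ D := by
    have := one_add_mul_le_pow (a := -δ) (by linarith) D
    have h2 : (D : ℝ) * -δ = - (1 / 2) := by rw [hδ]; field_simp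
    rw [h2] at this
    calc (1 : ℝ) / 2 = 1 + -(1/2) := by norm_num
      _ ≤ _ := this
      _ = _ := by ring
  have hV : 0 ≤ VV D := measureReal_nonneg
  have hSn : 0 ≤ volume.real S := measureReal_nonneg
  rw [div_le_iff₀ (by positivity)]
  rw [hρ, mul_pow] at hsl
  push_cast at hsl
  have h6 : (√3 / 2 * R) ^ D * (1 / 2) * VV D ≤ (√3 / 2 * R) ^ D * (1 - δ) ^ D * VV D := by gcongr
  have h7 : (2 * (3 * D) + 1) * volume.real S ≤ 7 * D * volume.real S := by
    gcongr; linarith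
  linarith

lemma emb_add {D : ℕ} (x y : Fin D → ℤ) : emb (x + y) = emb x + emb y := by
  ext i; simp [emb]

lemma emb_neg {D : ℕ} (x : Fin D → ℤ) : emb (-x) = -emb x := by
  ext i; simp [emb]

lemma emb_dist {D : ℕ} (x y : Fin D → ℤ) :
    ‖emb x - emb y‖ ^ 2 = ((∑ i, (x i - y i) ^ 2 : ℤ) : ℝ) := by
  rw [EuclideanSpace.real_norm_sq_eq]; simp [emb]

lemma emb_fin {D : ℕ} (r : ℝ) : {z : Fin D → ℤ | ‖emb z‖ ≤ r}.Finite := by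
  apply (Set.finite_Icc (fun _ : Fin D => -⌈r⌉) (fun _ => ⌈r⌉)).subset
  intro z hz
  have h : ∀ i, |z i| ≤ ⌈r⌉ := by
    intro i
    have h1 := PiLp.norm_apply_le (emb z) i
    have h2 : |(z i : ℝ)| ≤ r := by
      rw [Real.norm_eq_abs] at h1
      exact h1.trans hz
    have h3 : ((|z i| : ℤ) : ℝ) ≤ (⌈r⌉ : ℝ) := by push_cast; exact h2.trans (Int.le_ceil r)
    exact_mod_cast h3
  exact ⟨fun i => (abs_le.1 (h i)).1, fun i => (abs_le.1 (h i)).2⟩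

lemma pairs_count {D : ℕ} (hD : 1 ≤ D) (r : ℝ) (hr : √D < r) (S : Finset (Fin D → ℤ))
    (hS : ∀ z, z ∈ S ↔ ‖emb z‖ ≤ r) :
    (√3 / 2) ^ D * ((r - √D) ^ D * VV D) ^ 2 / (14 * D) ≤
      (((S ×ˢ S).filter (fun p => -(p.1 + p.2) ∈ S)).card : ℝ) := by
  classical
  have hq : 0 ≤ √(D : ℝ) := Real.sqrt_nonneg _
  have hV : 0 ≤ VV D := measureReal_nonneg
  set R := r - √D / 2 with hR
  have hR0 : 0 < R := by rw [hR]; linarith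
  set S' := S.filter (fun z => ‖emb z‖ ≤ R) with hS'
  have h1 : (r - √D) ^ D * VV D ≤ S'.card := by
    rw [← vol_ball (0 : EE D) _ (by linarith)]
    apply count_ge
    intro u hu z hz
    rw [mem_closedBall_zero_iff] at hu
    have h3 := norm_le_norm_add_norm_sub u (emb z)
    rw [hS', Finset.mem_filter, hS]
    constructor <;> linarith
  have h2 : ∀ x ∈ S', (√3 / 2 * R) ^ D * VV D / (14 * D) ≤
      ((S.filter (fun y => -(x + y) ∈ S)).card : ℝ) := by
    intro x hx
    rw [hS', Finset.mem_filter] at hx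
    refine (lens hD R hR0 (emb x) hx.2).trans ?_
    apply count_ge
    rintro v ⟨hv1, hv2⟩ z hz
    have h3 := norm_le_norm_add_norm_sub v (emb z)
    have h4 := norm_le_norm_add_norm_sub (emb x + v) (emb x + emb z)
    have h5 : emb x + v - (emb x + emb z) = v - emb z := by abel
    rw [h5] at h4
    rw [Finset.mem_filter, hS, hS, emb_neg, norm_neg, emb_add]
    constructor <;> linarith
  have h3 : (((S ×ˢ S).filter (fun p => -(p.1 + p.2) ∈ S)).card : ℝ) =
      ∑ x ∈ S, ((S.filter (fun y => -(x + y) ∈ S)).card : ℝ) := by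
    rw [Finset.card_filter, Finset.sum_product]
    simp only [Finset.card_filter]
    push_cast
    rfl
  rw [h3]
  calc _ = (r - √D) ^ D * VV D * ((√3 / 2 * (r - √D)) ^ D * VV D / (14 * D)) := by
        rw [mul_pow (√3 / 2)]; ring
    _ ≤ S'.card * ((√3 / 2 * R) ^ D * VV D / (14 * D)) := by
        have : 0 ≤ r - √D := by linarith
        have h' : r - √D ≤ R := by linarith
        gcongr
    _ = ∑ x ∈ S', ((√3 / 2 * R) ^ D * VV D / (14 * D)) := by simp
    _ ≤ ∑ x ∈ S', ((S.filter (fun y => -(x + y) ∈ S)).card : ℝ) := Finset.sum_le_sum h2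
    _ ≤ _ := by
        apply Finset.sum_le_sum_of_subset_of_nonneg (Finset.filter_subset _ _)
        intros; positivity

lemma main_bound (D n : ℕ) (hD : 1 ≤ D) (a : ℝ) (ha : ((2 * D : ℝ)) ^ 100 ≤ a) (han : a ^ D = n) :
    1 / 168 * (1 / (D : ℝ) ^ 2) * (√3 / 2) ^ D * (1 / a ^ 2) ≤ eta (3 * n) := by
  have hD1 : (1 : ℝ) ≤ D := by exact_mod_cast hD
  have hD0 : D ≠ 0 := by omega
  have ha0 : 0 < a := lt_of_lt_of_le (by positivity) ha
  have hn0 : (0 : ℝ) < n := by rw [← han]; positivity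
  have hV : 0 < VV D := lt_of_lt_of_le (by positivity) (VV_ge hD)
  set q := √(D : ℝ) with hq
  have hq2 : q ^ 2 = D := Real.sq_sqrt (by positivity)
  have hq1 : 1 ≤ q := by rw [hq]; exact Real.one_le_sqrt.2 hD1
  have hqD : q ≤ D := by nlinarith
  obtain ⟨t, ht0, ht⟩ : ∃ t : ℝ, 0 < t ∧ t ^ D * VV D = n := by
    refine ⟨(n / VV D) ^ ((1 : ℝ) / D), by positivity, ?_⟩
    rw [one_div, Real.rpow_inv_natCast_pow (by positivity) hD0]
    field_simp
  have ht1 : a / 4 ≤ t := by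
    by_contra hc
    push Not at hc
    have h1 : t ^ D < (a / 4) ^ D := pow_lt_pow_left₀ hc ht0.le hD0
    have h2 : t ^ D * VV D ≤ t ^ D * 4 ^ D := by gcongr; exact VV_le
    rw [div_pow, lt_div_iff₀ (by positivity)] at h1
    linarith
  have ht2 : 2 * t / q ≤ a := by
    by_contra hc
    push Not at hc
    have h1 : a ^ D < (2 * t / q) ^ D := pow_lt_pow_left₀ hc ha0.le hD0
    have h2 : t ^ D * (2 / q) ^ D ≤ t ^ D * VV D := by gcongr; exact VV_ge hD
    rw [← mul_pow] at h2
    have : t * (2 / q) = 2 * t / q := by ring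
    rw [this] at h2
    linarith
  have htbig : 6 * (D : ℝ) * q ≤ t := by
    have h1 : (2 * D : ℝ) ^ 100 = (2 * D) ^ 2 * (2 * D) ^ 98 := by ring
    have h2 : (2 : ℝ) ^ 98 ≤ (2 * D) ^ 98 := by gcongr; linarith
    have h3 : (2 * D : ℝ) ^ 2 * 2 ^ 98 ≤ (2 * D) ^ 2 * (2 * D) ^ 98 := by gcongr
    have h4 : (6 * (D : ℝ) * q) ≤ 6 * D * D := by gcongr
    have h5 : (24 : ℝ) * D ^ 2 ≤ (2 * D) ^ 2 * 2 ^ 98 := by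
      have : (0 : ℝ) ≤ D ^ 2 := by positivity
      rw [mul_pow]; norm_num; linarith
    nlinarith
  have ht6 : 6 * q ≤ t := by nlinarith
  set r := t - q / 2 with hr
  set S := (emb_fin (D := D) r).toFinset with hSdef
  have hS : ∀ z, z ∈ S ↔ ‖emb z‖ ≤ r := by intro z; simp [hSdef]
  have hcard : S.card ≤ n := by
    have h1 := count_le r S (fun z hz => (hS z).1 hz)
    rw [vol_ball _ _ (by linarith)] at h1
    have h2 : r + √(D : ℝ) / 2 = t := by rw [hr]; ring
    rw [h2, ht] at h1
    exact_mod_cast h1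
  set m := ⌊4 * r ^ 2⌋₊ + 1 with hm
  have hf : ∀ x ∈ S, ∀ y ∈ S, ∑ i, (x i - y i) ^ 2 < (m : ℤ) := by
    intro x hx y hy
    rw [hS] at hx hy
    have h1 := emb_dist x y
    have h2 : ‖emb x - emb y‖ ≤ 2 * r := (norm_sub_le _ _).trans (by linarith)
    have h3 : ‖emb x - emb y‖ ^ 2 ≤ (2 * r) ^ 2 := by gcongr
    have h4 := Nat.lt_floor_add_one (4 * r ^ 2)
    have h5 : ((∑ i, (x i - y i) ^ 2 : ℤ) : ℝ) < ((m : ℤ) : ℝ) := by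
      rw [← h1, hm]; push_cast; nlinarith
    exact_mod_cast h5
  have hmain := eta_ge_lattice D n m S hcard (by omega) hf
  have hp := pairs_count hD r (by rw [← hq]; linarith) S hS
  rw [← hq] at hp
  set P : ℝ := (((S ×ˢ S).filter (fun p => -(p.1 + p.2) ∈ S)).card : ℝ) with hP
  refine le_trans ?_ hmain
  have hrq : (1 / 2 : ℝ) * n ^ 2 ≤ ((r - q) ^ D * VV D) ^ 2 := by
    have e1 : r - q = t * (1 + -(3 / 2 * q / t)) := by rw [hr]; field_simp; ring
    rw [e1, mul_pow t]
    have e2 : (t ^ D * (1 + -(3 / 2 * q / t)) ^ D * VV D) ^ 2 =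
      (t ^ D * VV D) ^ 2 * (1 + -(3 / 2 * q / t)) ^ (2 * D) := by ring
    rw [e2, ht]
    have hs : 3 / 2 * q / t * (2 * D) ≤ 1 / 2 := by
      rw [div_mul_eq_mul_div, div_le_iff₀ ht0]; nlinarith
    have hs1 : 3 / 2 * q / t ≤ 1 := by
      rw [div_le_iff₀ ht0]; linarith
    have := one_add_mul_le_pow (a := -(3 / 2 * q / t)) (by linarith) (2 * D)
    push_cast at this
    have h6 : (1 / 2 : ℝ) ≤ (1 + -(3 / 2 * q / t)) ^ (2 * D) := by linarith
    rw [mul_comm]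
    gcongr
  have hmb : (m : ℝ) ≤ 2 * D * a ^ 2 := by
    have h1 : (⌊4 * r ^ 2⌋₊ : ℝ) ≤ 4 * r ^ 2 := Nat.floor_le (by positivity)
    rw [hm]; push_cast
    rw [div_le_iff₀ (by linarith)] at ht2
    have h2 : (2 * t) ^ 2 ≤ (a * q) ^ 2 := by gcongr
    rw [mul_pow a q, hq2] at h2
    have h3 : r ^ 2 ≤ t ^ 2 := by gcongr <;> linarith
    have h4 : 1 ≤ t := by linarith
    nlinarith
  have hPb : (√3 / 2) ^ D * (1 / 2 * n ^ 2) / (14 * D) ≤ P := by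
    refine le_trans ?_ hp
    gcongr
  have hm0 : (0 : ℝ) < m := by rw [hm]; positivity
  calc _ = (√3 / 2) ^ D * (1 / 2 * n ^ 2) / (14 * D) / (2 * D * a ^ 2) * 3 / (3 * n) ^ 2 := by
        field_simp; norm_num
    _ ≤ P / m * 3 / (3 * n) ^ 2 := by gcongr

theorem stmt_0 :
    ∃ c K : ℝ, 0 < c ∧ 0 < K ∧ ∀ D n : ℕ, 1 ≤ D → (2 * D) ^ (100 * D) < n →
      c * (D : ℝ) ^ (-K) * ((3 : ℝ) / 4) ^ ((D : ℝ) / 2) * (n : ℝ) ^ (-(2 / (D : ℝ)))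
        ≤ eta (3 * n) := by
  refine ⟨1 / 168, 2, by norm_num, by norm_num, ?_⟩
  intro D n hD hn
  have hD0 : D ≠ 0 := by omega
  have hDr : (0 : ℝ) < D := by exact_mod_cast hD
  have hn0 : (0 : ℝ) ≤ n := by positivity
  set a : ℝ := (n : ℝ) ^ ((1 : ℝ) / D) with hadef
  have ha0 : 0 ≤ a := by positivity
  have han : a ^ D = n := by
    rw [hadef, one_div, Real.rpow_inv_natCast_pow hn0 hD0]
  have ha : ((2 * D : ℝ)) ^ 100 ≤ a := by
    by_contra hc
    push Not at hc
    have h1 : a ^ D < ((2 * D : ℝ) ^ 100) ^ D := pow_lt_pow_left₀ hc ha0 hD0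
    rw [han, ← pow_mul] at h1
    have h2 : (((2 * D) ^ (100 * D) : ℕ) : ℝ) < n := by exact_mod_cast hn
    push_cast at h2
    linarith
  have h := main_bound D n hD a ha han
  have e1 : (D : ℝ) ^ (-(2 : ℝ)) = 1 / (D : ℝ) ^ 2 := by
    rw [Real.rpow_neg hDr.le, one_div]; norm_cast
  have e2 : ((3 : ℝ) / 4) ^ ((D : ℝ) / 2) = (√3 / 2) ^ D := by
    have : √3 / 2 = ((3 : ℝ) / 4) ^ ((1 : ℝ) / 2) := by
      rw [← Real.sqrt_eq_rpow, Real.sqrt_div (by norm_num)]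
      have : √(4 : ℝ) = 2 := by rw [show (4 : ℝ) = 2 ^ 2 by norm_num]; exact Real.sqrt_sq (by norm_num)
      rw [this]
    rw [this, ← Real.rpow_natCast, ← Real.rpow_mul (by norm_num)]
    congr 1; ring
  have e3 : (n : ℝ) ^ (-(2 / (D : ℝ))) = 1 / a ^ 2 := by
    rw [Real.rpow_neg hn0, one_div, hadef, ← Real.rpow_natCast, ← Real.rpow_mul hn0]
    congr 2; push_cast; ring
  rw [e1, e2, e3]
  exact h
end

section
/- For every ε > 0 there exists N such that for all integers n ≥ N, η(n) ≥ 2^{-(2√(log₂(4/3)) + ε)·√(log₂ n)}. -/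
open Finset in
lemma eta_ge_s1 (n : ℕ) : (3 * ruzsaSzemerediNumberNat n : ℝ) / n ^ 2 ≤ eta n := by
  classical
  obtain ⟨G, hd, hcard, hG⟩ := ruzsaSzemerediNumber_spec (α := Fin n)
  refine le_csSup ?_ ⟨G, ?_, ?_⟩
  · refine (Set.Finite.subset (Set.finite_range
      (fun G : SimpleGraph (Fin n) => (G.edgeSet.ncard : ℝ) / n ^ 2)) ?_).bddAbove
    rintro x ⟨G, -, rfl⟩
    exact ⟨G, rfl⟩
  · intro u v huv
    obtain ⟨s, hs, hu, hv⟩ := hG.2 huv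
    have key : ∀ w w', G.Adj u w → G.Adj v w → G.Adj u w' → G.Adj v w' → w = w' := by
      intro w w' h1 h2 h3 h4
      have e := hG.1.eq (a := {u, v, w}) (b := {u, v, w'})
        (by simp [SimpleGraph.is3Clique_triple_iff, *])
        (by simp [SimpleGraph.is3Clique_triple_iff, *])
        (Set.Nontrivial.not_subsingleton ⟨u, by simp, v, by simp, huv.ne⟩)
      have hw : w ∈ ({u, v, w'} : Finset (Fin n)) := by rw [← e]; simp
      simp only [mem_insert, mem_singleton] at hw
      rcases hw with rfl | rfl | rfl
      · exact absurd rfl h1.ne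
      · exact absurd rfl h2.ne
      · rfl
    have : ∃ w, G.Adj u w ∧ G.Adj v w := by
      rw [SimpleGraph.is3Clique_iff] at hs
      obtain ⟨a, b, c, hab, hac, hbc, rfl⟩ := hs
      simp only [mem_insert, mem_singleton] at hu hv
      have := hab.symm
      have := hac.symm
      have := hbc.symm
      have hne := huv.ne
      rcases hu with rfl | rfl | rfl <;> rcases hv with rfl | rfl | rfl
      · exact absurd rfl hne
      · exact ⟨c, by assumption, by assumption⟩
      · exact ⟨b, by assumption, by assumption⟩
      · exact ⟨c, by assumption, by assumption⟩
      · exact absurd rfl hne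
      · exact ⟨a, by assumption, by assumption⟩
      · exact ⟨b, by assumption, by assumption⟩
      · exact ⟨a, by assumption, by assumption⟩
      · exact absurd rfl hne
    obtain ⟨w, h1, h2⟩ := this
    exact ⟨w, ⟨h1, h2⟩, fun w' h => key _ _ h.1 h.2 h1 h2⟩
  · have h1 := hG.card_edgeFinset
    have h2 : G.edgeSet.ncard = 3 * ruzsaSzemerediNumberNat n := by
      rw [ruzsaSzemerediNumberNat, ← hcard, ← h1, ← SimpleGraph.coe_edgeFinset,
        Set.ncard_coe_finset]
    rw [h2]; push_cast; rfl

lemma rs_fiber {D : ℕ} (n : ℕ) (A : Finset (Fin D → ℤ)) (hA : 3 * A.card ≤ n) (v : ℤ)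
    (Q : Finset ((Fin D → ℤ) × (Fin D → ℤ)))
    (hQ : ∀ p ∈ Q, p.1 ∈ A ∧ p.2 ∈ A ∧ -p.1 - p.2 ∈ A ∧ ∑ i, (2 * p.2 i + p.1 i) ^ 2 = v) :
    Q.card ≤ ruzsaSzemerediNumberNat n := by
  classical
  let t : Finset (A × A × A) := Finset.univ.filter (fun p =>
    (∀ i, p.1.1 i + p.2.1.1 i + p.2.2.1 i = 0) ∧ ∑ i, (p.2.1.1 i - p.2.2.1 i) ^ 2 = v)
  have h1 : Q ⊆ t.image (fun p => (p.1.1, p.2.1.1)) := by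
    intro p hp
    obtain ⟨a, b, c, d⟩ := hQ p hp
    rw [Finset.mem_image]
    refine ⟨(⟨p.1, a⟩, ⟨p.2, b⟩, ⟨_, c⟩), ?_, rfl⟩
    simp only [t, Finset.mem_filter, Finset.mem_univ, true_and]
    refine ⟨fun i => by simp, ?_⟩
    rw [← d]
    refine Finset.sum_congr rfl fun i _ => ?_
    simp only [Pi.sub_apply, Pi.neg_apply]; ring
  have i1 : SimpleGraph.TripartiteFromTriangles.ExplicitDisjoint t := by
    constructor <;>
    · intro a b c a' h h'
      simp only [t, Finset.mem_filter, Finset.mem_univ, true_and] at h h'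
      ext i
      have := h.1 i
      have := h'.1 i
      linarith
  have i2 : SimpleGraph.TripartiteFromTriangles.NoAccidental t := by
    constructor
    intro a a' b b' c c' h1 h2 h3
    simp only [t, Finset.mem_filter, Finset.mem_univ, true_and] at h1 h2 h3
    have hb : ∀ i, b'.1 i = b.1 i - (a.1 i + b.1 i + c.1 i) := fun i => by
      linarith [h2.1 i]
    have hc : ∀ i, c'.1 i = c.1 i - (a.1 i + b.1 i + c.1 i) := fun i => by
      linarith [h3.1 i]
    have e : ∑ i, 2 * (a.1 i + b.1 i + c.1 i) ^ 2 = 0 := by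
      have : ∑ i, 2 * (a.1 i + b.1 i + c.1 i) ^ 2 =
        ∑ i, ((b'.1 i - c.1 i) ^ 2 + (b.1 i - c'.1 i) ^ 2 - 2 * (b.1 i - c.1 i) ^ 2) := by
        refine Finset.sum_congr rfl fun i _ => ?_
        rw [hb, hc]; ring
      rw [this, Finset.sum_sub_distrib, Finset.sum_add_distrib, ← Finset.mul_sum, h1.2, h2.2, h3.2]
      ring
    rw [Finset.sum_eq_zero_iff_of_nonneg (fun i _ => by positivity)] at e
    right; left
    ext i
    have := e i (Finset.mem_univ i)
    have h0 : a.1 i + b.1 i + c.1 i = 0 := by simpa using this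
    rw [hb, h0]; ring
  calc Q.card ≤ _ := Finset.card_le_card h1
    _ ≤ t.card := Finset.card_image_le
    _ = _ := (SimpleGraph.TripartiteFromTriangles.card_triangles t).symm
    _ ≤ ruzsaSzemerediNumber (A ⊕ A ⊕ A) :=
      (SimpleGraph.TripartiteFromTriangles.locallyLinear t).le_ruzsaSzemerediNumber
    _ = ruzsaSzemerediNumberNat (Fintype.card (A ⊕ A ⊕ A)) := ruzsaSzemerediNumberNat_card.symm
    _ ≤ _ := ruzsaSzemerediNumberNat_mono (by simp; omega)

/-- Integer vector as a Euclidean vector. -/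
noncomputable def ev {D : ℕ} (x : Fin D → ℤ) : EuclideanSpace ℝ (Fin D) :=
  WithLp.toLp 2 (fun i => (x i : ℝ))

lemma ev_apply {D : ℕ} (x : Fin D → ℤ) (i : Fin D) : ev x i = x i := rfl

lemma ev_normsq {D : ℕ} (x : Fin D → ℤ) : ‖ev x‖ ^ 2 = ∑ i, (x i : ℝ) ^ 2 := by
  rw [EuclideanSpace.norm_sq_eq]; simp [ev_apply]

lemma norm_le_sqrt {D : ℕ} (x : EuclideanSpace ℝ (Fin D)) (c : ℝ) (hc : 0 ≤ c)
    (h : ∀ i, |x i| ≤ c) : ‖x‖ ≤ c * √D := by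
  have : ‖x‖ ^ 2 ≤ (c * √D) ^ 2 := by
    rw [EuclideanSpace.norm_sq_eq, mul_pow, Real.sq_sqrt (by positivity)]
    calc ∑ i, ‖x i‖ ^ 2 ≤ ∑ i : Fin D, c ^ 2 :=
          Finset.sum_le_sum fun i _ => by
            rw [Real.norm_eq_abs]; exact pow_le_pow_left₀ (abs_nonneg _) (h i) 2
      _ = _ := by simp [mul_comm]
  exact le_of_sq_le_sq this (by positivity)

/-- Lattice points in the ball. -/
noncomputable def Bl (D : ℕ) (r : ℝ) : Finset (Fin D → ℤ) :=
  (Fintype.piFinset fun _ => Finset.Icc (-⌊r⌋) ⌊r⌋).filter (fun x => ‖ev x‖ ≤ r)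

lemma abs_le_norm {D : ℕ} (x : EuclideanSpace ℝ (Fin D)) (i : Fin D) : |x i| ≤ ‖x‖ := by
  simpa using PiLp.norm_apply_le x i

lemma mem_Bl {D : ℕ} {r : ℝ} {x : Fin D → ℤ} : x ∈ Bl D r ↔ ‖ev x‖ ≤ r := by
  simp only [Bl, Finset.mem_filter, Fintype.mem_piFinset, Finset.mem_Icc, and_iff_right_iff_imp]
  intro h i
  have := (abs_le_norm (ev x) i).trans h
  rw [ev_apply, abs_le] at this
  refine ⟨?_, Int.le_floor.2 this.2⟩
  rw [neg_le]
  apply Int.le_floor.2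
  push_cast; linarith

lemma Bl_mono {D : ℕ} {r s : ℝ} (h : r ≤ s) : Bl D r ⊆ Bl D s := fun x hx => by
  rw [mem_Bl] at *; linarith

lemma card_up {D : ℕ} (q : ℕ) (hq : 0 < q) (s : ℝ) :
    (Bl D (q * s)).card ≤ q ^ D * (Bl D (s + √D)).card := by
  have : ((Bl D (s + √D)) ×ˢ (Fintype.piFinset fun _ : Fin D => Finset.Ico (0 : ℤ) q)).card
      = q ^ D * (Bl D (s + √D)).card := by
    rw [Finset.card_product, Fintype.card_piFinset]; simp [mul_comm]
  rw [← this]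
  have hq' : (0 : ℤ) < q := by exact_mod_cast hq
  have hqr : (0 : ℝ) < q := by exact_mod_cast hq
  refine Finset.card_le_card_of_injOn (fun x => (fun i => x i / q, fun i => x i % q)) ?_ ?_
  · intro x hx
    have hx : ‖ev x‖ ≤ q * s := mem_Bl.1 hx
    simp only [Finset.coe_product, Set.mem_prod, Finset.mem_coe, mem_Bl, Fintype.mem_piFinset,
      Finset.mem_Ico]
    refine ⟨?_, fun i => ⟨Int.emod_nonneg _ hq'.ne', Int.emod_lt_of_pos _ hq'⟩⟩
    have e : ev (fun i => x i / (q : ℤ)) = (q : ℝ)⁻¹ • ev x +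
        (WithLp.toLp 2 (fun i => -((q : ℝ)⁻¹ * ((x i % q : ℤ) : ℝ))) : EuclideanSpace ℝ (Fin D)) := by
      ext i
      simp only [PiLp.add_apply, PiLp.smul_apply, ev_apply, smul_eq_mul]
      have := Int.mul_ediv_add_emod (x i) q
      have h2 : (x i : ℝ) = q * ((x i / q : ℤ) : ℝ) + ((x i % q : ℤ) : ℝ) := by exact_mod_cast this.symm
      rw [h2]
      field_simp
      ring
    rw [e]
    refine (norm_add_le _ _).trans (add_le_add ?_ ?_)
    · rw [norm_smul, Real.norm_of_nonneg (by positivity), inv_mul_le_iff₀ hqr]; exact hx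
    · refine (norm_le_sqrt _ 1 zero_le_one fun i => ?_).trans (by simp)
      have h1 : (0 : ℝ) ≤ ((x i % q : ℤ) : ℝ) := by exact_mod_cast Int.emod_nonneg _ hq'.ne'
      have h2 : ((x i % q : ℤ) : ℝ) ≤ q := by exact_mod_cast (Int.emod_lt_of_pos _ hq').le
      simp only [abs_neg]
      rw [abs_of_nonneg (by positivity), inv_mul_le_iff₀ hqr]; linarith
  · intro x _ y _ h
    simp only [Prod.mk.injEq] at h
    ext i
    rw [← Int.mul_ediv_add_emod (x i) q, ← Int.mul_ediv_add_emod (y i) q, congrFun h.1 i,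
      congrFun h.2 i]

lemma card_down {D : ℕ} (q : ℕ) (hq : 0 < q) (s : ℝ) :
    q ^ D * (Bl D s).card ≤ (Bl D (q * (s + √D))).card := by
  have : ((Bl D s) ×ˢ (Fintype.piFinset fun _ : Fin D => Finset.Ico (0 : ℤ) q)).card
      = q ^ D * (Bl D s).card := by
    rw [Finset.card_product, Fintype.card_piFinset]; simp [mul_comm]
  rw [← this]
  have hq' : (0 : ℤ) < q := by exact_mod_cast hq
  have hqr : (0 : ℝ) < q := by exact_mod_cast hq
  refine Finset.card_le_card_of_injOn (fun p => fun i => q * p.1 i + p.2 i) ?_ ?_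
  · rintro ⟨x, y⟩ hx
    simp only [Finset.coe_product, Set.mem_prod, Finset.mem_coe, mem_Bl, Fintype.mem_piFinset,
      Finset.mem_Ico] at hx ⊢
    have e : ev (fun i => q * x i + y i) = (q : ℝ) • ev x + ev y := by
      ext i
      simp [ev_apply]
    rw [e, mul_add]
    refine (norm_add_le _ _).trans (add_le_add ?_ ?_)
    · rw [norm_smul, Real.norm_of_nonneg (by positivity)]; gcongr; exact hx.1
    · refine norm_le_sqrt _ q hqr.le fun i => ?_
      have h1 : (0 : ℝ) ≤ y i := by exact_mod_cast (hx.2 i).1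
      have h2 : (y i : ℝ) ≤ q := by exact_mod_cast (hx.2 i).2.le
      rw [ev_apply, abs_of_nonneg h1]; exact h2
  · rintro ⟨x, y⟩ hx ⟨x', y'⟩ hx' h
    simp only [Finset.coe_product, Set.mem_prod, Finset.mem_coe, mem_Bl, Fintype.mem_piFinset,
      Finset.mem_Ico] at hx hx' h
    have hy : y = y' := by
      ext i
      have := congrFun h i
      have h1 := congrArg (· % (q : ℤ)) this
      simp only [Int.mul_add_emod_self_left] at h1
      rwa [Int.emod_eq_of_lt (hx.2 i).1 (hx.2 i).2,
        Int.emod_eq_of_lt (hx'.2 i).1 (hx'.2 i).2] at h1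
    subst hy
    have hx : x = x' := by
      ext i
      have := congrFun h i
      simp only [add_left_inj] at this
      exact mul_left_cancel₀ hq'.ne' this
    rw [hx]

lemma card_scale {D : ℕ} (p q : ℕ) (hp : 0 < p) (hq : 0 < q) (R r : ℝ)
    (h : p / q * R + 2 * p * √D ≤ r) :
    ((p : ℝ) / q) ^ D * (Bl D R).card ≤ (Bl D r).card := by
  have hqr : (0 : ℝ) < q := by exact_mod_cast hq
  have h1 := card_up (D := D) q hq (R / q)
  have h2 := card_down (D := D) p hp (R / q + √D)
  have h3 : (Bl D (p * (R / q + √D + √D))).card ≤ (Bl D r).card :=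
    Finset.card_le_card (Bl_mono (le_of_eq_of_le (by field_simp; ring) h))
  rw [mul_div_cancel₀ _ hqr.ne'] at h1
  have h1' : ((Bl D R).card : ℝ) ≤ (q : ℝ) ^ D * (Bl D (R / q + √D)).card := by exact_mod_cast h1
  have h2' : (p : ℝ) ^ D * (Bl D (R / q + √D)).card ≤ (Bl D r).card := by
    exact_mod_cast h2.trans h3
  rw [div_pow, div_mul_eq_mul_div, div_le_iff₀ (by positivity)]
  calc (p : ℝ) ^ D * (Bl D R).card ≤ p ^ D * ((q : ℝ) ^ D * (Bl D (R / q + √D)).card) := by gcongr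
    _ = q ^ D * (p ^ D * (Bl D (R / q + √D)).card) := by ring
    _ ≤ q ^ D * (Bl D r).card := by gcongr
    _ = _ := by ring

lemma card_le_triv (D R : ℕ) : (Bl D R).card ≤ (2 * R + 1) ^ D := by
  refine (Finset.card_filter_le _ _).trans ?_
  rw [Fintype.card_piFinset]
  simp only [Int.floor_natCast, Int.card_Icc, Finset.prod_const, Finset.card_univ,
    Fintype.card_fin]
  apply le_of_eq; congr 1; omega

lemma card_ge_triv (D R : ℕ) (hD : 0 < D) : ((R : ℝ) / D) ^ D ≤ (Bl D R).card := by
  have h : (Fintype.piFinset fun _ : Fin D => Finset.Icc (0 : ℤ) (R / D : ℕ)) ⊆ Bl D R := by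
    intro x hx
    simp only [Fintype.mem_piFinset, Finset.mem_Icc] at hx
    rw [mem_Bl]
    refine (norm_le_sqrt _ (R / D : ℕ) (by positivity) fun i => ?_).trans ?_
    · have h1 : (0 : ℝ) ≤ x i := by exact_mod_cast (hx i).1
      rw [ev_apply, abs_of_nonneg h1]
      have h2 : (x i : ℝ) ≤ (((R / D : ℕ) : ℤ) : ℝ) := Int.cast_le.2 (hx i).2
      rwa [Int.cast_natCast] at h2
    · have : √(D : ℝ) ≤ D := by
        rw [Real.sqrt_le_left (by positivity)]
        have : (1 : ℝ) ≤ D := by exact_mod_cast hD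
        nlinarith
      calc ((R / D : ℕ) : ℝ) * √D ≤ ((R / D : ℕ) : ℝ) * D := by gcongr
        _ ≤ R := by exact_mod_cast Nat.div_mul_le_self R D
  have h2 := Finset.card_le_card h
  rw [Fintype.card_piFinset] at h2
  simp only [Int.card_Icc, Finset.prod_const, Finset.card_univ, Fintype.card_fin] at h2
  have h3 : ((R / D : ℕ) + 1) ^ D ≤ (Bl D R).card := by
    refine le_trans (le_of_eq ?_) h2
    congr 1
  have h4 : (R : ℝ) / D ≤ (R / D : ℕ) + 1 := by
    rw [div_le_iff₀ (by positivity)]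
    have := Nat.lt_div_mul_add (a := R) hD
    have : R ≤ (R / D + 1) * D := by nlinarith
    exact_mod_cast this
  calc ((R : ℝ) / D) ^ D ≤ ((R / D : ℕ) + 1) ^ D := by gcongr
    _ ≤ _ := by exact_mod_cast h3

lemma moment_off {D : ℕ} (r : ℝ) (i j : Fin D) (hij : i ≠ j) :
    ∑ w ∈ Bl D r, (w i : ℝ) * w j = 0 := by
  classical
  have hm : ∀ w ∈ Bl D r, Function.update w i (-w i) ∈ Bl D r := by
    intro w hw
    rw [mem_Bl] at *
    have : ‖ev (Function.update w i (-w i))‖ ^ 2 = ‖ev w‖ ^ 2 := by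
      rw [ev_normsq, ev_normsq]
      refine Finset.sum_congr rfl fun k _ => ?_
      by_cases hk : k = i
      · subst hk; simp
      · simp [hk]
    rw [pow_left_inj₀ (norm_nonneg _) (norm_nonneg _) two_ne_zero] at this
    rwa [this]
  have : ∑ w ∈ Bl D r, (w i : ℝ) * w j = ∑ w ∈ Bl D r, -((w i : ℝ) * w j) := by
    refine Finset.sum_nbij' (fun w => Function.update w i (-w i))
      (fun w => Function.update w i (-w i)) hm hm ?_ ?_ ?_
    · intro w _; simp
    · intro w _; simp
    · intro w _; simp [hij.symm]
  rw [Finset.sum_neg_distrib] at this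
  linarith

lemma moment_diag {D : ℕ} (r : ℝ) (i j : Fin D) :
    ∑ w ∈ Bl D r, (w i : ℝ) ^ 2 = ∑ w ∈ Bl D r, (w j : ℝ) ^ 2 := by
  classical
  have hm : ∀ w ∈ Bl D r, w ∘ (Equiv.swap i j) ∈ Bl D r := by
    intro w hw
    rw [mem_Bl] at *
    have : ‖ev (w ∘ (Equiv.swap i j))‖ ^ 2 = ‖ev w‖ ^ 2 := by
      rw [ev_normsq, ev_normsq]
      exact Equiv.sum_comp (Equiv.swap i j) (fun k => (w k : ℝ) ^ 2)
    rw [pow_left_inj₀ (norm_nonneg _) (norm_nonneg _) two_ne_zero] at this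
    rwa [this]
  refine Finset.sum_nbij' (fun w => w ∘ (Equiv.swap i j))
      (fun w => w ∘ (Equiv.swap i j)) hm hm ?_ ?_ ?_
  · intro w _; ext k; simp
  · intro w _; ext k; simp
  · intro w _; simp

lemma moment {D : ℕ} (r : ℝ) (x : Fin D → ℤ) :
    D * ∑ w ∈ Bl D r, (∑ i, (x i : ℝ) * w i) ^ 2 = ‖ev x‖ ^ 2 * ∑ w ∈ Bl D r, ‖ev w‖ ^ 2 := by
  classical
  have h1 : ∑ w ∈ Bl D r, (∑ i, (x i : ℝ) * w i) ^ 2 =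
      ∑ i, (x i : ℝ) ^ 2 * ∑ w ∈ Bl D r, (w i : ℝ) ^ 2 := by
    calc ∑ w ∈ Bl D r, (∑ i, (x i : ℝ) * w i) ^ 2
        = ∑ w ∈ Bl D r, ∑ i, ∑ j, (x i : ℝ) * x j * (w i * w j) := by
          refine Finset.sum_congr rfl fun w _ => ?_
          rw [sq, Finset.sum_mul_sum]
          refine Finset.sum_congr rfl fun i _ => Finset.sum_congr rfl fun j _ => by ring
      _ = ∑ i, ∑ j, (x i : ℝ) * x j * ∑ w ∈ Bl D r, ((w i : ℝ) * w j) := by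
          rw [Finset.sum_comm]
          refine Finset.sum_congr rfl fun i _ => ?_
          rw [Finset.sum_comm]
          refine Finset.sum_congr rfl fun j _ => ?_
          rw [Finset.mul_sum]
      _ = _ := by
          refine Finset.sum_congr rfl fun i _ => ?_
          rw [Finset.sum_eq_single i]
          · simp only [sq]
          · intro j _ hj
            rw [moment_off r i j hj.symm, mul_zero]
          · simp
  have h2 : ∀ i : Fin D, ∑ w ∈ Bl D r, ‖ev w‖ ^ 2 = D * ∑ w ∈ Bl D r, (w i : ℝ) ^ 2 := by
    intro i
    simp_rw [ev_normsq]
    rw [Finset.sum_comm, Finset.sum_congr rfl (fun j _ => moment_diag r j i)]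
    simp
  rw [h1, ev_normsq x, Finset.mul_sum, Finset.sum_mul]
  refine Finset.sum_congr rfl fun i _ => ?_
  rw [h2 i]; ring

lemma good_count {D R : ℕ} (r η : ℝ) (hR : 0 < R) (hη : 0 < η) (hD : 2 ≤ D * η ^ 2)
    (hrR : r ≤ R) (x : Fin D → ℤ) (hx : x ∈ Bl D R) :
    ((Bl D r).card : ℝ) ≤
      2 * ((Bl D r).filter (fun w => |∑ i, (x i : ℝ) * w i| ≤ η * R ^ 2)).card := by
  classical
  have hRr : (0 : ℝ) < R := by exact_mod_cast hR
  have hs := Finset.card_filter_add_card_filter_not (s := Bl D r)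
    (fun w => |∑ i, (x i : ℝ) * w i| ≤ η * R ^ 2)
  set g := ((Bl D r).filter (fun w => |∑ i, (x i : ℝ) * w i| ≤ η * R ^ 2)).card
  set bs := (Bl D r).filter (fun w => ¬ |∑ i, (x i : ℝ) * w i| ≤ η * R ^ 2)
  have hb : (bs.card : ℝ) * (η * R ^ 2) ^ 2 ≤ ∑ w ∈ Bl D r, (∑ i, (x i : ℝ) * w i) ^ 2 := by
    calc (bs.card : ℝ) * (η * R ^ 2) ^ 2 = ∑ w ∈ bs, (η * (R : ℝ) ^ 2) ^ 2 := by simp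
      _ ≤ ∑ w ∈ bs, (∑ i, (x i : ℝ) * w i) ^ 2 := by
          refine Finset.sum_le_sum fun w hw => ?_
          have := (Finset.mem_filter.1 hw).2
          rw [← sq_abs (∑ i, (x i : ℝ) * w i)]
          exact pow_le_pow_left₀ (by positivity) (not_le.1 this).le 2
      _ ≤ _ := Finset.sum_le_sum_of_subset_of_nonneg (Finset.filter_subset _ _)
          fun _ _ _ => sq_nonneg _
  have hm := moment r x
  have hw : ∑ w ∈ Bl D r, ‖ev w‖ ^ 2 ≤ (Bl D r).card * (R : ℝ) ^ 2 := by
    rw [← nsmul_eq_mul]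
    refine Finset.sum_le_card_nsmul _ _ _ fun w hw => ?_
    exact pow_le_pow_left₀ (norm_nonneg _) ((mem_Bl.1 hw).trans hrR) 2
  have hx2 : ‖ev x‖ ^ 2 ≤ (R : ℝ) ^ 2 := pow_le_pow_left₀ (norm_nonneg _) (mem_Bl.1 hx) 2
  have h1 : D * ((bs.card : ℝ) * (η * R ^ 2) ^ 2) ≤ (R : ℝ) ^ 2 * ((Bl D r).card * (R : ℝ) ^ 2) :=
    calc _ ≤ D * ∑ w ∈ Bl D r, (∑ i, (x i : ℝ) * w i) ^ 2 := by gcongr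
      _ = _ := hm
      _ ≤ _ := mul_le_mul hx2 hw (Finset.sum_nonneg fun _ _ => sq_nonneg _) (by positivity)
  have h2 : (D * η ^ 2) * (bs.card : ℝ) ≤ (Bl D r).card := by
    refine le_of_mul_le_mul_right (a := (R : ℝ) ^ 4) ?_ (by positivity)
    linarith
  have h3 : 2 * (bs.card : ℝ) ≤ (Bl D r).card := (by gcongr : _ ≤ _).trans h2
  have hs' : (g : ℝ) + bs.card = (Bl D r).card := by exact_mod_cast hs
  linarith

lemma core {D R n : ℕ} (r η : ℝ) (hR : 0 < R) (hη : 0 < η) (hD : 2 ≤ D * η ^ 2)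
    (hrR : r ≤ R) (hr : 0 ≤ r) (hDR : √D ≤ R)
    (hroom : r ^ 2 + R ^ 2 / 4 + η * R ^ 2 ≤ (R - √D) ^ 2) (hn : 3 * (Bl D R).card ≤ n) :
    ((Bl D R).card : ℝ) * (Bl D r).card ≤ 2 * ((4 * R ^ 2 + 1) * ruzsaSzemerediNumberNat n) := by
  classical
  let P : Finset ((Fin D → ℤ) × (Fin D → ℤ)) := (Bl D R ×ˢ Bl D r).filter
    (fun p => |∑ i, (p.1 i : ℝ) * p.2 i| ≤ η * R ^ 2)
  have hP : ((Bl D R).card : ℝ) * (Bl D r).card ≤ 2 * P.card := by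
    have : P.card = ∑ x ∈ Bl D R,
        ((Bl D r).filter (fun w => |∑ i, (x i : ℝ) * w i| ≤ η * R ^ 2)).card := by
      simp only [P, Finset.card_filter]
      rw [Finset.sum_product]
    rw [this, ← nsmul_eq_mul, Nat.cast_sum, Finset.mul_sum]
    exact Finset.card_nsmul_le_sum _ _ _ fun x hx => good_count r η hR hη hD hrR x hx
  let φ : (Fin D → ℤ) × (Fin D → ℤ) → (Fin D → ℤ) × (Fin D → ℤ) :=
    fun p => (p.1, fun i => p.2 i - p.1 i / 2)
  have hφ : Function.Injective φ := by
    rintro ⟨x, w⟩ ⟨x', w'⟩ h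
    simp only [φ, Prod.mk.injEq] at h
    obtain ⟨rfl, h⟩ := h
    congr 1
    ext i
    simpa using congrFun h i
  have hQ : ∀ p ∈ P.image φ, p.1 ∈ Bl D R ∧ p.2 ∈ Bl D R ∧ -p.1 - p.2 ∈ Bl D R := by
    intro p hp
    obtain ⟨⟨x, w⟩, hxw, rfl⟩ := Finset.mem_image.1 hp
    simp only [P, Finset.mem_filter, Finset.mem_product] at hxw
    obtain ⟨⟨hx, hw⟩, hin⟩ := hxw
    refine ⟨hx, ?_⟩
    rw [mem_Bl] at hx hw ⊢
    rw [mem_Bl]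
    have hinner : (inner ℝ (ev w) ((1 / 2 : ℝ) • ev x) : ℝ) = (∑ i, (x i : ℝ) * w i) / 2 := by
      rw [inner_smul_right, PiLp.inner_apply]
      simp only [ev_apply]
      simp
      ring
    have hx2 : ‖ev x‖ ^ 2 ≤ (R : ℝ) ^ 2 := pow_le_pow_left₀ (norm_nonneg _) hx 2
    have hw2 : ‖ev w‖ ^ 2 ≤ r ^ 2 := pow_le_pow_left₀ (norm_nonneg _) hw 2
    have hin' := abs_le.1 hin
    have hhalf : ‖(1 / 2 : ℝ) • ev x‖ ^ 2 = ‖ev x‖ ^ 2 / 4 := by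
      rw [norm_smul, mul_pow]; norm_num; ring
    have n1 : ‖ev w - (1 / 2 : ℝ) • ev x‖ ≤ R - √D := by
      refine le_of_sq_le_sq ?_ (by linarith)
      rw [norm_sub_sq_real, hinner, hhalf]
      linarith
    have n2 : ‖ev w + (1 / 2 : ℝ) • ev x‖ ≤ R - √D := by
      refine le_of_sq_le_sq ?_ (by linarith)
      rw [norm_add_sq_real, hinner, hhalf]
      linarith
    let c : EuclideanSpace ℝ (Fin D) := WithLp.toLp 2 (fun i => (x i : ℝ) / 2 - ((x i / 2 : ℤ) : ℝ))
    have hc : ‖c‖ ≤ √D := by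
      refine (norm_le_sqrt c 1 zero_le_one fun i => ?_).trans (by simp)
      have h1 := Int.mul_ediv_add_emod (x i) 2
      have h2 := Int.emod_nonneg (x i) (two_ne_zero)
      have h3 := Int.emod_lt_of_pos (x i) (two_pos)
      have h4 : (x i : ℝ) = 2 * ((x i / 2 : ℤ) : ℝ) + ((x i % 2 : ℤ) : ℝ) := by
        exact_mod_cast h1.symm
      have h5 : (0 : ℝ) ≤ ((x i % 2 : ℤ) : ℝ) := by exact_mod_cast h2
      have h6 : ((x i % 2 : ℤ) : ℝ) ≤ 2 := by exact_mod_cast h3.le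
      change |(x i : ℝ) / 2 - ((x i / 2 : ℤ) : ℝ)| ≤ 1
      rw [abs_le]; constructor <;> linarith
    have e1 : ev (φ (x, w)).2 = (ev w - (1 / 2 : ℝ) • ev x) + c := by
      ext i
      simp only [φ, c, ev_apply, PiLp.add_apply, PiLp.sub_apply, PiLp.smul_apply, smul_eq_mul]
      push_cast; ring
    have e2 : ev (-(φ (x, w)).1 - (φ (x, w)).2) = -((ev w + (1 / 2 : ℝ) • ev x) + c) := by
      ext i
      simp only [φ, c, ev_apply, PiLp.add_apply, PiLp.neg_apply, PiLp.smul_apply, smul_eq_mul,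
        Pi.sub_apply, Pi.neg_apply]
      push_cast; ring
    rw [e1, e2, norm_neg]
    constructor
    · linarith [norm_add_le (ev w - (1 / 2 : ℝ) • ev x) c]
    · linarith [norm_add_le (ev w + (1 / 2 : ℝ) • ev x) c]
  have hcard : (P.image φ).card ≤ ruzsaSzemerediNumberNat n *
      (Finset.Icc (0 : ℤ) (4 * (R : ℤ) ^ 2)).card := by
    refine Finset.card_le_mul_card_image_of_maps_to
      (f := fun p : (Fin D → ℤ) × (Fin D → ℤ) => ∑ i, (2 * p.2 i + p.1 i) ^ 2) ?_ _ ?_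
    · intro p hp
      obtain ⟨-, h2, h3⟩ := hQ p hp
      rw [mem_Bl] at h2 h3
      rw [Finset.mem_Icc]
      refine ⟨Finset.sum_nonneg fun i _ => sq_nonneg _, ?_⟩
      have e : ev (fun i => 2 * p.2 i + p.1 i) = ev p.2 - ev (-p.1 - p.2) := by
        ext i
        simp only [ev_apply, PiLp.sub_apply, Pi.sub_apply, Pi.neg_apply]
        push_cast; ring
      have h4 : ‖ev (fun i => 2 * p.2 i + p.1 i)‖ ≤ 2 * R := by
        rw [e]; linarith [norm_sub_le (ev p.2) (ev (-p.1 - p.2))]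
      have h5 := pow_le_pow_left₀ (norm_nonneg _) h4 2
      rw [ev_normsq] at h5
      have h6 : ((∑ i, (2 * p.2 i + p.1 i) ^ 2 : ℤ) : ℝ) ≤ ((4 * (R : ℤ) ^ 2 : ℤ) : ℝ) := by
        push_cast at h5 ⊢; linarith
      exact_mod_cast h6
    · intro v _
      refine rs_fiber n (Bl D R) hn v _ fun p hp => ?_
      obtain ⟨h1, h2⟩ := Finset.mem_filter.1 hp
      obtain ⟨a, b, c⟩ := hQ p h1
      exact ⟨a, b, c, h2⟩
  rw [Finset.card_image_of_injective _ hφ] at hcard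
  have hI : (Finset.Icc (0 : ℤ) (4 * (R : ℤ) ^ 2)).card = 4 * R ^ 2 + 1 := by
    rw [Int.card_Icc]
    zify
    rw [Int.toNat_of_nonneg (by have := sq_nonneg (R : ℤ); linarith)]; ring
  rw [hI] at hcard
  have : (P.card : ℝ) ≤ ruzsaSzemerediNumberNat n * (4 * R ^ 2 + 1) := by exact_mod_cast hcard
  linarith

lemma nat_ratio_btwn (a b : ℝ) (ha : 0 < a) (hab : a < b) :
    ∃ p q : ℕ, 0 < p ∧ 0 < q ∧ a < (p : ℝ) / q ∧ (p : ℝ) / q < b := by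
  obtain ⟨x, h1, h2⟩ := exists_rat_btwn hab
  have hx : 0 < x := by exact_mod_cast ha.trans h1
  have e : (x : ℝ) = ((x.num.toNat : ℕ) : ℝ) / x.den := by
    have h3 : ((x.num.toNat : ℕ) : ℤ) = x.num := Int.toNat_of_nonneg (Rat.num_pos.2 hx).le
    have h4 : ((x.num.toNat : ℕ) : ℝ) = (x.num : ℝ) := by exact_mod_cast congrArg (Int.cast : ℤ → ℝ) h3
    rw [h4]; exact Rat.cast_def x
  refine ⟨x.num.toNat, x.den, ?_, x.den_pos, ?_, ?_⟩
  · have := Rat.num_pos.2 hx; omega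
  · rwa [← e]
  · rwa [← e]

lemma params (β : ℝ) (hβ : 0 < β) : ∃ p q p' q' : ℕ, 0 < p ∧ 0 < q ∧ 0 < p' ∧ 0 < q' ∧
    (2 : ℝ) ^ (-(Real.logb 2 (4 / 3) / 2 + β)) ≤ (p : ℝ) / q ∧
    (2 : ℝ) ^ (-β) ≤ (p' : ℝ) / q' ∧ (p' : ℝ) / q' < 1 ∧
    ∃ η σ : ℝ, 0 < η ∧ 0 < σ ∧ σ < 1 ∧ ((p : ℝ) / q + 2 * p * σ) ^ 2 + 1 / 4 + η ≤ (1 - σ) ^ 2 ∧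
      (1 + 2 * p') * σ ≤ 1 - (p' : ℝ) / q' := by
  have hu : (2 : ℝ) ^ (-(Real.logb 2 (4 / 3) / 2 + β)) < √(3 / 4) := by
    apply Real.lt_sqrt_of_sq_lt
    rw [← Real.rpow_natCast, ← Real.rpow_mul (by norm_num)]
    have e : (2 : ℝ) ^ (-Real.logb 2 (4 / 3)) = 3 / 4 := by
      rw [Real.rpow_neg (by norm_num), Real.rpow_logb] <;> norm_num
    rw [← e]
    apply Real.rpow_lt_rpow_of_exponent_lt (by norm_num)
    push_cast; linarith
  have hv : (2 : ℝ) ^ (-β) < 1 := Real.rpow_lt_one_of_one_lt_of_neg (by norm_num) (by linarith)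
  obtain ⟨p, q, hp, hq, h1, h2⟩ := nat_ratio_btwn _ _ (by positivity) hu
  obtain ⟨p', q', hp', hq', h1', h2'⟩ := nat_ratio_btwn _ _ (by positivity) hv
  refine ⟨p, q, p', q', hp, hq, hp', hq', h1.le, h1'.le, h2', (3 / 4 - ((p : ℝ) / q) ^ 2) / 2, ?_⟩
  have hsq : ((p : ℝ) / q) ^ 2 < 3 / 4 := (Real.lt_sqrt (by positivity)).1 h2
  have c1 : ∀ᶠ σ : ℝ in nhds 0, 0 < (1 - σ) ^ 2 - (((p : ℝ) / q + 2 * p * σ) ^ 2 + 1 / 4 +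
      (3 / 4 - ((p : ℝ) / q) ^ 2) / 2) := by
    refine ContinuousAt.eventually_lt continuousAt_const (by fun_prop) ?_
    simp only [mul_zero, add_zero, sub_zero]
    linarith
  have c2 : ∀ᶠ σ : ℝ in nhds 0, 0 < 1 - (p' : ℝ) / q' - (1 + 2 * p') * σ := by
    refine ContinuousAt.eventually_lt continuousAt_const (by fun_prop) ?_
    simp only [mul_zero, sub_zero]
    linarith
  have c3 : ∀ᶠ σ : ℝ in nhds 0, σ < 1 := eventually_lt_nhds one_pos
  have c4 := ((c1.and (c2.and c3)).filter_mono (nhdsWithin_le_nhds (s := Set.Ioi 0))).and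
    self_mem_nhdsWithin
  obtain ⟨σ, ⟨a, b, c⟩, d⟩ := c4.exists
  exact ⟨σ, by linarith, d, c, by linarith, by linarith⟩

lemma mid {D R n p q p' q' : ℕ} {η σ : ℝ} (hp : 0 < p) (hq : 0 < q) (hp' : 0 < p') (hq' : 0 < q')
    (hη : 0 < η) (hσ1 : σ < 1)
    (h1 : ((p : ℝ) / q + 2 * p * σ) ^ 2 + 1 / 4 + η ≤ (1 - σ) ^ 2)
    (h2 : (1 + 2 * p') * σ ≤ 1 - (p' : ℝ) / q') (hlt : (p' : ℝ) / q' < 1) (hσ : 0 < σ)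
    (hD : 1 ≤ D) (hDη : 2 ≤ D * η ^ 2) (hDR : √D ≤ σ * R)
    (hn1 : 3 * (Bl D R).card ≤ n) (hn2 : n < 3 * (Bl D (R + 1 : ℕ)).card) (hn : 0 < n) :
    ((p : ℝ) / q) ^ D * (((p' : ℝ) / q') ^ D) ^ 2 / (30 * R ^ 2) ≤ eta n := by
  have hD1 : (1 : ℝ) ≤ √D := by
    rw [Real.one_le_sqrt]; exact_mod_cast hD
  have hRr : (0 : ℝ) < R := by
    by_contra h
    have : σ * R ≤ 0 := mul_nonpos_of_nonneg_of_nonpos hσ.le (not_lt.1 h)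
    linarith
  have hR : 0 < R := by exact_mod_cast hRr
  have hR1 : (1 : ℝ) ≤ R := by exact_mod_cast hR
  set r : ℝ := (p : ℝ) / q * R + 2 * p * √D with hrdef
  have hr0 : 0 ≤ r := by positivity
  have hr : r ≤ ((p : ℝ) / q + 2 * p * σ) * R := by
    have : 2 * p * √D ≤ 2 * p * (σ * R) := by gcongr
    rw [hrdef]; linarith
  have hrsq : r ^ 2 ≤ ((p : ℝ) / q + 2 * p * σ) ^ 2 * R ^ 2 := by
    rw [← mul_pow]; exact pow_le_pow_left₀ hr0 hr 2
  have hroom : r ^ 2 + R ^ 2 / 4 + η * R ^ 2 ≤ (R - √D) ^ 2 := by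
    have a1 : ((1 - σ) * R) ^ 2 ≤ (R - √D) ^ 2 :=
      pow_le_pow_left₀ (mul_nonneg (by linarith) hRr.le) (by linarith) 2
    have a2 := mul_le_mul_of_nonneg_right h1 (sq_nonneg (R : ℝ))
    rw [mul_pow] at a1
    linarith
  have hDR' : √D ≤ R := hDR.trans (by nlinarith)
  have hrR : r ≤ R := by
    refine le_of_sq_le_sq ?_ hRr.le
    have a1 : (R - √D) ^ 2 ≤ (R : ℝ) ^ 2 := pow_le_pow_left₀ (by linarith) (by linarith) 2
    have : 0 ≤ η * (R : ℝ) ^ 2 := by positivity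
    have : 0 ≤ (R : ℝ) ^ 2 := by positivity
    linarith
  have hc := core (n := n) r η hR hη hDη hrR hr0 hDR' hroom hn1
  have s1 := card_scale (D := D) p q hp hq R r le_rfl
  have s2 := card_scale (D := D) p' q' hp' hq' (R + 1 : ℕ) R (by
    push_cast
    have a1 := mul_le_mul_of_nonneg_right h2 hRr.le
    have a2 : (1 + 2 * (p' : ℝ)) * √D ≤ (1 + 2 * p') * (σ * R) := by gcongr
    linarith)
  set A : ℝ := ((Bl D R).card : ℝ)
  set t := ((p : ℝ) / q) ^ D
  set u := ((p' : ℝ) / q') ^ D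
  have ht : 0 ≤ t := by positivity
  have hu : 0 ≤ u := by positivity
  have hn2' : (n : ℝ) ≤ 3 * (Bl D (R + 1 : ℕ)).card := by exact_mod_cast hn2.le
  have hA : u * n ≤ 3 * A := by
    calc u * n ≤ u * (3 * (Bl D (R + 1 : ℕ)).card) := by gcongr
      _ ≤ _ := by linarith
  have hA0 : 0 ≤ A := by positivity
  refine le_trans ?_ (eta_ge_s1 n)
  have hnr : (0 : ℝ) < n := by exact_mod_cast hn
  rw [div_le_div_iff₀ (by positivity) (by positivity)]
  have b1 : t * (u * n) ^ 2 ≤ t * (3 * A) ^ 2 := by gcongr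
  have b2 : A * (t * A) ≤ A * (Bl D r).card := by gcongr
  have b3 : 2 * ((4 * (R : ℝ) ^ 2 + 1) * ruzsaSzemerediNumberNat n) ≤
      2 * ((5 * (R : ℝ) ^ 2) * ruzsaSzemerediNumberNat n) := by
    gcongr; nlinarith
  linarith

lemma exp_beats (c K : ℝ) (hc : 0 < c) : ∀ᶠ s : ℝ in Filter.atTop, K * s ^ 2 ≤ (2 : ℝ) ^ (c * s) := by
  have h := tendsto_exp_mul_div_rpow_atTop 2 (Real.log 2 * c) (by positivity)
  filter_upwards [h.eventually_ge_atTop K, Filter.eventually_gt_atTop 0] with s h1 h2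
  rw [Real.rpow_two, le_div_iff₀ (by positivity)] at h1
  rwa [Real.rpow_def_of_pos (by norm_num), ← mul_assoc]

lemma exists_R (D n : ℕ) (hD : 1 ≤ D) (hn : 3 ≤ n) :
    ∃ R : ℕ, 3 * (Bl D R).card ≤ n ∧ n < 3 * (Bl D (R + 1 : ℕ)).card := by
  classical
  have hex : ∃ R : ℕ, n < 3 * (Bl D R).card := by
    refine ⟨D * (n + 1), ?_⟩
    have h := card_ge_triv D (D * (n + 1)) hD
    have hD0 : (D : ℝ) ≠ 0 := by positivity
    push_cast at h
    rw [mul_div_cancel_left₀ _ hD0] at h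
    have h2 : (n + 1) ^ D ≤ (Bl D ((D * (n + 1) : ℕ) : ℝ)).card := by
      push_cast; exact_mod_cast h
    have h3 : n + 1 ≤ (n + 1) ^ D := Nat.le_self_pow (by omega) _
    omega
  have h0 : Nat.find hex ≠ 0 := by
    intro h
    have h1 := Nat.find_spec hex
    rw [h] at h1
    have := card_le_triv D 0
    simp only [mul_zero, zero_add, one_pow] at this
    omega
  obtain ⟨R, hR⟩ := Nat.exists_eq_succ_of_ne_zero h0
  refine ⟨R, ?_, ?_⟩
  · exact not_lt.1 (Nat.find_min hex (by omega))
  · have := Nat.find_spec hex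
    rwa [hR] at this

set_option maxHeartbeats 1000000 in
theorem stmt_1 :
    ∀ ε : ℝ, 0 < ε → ∃ N : ℕ, ∀ n : ℕ, N ≤ n →
      (2 : ℝ) ^ (-(2 * Real.sqrt (Real.logb 2 (4 / 3)) + ε) * Real.sqrt (Real.logb 2 n))
        ≤ eta n := by
  intro ε hε
  have hκ : 0 < Real.logb 2 (4 / 3) := Real.logb_pos (by norm_num) (by norm_num)
  set κ := Real.logb 2 (4 / 3) with hκdef
  set k := √κ with hk
  have hk0 : 0 < k := Real.sqrt_pos.2 hκ
  have hkk : k ^ 2 = κ := Real.sq_sqrt hκ.le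
  set a := 2 / k with ha
  have ha0 : 0 < a := by positivity
  set β := ε / (6 * a) with hβ
  have hβ0 : 0 < β := by positivity
  obtain ⟨p, q, p', q', hp, hq, hp', hq', hu, hv, hlt, η, σ, hη, hσ, hσ1, h1, h2⟩ := params β hβ0
  rw [← hκdef] at hu
  have htend : Filter.Tendsto (fun n : ℕ => √(Real.logb 2 n)) Filter.atTop Filter.atTop :=
    Real.tendsto_sqrt_atTop.comp
      ((Real.tendsto_logb_atTop (by norm_num)).comp tendsto_natCast_atTop_atTop)
  have ev1 := exp_beats (1 / (2 * (a + 1))) (3 + 2 * (a + 1) / σ) (by positivity)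
  have ev2 := exp_beats (ε / 2) (30 * (a + 1) ^ 2 * 2 ^ (κ / 2 + 3 * β)) (by positivity)
  have ev3 := Filter.eventually_ge_atTop (2 : ℝ)
  have ev4 := Filter.eventually_ge_atTop (2 / η ^ 2 / a)
  have evs := htend.eventually (ev1.and (ev2.and (ev3.and ev4)))
  obtain ⟨N, hN⟩ := Filter.eventually_atTop.1 (evs.and (Filter.eventually_ge_atTop 3))
  refine ⟨N, fun n hn => ?_⟩
  obtain ⟨⟨e1, e2, e3, e4⟩, hn3⟩ := hN n hn
  set L := Real.logb 2 n with hL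
  set s := √L with hs
  have hs0 : 0 < s := by linarith
  have hL0 : 0 < L := Real.sqrt_pos.1 hs0
  have hLs : s ^ 2 = L := Real.sq_sqrt hL0.le
  have hnr : (0 : ℝ) < n := by exact_mod_cast (by omega : 0 < n)
  have hnL : (n : ℝ) = 2 ^ L := by
    rw [hL, Real.rpow_logb (by norm_num) (by norm_num) hnr]
  set D := ⌈a * s⌉₊ with hD
  have hDlo : a * s ≤ D := Nat.le_ceil _
  have hDhi : (D : ℝ) ≤ a * s + 1 := (Nat.ceil_lt_add_one (by positivity)).le
  have hDhi' : (D : ℝ) ≤ (a + 1) * s := by linarith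
  have hD1 : 1 ≤ D := Nat.ceil_pos.2 (by positivity)
  have hD1r : (1 : ℝ) ≤ D := by exact_mod_cast hD1
  have hD0r : (0 : ℝ) < D := by linarith
  have hDη : 2 ≤ D * η ^ 2 := by
    rw [div_div, div_le_iff₀ (by positivity)] at e4
    have := mul_le_mul_of_nonneg_right hDlo (sq_nonneg η)
    linarith
  obtain ⟨R, hR1, hR2⟩ := exists_R D n hD1 hn3
  -- lower bound on R
  have hRlo : (D : ℝ) ≤ σ * R := by
    have c1 : (n : ℝ) ≤ 3 * (2 * R + 3) ^ D := by
      have := card_le_triv D (R + 1)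
      have h3 : n ≤ 3 * (2 * (R + 1) + 1) ^ D := by omega
      have h4 : (n : ℝ) ≤ 3 * (2 * (R + 1) + 1) ^ D := by exact_mod_cast h3
      calc (n : ℝ) ≤ _ := h4
        _ = _ := by ring
    have c2 : (2 : ℝ) ^ (L / 2) ≤ (2 * R + 3) ^ D := by
      have : (2 : ℝ) ^ L = 2 ^ (L / 2) * 2 ^ (L / 2) := by
        rw [← Real.rpow_add (by norm_num)]; congr 1; ring
      have h4 : (3 : ℝ) ≤ 2 ^ (L / 2) := by
        calc (3 : ℝ) ≤ 2 ^ (2 : ℝ) := by norm_num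
          _ ≤ _ := Real.rpow_le_rpow_of_exponent_le (by norm_num) (by nlinarith)
      rw [hnL, this] at c1
      have h5 : 3 * (2 : ℝ) ^ (L / 2) ≤ 2 ^ (L / 2) * 2 ^ (L / 2) := by gcongr
      linarith
    have c3 : (2 : ℝ) ^ (L / 2 / D) ≤ 2 * R + 3 := by
      refine le_of_pow_le_pow_left₀ (n := D) (by omega) (by positivity) ?_
      rw [← Real.rpow_natCast, ← Real.rpow_mul (by norm_num), div_mul_cancel₀ _ hD0r.ne']
      exact c2
    have c4 : (2 : ℝ) ^ (1 / (2 * (a + 1)) * s) ≤ 2 ^ (L / 2 / D) := by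
      apply Real.rpow_le_rpow_of_exponent_le (by norm_num)
      rw [le_div_iff₀ hD0r]
      calc 1 / (2 * (a + 1)) * s * D ≤ 1 / (2 * (a + 1)) * s * ((a + 1) * s) := by gcongr
        _ = L / 2 := by rw [← hLs]; field_simp
    have c5 : (3 + 2 * (a + 1) / σ) * s ^ 2 ≤ 2 * R + 3 := e1.trans (c4.trans c3)
    have c6 : s ≤ s ^ 2 := by rw [sq]; exact le_mul_of_one_le_left hs0.le (by linarith)
    have c7 : 2 * (a + 1) / σ * s ≤ 2 * (a + 1) / σ * s ^ 2 := by gcongr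
    have c8 : 2 * (a + 1) / σ * s ≤ 2 * R := by
      have c9 : 1 ≤ s ^ 2 := by linarith
      rw [add_mul] at c5
      linarith
    rw [div_mul_eq_mul_div, div_le_iff₀ hσ] at c8
    linarith
  have hDR : √D ≤ σ * R := by
    refine le_trans ?_ hRlo
    rw [Real.sqrt_le_left (by positivity)]
    nlinarith
  have hm := mid hp hq hp' hq' hη hσ1 h1 h2 hlt hσ hD1 hDη hDR hR1 hR2 (by omega)
  refine le_trans ?_ hm
  -- upper bound on R
  have hRpos : (0 : ℝ) < R := by
    by_contra h
    have : σ * R ≤ 0 := mul_nonpos_of_nonneg_of_nonpos hσ.le (not_lt.1 h)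
    linarith
  have hRhi : (R : ℝ) ≤ (a + 1) * s * 2 ^ (s / a) := by
    have c1 := card_ge_triv D R hD1
    have c2 : ((Bl D R).card : ℝ) ≤ n := by exact_mod_cast (by omega : (Bl D R).card ≤ n)
    have c3 : (R : ℝ) / D ≤ 2 ^ (L / D) := by
      refine le_of_pow_le_pow_left₀ (n := D) (by omega) (by positivity) ?_
      rw [← Real.rpow_natCast (2 ^ (L / D)), ← Real.rpow_mul (by norm_num),
        div_mul_cancel₀ _ hD0r.ne', ← hnL]
      linarith
    have c4 : L / D ≤ s / a := by
      rw [div_le_div_iff₀ hD0r ha0, ← hLs]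
      have := mul_le_mul_of_nonneg_left hDlo hs0.le
      linarith
    rw [div_le_iff₀ hD0r] at c3
    calc (R : ℝ) ≤ 2 ^ (L / D) * D := c3
      _ ≤ 2 ^ (s / a) * ((a + 1) * s) := by
        gcongr
        norm_num
      _ = _ := by ring
  have hθ : (2 : ℝ) ^ (-(κ / 2 + β) * (a * s + 1)) ≤ ((p : ℝ) / q) ^ D := by
    calc (2 : ℝ) ^ (-(κ / 2 + β) * (a * s + 1)) ≤ (2 : ℝ) ^ (-(κ / 2 + β) * D) := by
          apply Real.rpow_le_rpow_of_exponent_le (by norm_num)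
          have := mul_le_mul_of_nonneg_left hDhi (by positivity : 0 ≤ κ / 2 + β)
          linarith
      _ = ((2 : ℝ) ^ (-(κ / 2 + β))) ^ D := by
          rw [Real.rpow_mul (by norm_num), Real.rpow_natCast]
      _ ≤ _ := by gcongr
  have hρ : (2 : ℝ) ^ (-β * (a * s + 1)) ≤ ((p' : ℝ) / q') ^ D := by
    calc (2 : ℝ) ^ (-β * (a * s + 1)) ≤ (2 : ℝ) ^ (-β * D) := by
          apply Real.rpow_le_rpow_of_exponent_le (by norm_num)
          have := mul_le_mul_of_nonneg_left hDhi hβ0.le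
          linarith
      _ = ((2 : ℝ) ^ (-β)) ^ D := by
          rw [Real.rpow_mul (by norm_num), Real.rpow_natCast]
      _ ≤ _ := by gcongr
  rw [le_div_iff₀ (by positivity)]
  set Z := -(2 * k + ε) * s with hZ
  have f1 : (2 : ℝ) ^ Z * (30 * R ^ 2) ≤
      2 ^ Z * (30 * ((a + 1) * s * 2 ^ (s / a)) ^ 2) := by gcongr
  have f2 : (2 : ℝ) ^ Z * (30 * ((a + 1) * s * 2 ^ (s / a)) ^ 2) =
      (30 * (a + 1) ^ 2 * 2 ^ (κ / 2 + 3 * β) * s ^ 2) *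
        2 ^ (Z + 2 * (s / a) - (κ / 2 + 3 * β)) := by
    have gen : ∀ x y w : ℝ, (2 : ℝ) ^ (x + 2 * y - w) = 2 ^ x * (2 ^ y) ^ 2 / 2 ^ w := by
      intro x y w
      rw [Real.rpow_sub (by norm_num), Real.rpow_add (by norm_num), two_mul,
        Real.rpow_add (by norm_num), sq]
    rw [gen]
    have hw : (2 : ℝ) ^ (κ / 2 + 3 * β) ≠ 0 := by positivity
    generalize (2 : ℝ) ^ (κ / 2 + 3 * β) = w at hw ⊢
    generalize (2 : ℝ) ^ (s / a) = y
    generalize (2 : ℝ) ^ Z = z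
    field_simp
  have f3 : (30 * (a + 1) ^ 2 * 2 ^ (κ / 2 + 3 * β) * s ^ 2) *
        2 ^ (Z + 2 * (s / a) - (κ / 2 + 3 * β)) ≤
      (2 : ℝ) ^ (ε / 2 * s) * 2 ^ (Z + 2 * (s / a) - (κ / 2 + 3 * β)) := by gcongr
  have f4 : (2 : ℝ) ^ (ε / 2 * s) * 2 ^ (Z + 2 * (s / a) - (κ / 2 + 3 * β)) =
      2 ^ (-(κ / 2 + β) * (a * s + 1)) * (2 ^ (-β * (a * s + 1))) ^ 2 := by
    rw [← Real.rpow_natCast, ← Real.rpow_mul (by norm_num), ← Real.rpow_add (by norm_num),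
      ← Real.rpow_add (by norm_num)]
    congr 1
    rw [hZ, ← hkk, hβ, ha]
    push_cast
    field_simp
    ring
  calc _ ≤ _ := f1
    _ = _ := f2
    _ ≤ _ := f3
    _ = _ := f4
    _ ≤ _ := by gcongr
end

section
/- Let C = 1/(4·log₂(4/3)). For every c' with 0 < c' < C there exists ε₀ > 0 such that for every ε with 0 < ε < ε₀ there exist a positive integer n and a simple graph G on n vertices such that G contains fewer than ε^{c'·log₂(1/ε)} · n³ triangles, yet every set of edges of G that intersects every triangle of G has cardinality at least ε·n². (Equivalently, any valid δ(ε) in the triangle removal lemma satisfies δ(ε) ≤ ε^{(C−o(1))·log₂(1/ε)}.) -/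
def TRrel {E : Type} [AddCommGroup E] (q : E → ℕ) (r : ℕ) (a b : Fin 3 × E) : Prop :=
  (a.1 = 0 ∧ b.1 = 1 ∧ q (a.2 + a.2 + b.2) = r) ∨
  (a.1 = 1 ∧ b.1 = 2 ∧ q (a.2 + (b.2 + b.2)) = r) ∨
  (a.1 = 0 ∧ b.1 = 2 ∧ q (a.2 - b.2) = r)

def TRgraph {E : Type} [AddCommGroup E] (q : E → ℕ) (r : ℕ) {V : Type} (f : V → Fin 3 × E) :
    SimpleGraph V where
  Adj u v := TRrel q r (f u) (f v) ∨ TRrel q r (f v) (f u)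
  symm := ⟨fun _ _ h => h.symm⟩
  loopless := ⟨fun u h => by
    unfold TRrel at h
    rcases h with (h|h|h)|(h|h|h) <;> (obtain ⟨h1, h2, _⟩ := h; rw [h1] at h2; simp at h2)⟩

lemma TR_tri {E : Type} [AddCommGroup E] (q : E → ℕ) (r : ℕ) {V : Type} [DecidableEq V]
    (f : V → Fin 3 × E)
    (hq : ∀ x y z : E, q (x + x + y) + q (y + (z + z)) = 2 * q (x + y + z) + 2 * q (x - z))
    (hq0 : ∀ x, q x = 0 → x = 0) (t : Finset V) (ht : (TRgraph q r f).IsNClique 3 t) :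
    ∃ u v w, t = {u, v, w} ∧ (f u).1 = 0 ∧ (f v).1 = 1 ∧ (f w).1 = 2 ∧
      (f u).2 + (f v).2 + (f w).2 = 0 := by
  rw [SimpleGraph.is3Clique_iff] at ht
  obtain ⟨a, b, c, hab, hac, hbc, rfl⟩ := ht
  have key : ∀ u v w : V, TRrel q r (f u) (f v) → TRrel q r (f v) (f w) → TRrel q r (f u) (f w) →
      (f u).1 = 0 ∧ (f v).1 = 1 ∧ (f w).1 = 2 ∧ (f u).2 + (f v).2 + (f w).2 = 0 := by
    intro u v w h1 h2 h3
    unfold TRrel at h1 h2 h3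
    have : (f u).1 = 0 ∧ (f v).1 = 1 ∧ (f w).1 = 2 ∧ q ((f u).2 + (f u).2 + (f v).2) = r ∧
      q ((f v).2 + ((f w).2 + (f w).2)) = r ∧ q ((f u).2 - (f w).2) = r := by
      clear hq hq0
      rcases h1 with ⟨a1, a2, a3⟩|⟨a1, a2, a3⟩|⟨a1, a2, a3⟩ <;>
      rcases h2 with ⟨b1, b2, b3⟩|⟨b1, b2, b3⟩|⟨b1, b2, b3⟩ <;>
      rcases h3 with ⟨c1, c2, c3⟩|⟨c1, c2, c3⟩|⟨c1, c2, c3⟩ <;>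
      first
      | exact ⟨a1, a2, c2, a3, b3, c3⟩
      | (exfalso; rw [a1] at c1; rw [a2] at b1; rw [b2] at c2; revert c1 b1 c2; decide)
    obtain ⟨h1, h2, h3, h4, h5, h6⟩ := this
    refine ⟨h1, h2, h3, hq0 _ ?_⟩
    have := hq (f u).2 (f v).2 (f w).2
    omega
  have lt : ∀ u v : V, TRrel q r (f u) (f v) → (f u).1 < (f v).1 := by
    intro u v h
    unfold TRrel at h
    rcases h with h|h|h <;> rw [h.1, h.2.1] <;> decide
  rcases hab with h1|h1 <;> rcases hac with h2|h2 <;> rcases hbc with h3|h3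
  · exact ⟨a, b, c, rfl, key _ _ _ h1 h3 h2⟩
  · exact ⟨a, c, b, by grind, key _ _ _ h2 h3 h1⟩
  · have := lt _ _ h1; have := lt _ _ h2; have := lt _ _ h3; omega
  · exact ⟨c, a, b, by grind, key _ _ _ h2 h1 h3⟩
  · exact ⟨b, a, c, by grind, key _ _ _ h1 h2 h3⟩
  · have := lt _ _ h1; have := lt _ _ h2; have := lt _ _ h3; omega
  · exact ⟨b, c, a, by grind, key _ _ _ h3 h2 h1⟩
  · exact ⟨c, b, a, by grind, key _ _ _ h3 h1 h2⟩

lemma TR_graph {E : Type} [AddCommGroup E] [DecidableEq E] (q : E → ℕ)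
    (hq : ∀ x y z : E, q (x + x + y) + q (y + (z + z)) = 2 * q (x + y + z) + 2 * q (x - z))
    (hq0 : ∀ x, q x = 0 → x = 0) (hqn : ∀ x, q (-x) = q x)
    (B : Finset E) (M : ℕ) (hM : ∀ x ∈ B, ∀ y ∈ B, q (x + x + y) ≤ M)
    (P : Finset (E × E)) (hP : ∀ p ∈ P, p.1 ∈ B ∧ p.2 ∈ B ∧ -(p.1 + p.2) ∈ B) :
    ∃ G : SimpleGraph (Fin (3 * B.card)),
      {t : Finset (Fin (3 * B.card)) | G.IsNClique 3 t}.ncard ≤ B.card ^ 2 ∧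
      ∀ F : Set (Sym2 (Fin (3 * B.card))), 
            (∀ t : Finset (Fin (3 * B.card)), G.IsNClique 3 t →
              ∃ u ∈ t, ∃ v ∈ t, u ≠ v ∧ s(u, v) ∈ F) →
            P.card ≤ (M + 1) * F.ncard := by
  obtain ⟨r, hr⟩ : ∃ r : ℕ, P.card ≤ (M + 1) * (P.filter (fun p => q (p.1 + p.1 + p.2) = r)).card := by
    by_contra! hcon
    have h1 := Finset.card_eq_sum_card_fiberwise (s := P) (t := Finset.range (M + 1))
      (f := fun p => q (p.1 + p.1 + p.2)) (by
        intro p hp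
        have := hP p hp
        simp only [Finset.coe_range, Set.mem_Iio]
        have := hM _ this.1 _ this.2.1
        omega)
    have h2 : ∑ r ∈ Finset.range (M + 1), (M + 1) * (P.filter (fun p => q (p.1 + p.1 + p.2) = r)).card
        < ∑ r ∈ Finset.range (M + 1), P.card :=
      Finset.sum_lt_sum_of_nonempty (by simp) (fun r _ => hcon r)
    rw [← Finset.mul_sum, ← h1] at h2
    simp at h2
  let e : Fin (3 * B.card) ≃ Fin 3 × B := Fintype.equivOfCardEq (by simp)
  let f : Fin (3 * B.card) → Fin 3 × E := fun v => ((e v).1, (e v).2)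
  have hf : Function.Injective f := by
    intro u v h
    apply e.injective
    simp only [f, Prod.mk.injEq] at h
    exact Prod.ext h.1 (Subtype.ext h.2)
  have hfB : ∀ v, (f v).2 ∈ B := fun v => (e v).2.2
  have hfs : ∀ i, ∀ x ∈ B, ∃ v, f v = (i, x) := fun i x hx => ⟨e.symm (i, ⟨x, hx⟩), by simp [f]⟩
  refine ⟨TRgraph q r f, ?_, ?_⟩
  · have hch : ∀ t : Finset (Fin (3 * B.card)), ∃ p : E × E, (TRgraph q r f).IsNClique 3 t →
        p ∈ B ×ˢ B ∧ ∃ u v w, t = {u, v, w} ∧ f u = (0, p.1) ∧ f v = (1, p.2) ∧ f w = (2, -(p.1+p.2)) := by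
      intro t
      by_cases ht : (TRgraph q r f).IsNClique 3 t
      · obtain ⟨u, v, w, h, h1, h2, h3, h4⟩ := TR_tri q r f hq hq0 t ht
        refine ⟨((f u).2, (f v).2), fun _ => ⟨by simp [hfB], u, v, w, h, Prod.ext h1 rfl, Prod.ext h2 rfl, Prod.ext h3 ?_⟩⟩
        exact (neg_eq_of_add_eq_zero_right h4).symm
      · exact ⟨0, fun h => absurd h ht⟩
    choose g hg using hch
    have : B.card ^ 2 = ((B ×ˢ B : Finset (E × E)) : Set (E × E)).ncard := by
      rw [Set.ncard_coe_finset, Finset.card_product, sq]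
    rw [this]
    refine Set.ncard_le_ncard_of_injOn g (fun t ht => (hg t ht).1) ?_ (Finset.finite_toSet _)
    intro t ht t' ht' h
    obtain ⟨_, u, v, w, h1, h2, h3, h4⟩ := hg t ht
    obtain ⟨_, u', v', w', h1', h2', h3', h4'⟩ := hg t' ht'
    rw [h] at h2 h3 h4
    rw [h1, h1', hf (h2.trans h2'.symm), hf (h3.trans h3'.symm), hf (h4.trans h4'.symm)]
  · intro F hF
    refine hr.trans (Nat.mul_le_mul_left _ ?_)
    set Q := P.filter (fun p => q (p.1 + p.1 + p.2) = r) with hQ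
    rcases Q.eq_empty_or_nonempty with hQe | ⟨p0, hp0⟩
    · rw [hQe]; simp
    obtain ⟨u0, -⟩ := hfs 0 _ (hP p0 (Finset.mem_of_mem_filter _ hp0)).1
    have hch : ∀ p : E × E, ∃ s : Sym2 (Fin (3 * B.card)), p ∈ Q → s ∈ F ∧ ∃ u v w,
        f u = (0, p.1) ∧ f v = (1, p.2) ∧ f w = (2, -(p.1+p.2)) ∧ (s = s(u, v) ∨ s = s(v, w) ∨ s = s(u, w)) := by
      intro p
      by_cases hp : p ∈ Q
      · rw [hQ, Finset.mem_filter] at hp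
        obtain ⟨hp1, hp2⟩ := hp
        obtain ⟨hx, hy, hz⟩ := hP p hp1
        obtain ⟨u, hu⟩ := hfs 0 _ hx
        obtain ⟨v, hv⟩ := hfs 1 _ hy
        obtain ⟨w, hw⟩ := hfs 2 _ hz
        have hcl : (TRgraph q r f).IsNClique 3 {u, v, w} := by
          have e1 : p.1 - -(p.1 + p.2) = p.1 + p.1 + p.2 := by abel
          have e2 : p.2 + (-(p.1 + p.2) + -(p.1 + p.2)) = -(p.1 + p.1 + p.2) := by abel
          rw [SimpleGraph.is3Clique_triple_iff]
          refine ⟨Or.inl ?_, Or.inl ?_, Or.inl ?_⟩ <;> unfold TRrel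
          · rw [hu, hv]; simp [hp2]
          · rw [hu, hw]; simp only [e1]; simp [hp2]
          · rw [hv, hw]; simp only [e2, hqn]; simp [hp2]
        obtain ⟨a, ha, b, hb, hab, hs⟩ := hF _ hcl
        refine ⟨s(a, b), fun _ => ⟨hs, u, v, w, hu, hv, hw, ?_⟩⟩
        simp only [Finset.mem_insert, Finset.mem_singleton] at ha hb
        rcases ha with rfl|rfl|rfl <;> rcases hb with rfl|rfl|rfl <;> simp at hab ⊢
      · exact ⟨s(u0, u0), fun h => absurd h hp⟩
    choose g hg using hch
    rw [← Set.ncard_coe_finset]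
    refine Set.ncard_le_ncard_of_injOn g (fun p hp => (hg p hp).1) ?_ (Set.toFinite _)
    intro p hp p' hp' h
    obtain ⟨_, u, v, w, h1, h2, h3, h4⟩ := hg p hp
    obtain ⟨_, u', v', w', h1', h2', h3', h4'⟩ := hg p' hp'
    rw [h] at h4
    have n01 : (0 : Fin 3) ≠ 1 := by decide
    have n02 : (0 : Fin 3) ≠ 2 := by decide
    have n12 : (1 : Fin 3) ≠ 2 := by decide
    have fin : ∀ a b a' b' : E, (a = a' ∧ b = b') ∨ (a = a' ∧ -(a + b) = -(a' + b')) ∨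
        (b = b' ∧ -(a + b) = -(a' + b')) → (a, b) = (a', b') := by
      rintro a b a' b' (⟨h1, h2⟩|⟨h1, h2⟩|⟨h1, h2⟩)
      · rw [h1, h2]
      · subst h1; simpa using h2
      · subst h1; simpa using h2
    refine fin p.1 p.2 p'.1 p'.2 ?_
    clear fin hg hQ hM hP hr hq hq0 hqn hF
    rcases h4 with h4|h4|h4 <;> rcases h4' with h4'|h4'|h4' <;> rw [h4', Sym2.eq_iff] at h4 <;>
      rcases h4 with ⟨rfl, rfl⟩|⟨rfl, rfl⟩ <;> simp_all
open MeasureTheory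
open scoped Pointwise

lemma TR_cheb (D : ℕ) (v : EuclideanSpace ℝ (Fin D)) (hv : ‖v‖ ≤ 1) :
    D * ∫ x in Metric.closedBall (0 : EuclideanSpace ℝ (Fin D)) 1, (inner ℝ x v) ^ 2 ≤
      volume.real (Metric.closedBall (0 : EuclideanSpace ℝ (Fin D)) 1) := by
  set B := Metric.closedBall (0 : EuclideanSpace ℝ (Fin D)) 1 with hB
  have hBc : IsCompact B := isCompact_closedBall _ _
  have hBm : MeasurableSet B := hBc.measurableSet
  have hint : ∀ v : EuclideanSpace ℝ (Fin D), IntegrableOn (fun x => (inner ℝ x v) ^ 2) B := by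
    intro v
    exact ContinuousOn.integrableOn_compact hBc (by fun_prop)
  have hrot : ∀ v w : EuclideanSpace ℝ (Fin D), ‖v‖ = ‖w‖ →
      ∫ x in B, (inner ℝ x v) ^ 2 = ∫ x in B, (inner ℝ x w) ^ 2 := by
    intro v w h
    let R := Submodule.reflection (Submodule.span ℝ {v - w})ᗮ
    have hR : R v = w := Submodule.reflection_sub h
    have hmp : MeasurePreserving R := LinearIsometryEquiv.measurePreserving R
    have := hmp.setIntegral_preimage_emb R.toHomeomorph.measurableEmbedding
      (fun x => (inner ℝ x w : ℝ) ^ 2) B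
    rw [← this, ← hR]
    have : (R ⁻¹' B) = B := by
      ext x; simp [hB]
    rw [this]
    congr 1; ext x
    rw [LinearIsometryEquiv.inner_map_map]
  have h1 : ∀ i : Fin D, ∫ x in B, (inner ℝ x v) ^ 2 ≤
      ∫ x in B, (inner ℝ x (EuclideanSpace.single i (1:ℝ))) ^ 2 := by
    intro i
    rw [hrot v (‖v‖ • EuclideanSpace.single i (1:ℝ)) (by simp [norm_smul])]
    apply setIntegral_mono (hint _) (hint _)
    intro x
    simp only [inner_smul_right, mul_pow]
    have : ‖v‖ ^ 2 ≤ 1 := pow_le_one₀ (norm_nonneg _) hv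
    nlinarith [sq_nonneg (inner ℝ x (EuclideanSpace.single i (1:ℝ)))]
  calc D * ∫ x in B, (inner ℝ x v) ^ 2 = ∑ i : Fin D, ∫ x in B, (inner ℝ x v) ^ 2 := by simp
    _ ≤ ∑ i : Fin D, ∫ x in B, (inner ℝ x (EuclideanSpace.single i (1:ℝ))) ^ 2 :=
        Finset.sum_le_sum fun i _ => h1 i
    _ = ∫ x in B, ∑ i : Fin D, (inner ℝ x (EuclideanSpace.single i (1:ℝ))) ^ 2 := by
        rw [integral_finsetSum]; intro i _; exact hint _
    _ ≤ ∫ x in B, (1:ℝ) := by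
        apply setIntegral_mono_on
        · exact integrable_finsetSum _ fun i _ => hint _
        · exact ContinuousOn.integrableOn_compact hBc (by fun_prop)
        · exact hBm
        · intro x hx
          have hx1 : ‖x‖ ≤ 1 := by simpa [hB] using hx
          have := EuclideanSpace.norm_sq_eq x
          simp only [EuclideanSpace.inner_single_right, one_mul, conj_trivial]
          simp only [Real.norm_eq_abs, sq_abs] at this
          rw [← this]
          exact pow_le_one₀ (norm_nonneg _) hx1
    _ = _ := by simp

lemma TR_slice (D : ℕ) (η s : ℝ) (hη : 0 < η) (hD : 2 ≤ D * η ^ 2) (hs : 0 < s)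
    (hsη : 1 / 4 + s ^ 2 + s * η ≤ 1) (x : EuclideanSpace ℝ (Fin D)) (hx : ‖x‖ ≤ 1) :
    ENNReal.ofReal (s ^ D / 2) * volume (Metric.closedBall (0 : EuclideanSpace ℝ (Fin D)) 1) ≤
      volume {y : EuclideanSpace ℝ (Fin D) | ‖y‖ ≤ 1 ∧ ‖x + y‖ ≤ 1} := by
  set B := Metric.closedBall (0 : EuclideanSpace ℝ (Fin D)) 1 with hB
  have hBc : IsCompact B := isCompact_closedBall _ _
  have hBm : MeasurableSet B := hBc.measurableSet
  set bad := {w : EuclideanSpace ℝ (Fin D) | η ^ 2 ≤ (inner ℝ w x) ^ 2} with hbad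
  have hbadm : MeasurableSet bad := (isClosed_le (by fun_prop) (by fun_prop)).measurableSet
  have h1 : volume.real (bad ∩ B) ≤ volume.real B / 2 := by
    have := mul_meas_ge_le_integral_of_nonneg (μ := volume.restrict B)
      (f := fun w : EuclideanSpace ℝ (Fin D) => (inner ℝ w x : ℝ) ^ 2)
      (Filter.Eventually.of_forall fun w => sq_nonneg _)
      (ContinuousOn.integrableOn_compact hBc (by fun_prop)) (η ^ 2)
    have h2 := TR_cheb D x hx
    rw [← hB] at h2
    rw [← hbad, measureReal_restrict_apply hbadm] at this
    have h3 : 0 ≤ volume.real (bad ∩ B) := measureReal_nonneg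
    have h4 : (D:ℝ) * (η ^ 2 * volume.real (bad ∩ B)) ≤ volume.real B :=
      (mul_le_mul_of_nonneg_left this (by positivity)).trans h2
    nlinarith
  have hfin : volume B ≠ ⊤ := hBc.measure_lt_top.ne
  have h2 : ENNReal.ofReal (1 / 2) * volume B ≤ volume (B \ bad) := by
    have h3 : volume.real (B \ bad) = volume.real B - volume.real (bad ∩ B) := by
      have := measureReal_inter_add_sdiff (μ := volume) (s := B) (t := bad) hbadm hfin
      rw [Set.inter_comm] at this
      linarith
    have h4 : volume B = ENNReal.ofReal (volume.real B) := by
      rw [ofReal_measureReal hfin]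
    have h5 : volume (B \ bad) = ENNReal.ofReal (volume.real (B \ bad)) := by
      rw [ofReal_measureReal (measure_ne_top_of_subset Set.sdiff_subset hfin)]
    rw [h4, h5, ← ENNReal.ofReal_mul (by norm_num)]
    apply ENNReal.ofReal_le_ofReal
    linarith
  have h3 : volume ((fun y => (-(1/2:ℝ)) • x + y) '' (s • (B \ bad))) = ENNReal.ofReal (s ^ D) * volume (B \ bad) := by
    rw [Set.image_add_left, measure_preimage_add, Measure.addHaar_smul_of_nonneg _ hs.le]
    simp
  calc ENNReal.ofReal (s ^ D / 2) * volume B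
      = ENNReal.ofReal (s ^ D) * (ENNReal.ofReal (1 / 2) * volume B) := by
        rw [← mul_assoc, ← ENNReal.ofReal_mul (by positivity)]; congr 2; ring
    _ ≤ ENNReal.ofReal (s ^ D) * volume (B \ bad) := by gcongr
    _ = _ := h3.symm
    _ ≤ _ := by
      apply measure_mono
      rintro _ ⟨_, ⟨w, ⟨hw, hwb⟩, rfl⟩, rfl⟩
      have hw1 : ‖w‖ ≤ 1 := by simpa [hB] using hw
      have hwx : |(inner ℝ w x : ℝ)| ≤ η := by
        simp only [hbad, Set.mem_ofPred_eq, not_le] at hwb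
        exact abs_le_of_sq_le_sq hwb.le hη.le
      have hwx' := abs_le.1 hwx
      have hx2 : ‖x‖ ^ 2 ≤ 1 := pow_le_one₀ (norm_nonneg _) hx
      have hw2 : ‖w‖ ^ 2 ≤ 1 := pow_le_one₀ (norm_nonneg _) hw1
      have key : ∀ c : ℝ, c ^ 2 = 1/4 → ‖c • x + s • w‖ ≤ 1 := by
        intro c hc
        have : ‖c • x + s • w‖ ^ 2 = c ^ 2 * ‖x‖ ^ 2 + 2 * c * s * inner ℝ w x + s ^ 2 * ‖w‖ ^ 2 := by
          rw [norm_add_sq_real, norm_smul, norm_smul, inner_smul_left, inner_smul_right, mul_pow,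
            mul_pow, real_inner_comm]
          simp
          ring
        have h5 : 2 * c * s * inner ℝ w x ≤ s * η := by
          have hc2 : |2 * c| ≤ 1 := by rw [← sq_le_one_iff_abs_le_one]; nlinarith
          calc 2 * c * s * inner ℝ w x ≤ |2 * c * s * inner ℝ w x| := le_abs_self _
            _ = |2 * c| * (s * |(inner ℝ w x : ℝ)|) := by rw [abs_mul, abs_mul, abs_of_pos hs]; ring
            _ ≤ 1 * (s * η) := by gcongr
            _ = _ := one_mul _
        have h6 : ‖c • x + s • w‖ ^ 2 ≤ 1 := by
          rw [this, hc]
          nlinarith [sq_nonneg s]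
        exact (sq_le_one_iff₀ (norm_nonneg _)).1 h6
      refine ⟨key _ (by norm_num), ?_⟩
      have := key (1/2) (by norm_num)
      convert this using 2
      simp only [neg_smul]
      rw [← add_assoc]
      congr 1
      module

def TRball (D : ℕ) : Set (Fin D → ℝ) := {x | ∑ i, x i ^ 2 ≤ 1}
def TRpair (D : ℕ) : Set (Fin D ⊕ Fin D → ℝ) :=
  {f | ∑ i, f (.inl i) ^ 2 ≤ 1 ∧ ∑ i, f (.inr i) ^ 2 ≤ 1 ∧ ∑ i, (f (.inl i) + f (.inr i)) ^ 2 ≤ 1}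

lemma TR_ball_mem (D : ℕ) (x : EuclideanSpace ℝ (Fin D)) : ‖x‖ ≤ 1 ↔ ∑ i, x i ^ 2 ≤ 1 := by
  rw [← sq_le_one_iff₀ (norm_nonneg _), EuclideanSpace.norm_sq_eq]
  simp

lemma TR_ball_closed (D : ℕ) : IsClosed (TRball D) := isClosed_le (by fun_prop) (by fun_prop)
lemma TR_pair_closed (D : ℕ) : IsClosed (TRpair D) := by
  have h1 : IsClosed {f : Fin D ⊕ Fin D → ℝ | ∑ i, f (.inl i) ^ 2 ≤ 1} :=
    isClosed_le (by fun_prop) (by fun_prop)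
  have h2 : IsClosed {f : Fin D ⊕ Fin D → ℝ | ∑ i, f (.inr i) ^ 2 ≤ 1} :=
    isClosed_le (by fun_prop) (by fun_prop)
  have h3 : IsClosed {f : Fin D ⊕ Fin D → ℝ | ∑ i, (f (.inl i) + f (.inr i)) ^ 2 ≤ 1} :=
    isClosed_le (by fun_prop) (by fun_prop)
  exact h1.inter (h2.inter h3)

lemma TR_vol_ball (D : ℕ) :
    volume (Metric.closedBall (0 : EuclideanSpace ℝ (Fin D)) 1) = volume (TRball D) := by
  rw [← (PiLp.volume_preserving_ofLp (Fin D)).measure_preimage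
    (TR_ball_closed D).measurableSet.nullMeasurableSet]
  congr 1
  ext x
  simp [TRball, TR_ball_mem]

lemma TR_vol (D : ℕ) (η s : ℝ) (hη : 0 < η) (hD : 2 ≤ D * η ^ 2) (hs : 0 < s)
    (hsη : 1 / 4 + s ^ 2 + s * η ≤ 1) :
    ENNReal.ofReal (s ^ D / 2) * volume (TRball D) ^ 2 ≤ volume (TRpair D) := by
  have hmp := volume_measurePreserving_sumPiEquivProdPi (fun _ : Fin D ⊕ Fin D => ℝ)
  let S : Set ((Fin D → ℝ) × (Fin D → ℝ)) :=
    {p | ∑ i, p.1 i ^ 2 ≤ 1 ∧ ∑ i, p.2 i ^ 2 ≤ 1 ∧ ∑ i, (p.1 i + p.2 i) ^ 2 ≤ 1}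
  have hS : MeasurableSet S := by
    have h1 : IsClosed {p : (Fin D → ℝ) × (Fin D → ℝ) | ∑ i, p.1 i ^ 2 ≤ 1} :=
      isClosed_le (by fun_prop) (by fun_prop)
    have h2 : IsClosed {p : (Fin D → ℝ) × (Fin D → ℝ) | ∑ i, p.2 i ^ 2 ≤ 1} :=
      isClosed_le (by fun_prop) (by fun_prop)
    have h3 : IsClosed {p : (Fin D → ℝ) × (Fin D → ℝ) | ∑ i, (p.1 i + p.2 i) ^ 2 ≤ 1} :=
      isClosed_le (by fun_prop) (by fun_prop)
    exact (h1.inter (h2.inter h3)).measurableSet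
  have h1 : volume (TRpair D) = volume S := by
    rw [← hmp.measure_preimage hS.nullMeasurableSet]
    rfl
  rw [h1, Measure.volume_eq_prod, Measure.prod_apply hS]
  have hm := (TR_ball_closed D).measurableSet
  calc ENNReal.ofReal (s ^ D / 2) * volume (TRball D) ^ 2
      = ∫⁻ x in TRball D, ENNReal.ofReal (s ^ D / 2) * volume (TRball D) := by
        rw [setLIntegral_const]; ring
    _ ≤ ∫⁻ x in TRball D, volume (Prod.mk x ⁻¹' S) := by
        apply setLIntegral_mono' hm
        intro x hx
        have := TR_slice D η s hη hD hs hsη (WithLp.toLp 2 x) ((TR_ball_mem D _).2 hx)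
        rw [TR_vol_ball] at this
        refine this.trans ?_
        rw [← (PiLp.volume_preserving_ofLp (Fin D)).measure_preimage
          (measurable_prodMk_left hS).nullMeasurableSet]
        apply measure_mono
        rintro y ⟨hy1, hy2⟩
        rw [TR_ball_mem] at hy1 hy2
        exact ⟨hx, hy1, hy2⟩
    _ ≤ _ := setLIntegral_le_lintegral _ _

lemma TR_count {ι : Type} [Fintype ι] (s : Set (ι → ℝ)) (n : ℕ) (hn : 0 < n) :
    Nat.card ↑(s ∩ (n : ℝ)⁻¹ • (Submodule.span ℤ (Set.range (Pi.basisFun ℝ ι)) : Set (ι → ℝ))) =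
      {x : ι → ℤ | (fun i => (x i : ℝ) / n) ∈ s}.ncard := by
  have hn' : (n : ℝ) ≠ 0 := by positivity
  have hinj : Function.Injective (fun (x : ι → ℤ) (i : ι) => (x i : ℝ) / n) := by
    intro x y h
    ext i
    have := congrFun h i
    simp only at this
    field_simp at this
    exact_mod_cast this
  rw [← Set.ncard_image_of_injective _ hinj, Nat.card_coe_set_eq]
  congr 1
  ext y
  simp only [Set.mem_inter_iff, Set.mem_image, Set.mem_ofPred_eq]
  rw [Set.mem_inv_smul_set_iff₀ hn', SetLike.mem_coe, Module.Basis.mem_span_iff_repr_mem]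
  constructor
  · rintro ⟨hy, h⟩
    choose x hx using h
    have : (fun i => (x i : ℝ) / n) = y := by
      ext i
      have := hx i
      simp at this
      rw [this]; field_simp
    exact ⟨x, by rwa [this], this⟩
  · rintro ⟨x, hx, rfl⟩
    refine ⟨hx, fun i => ⟨x i, ?_⟩⟩
    simp
    field_simp

lemma TR_sq_conv {ι κ : Type} [Fintype ι] (g : (κ → ℝ) →ₗ[ℝ] (ι → ℝ)) :
    Convex ℝ {f : κ → ℝ | ∑ i, (g f i) ^ 2 ≤ 1} := by
  have h : ConvexOn ℝ Set.univ (fun y : ι → ℝ => ∑ i, (y i) ^ 2) := by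
    refine ⟨convex_univ, fun x _ y _ a b ha hb hab => ?_⟩
    simp only [Pi.add_apply, Pi.smul_apply, smul_eq_mul]
    rw [Finset.mul_sum, Finset.mul_sum, ← Finset.sum_add_distrib]
    refine Finset.sum_le_sum fun i _ => ?_
    have hb' : b = 1 - a := by linarith
    subst hb'
    nlinarith [mul_nonneg (mul_nonneg ha hb) (sq_nonneg (x i - y i))]
  have h2 := (h.comp_linearMap g).convex_le 1
  simpa using h2

lemma TR_lat (κ : ℝ) (hκ : 0 < κ) (hκ2 : κ ^ 2 < 3 / 4) :
    ∃ (D : ℕ) (b : ℝ), 0 < D ∧ 0 < b ∧ ∀ᶠ R : ℕ in Filter.atTop, ∃ B : Finset (Fin D → ℤ),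
      b * (R : ℝ) ^ D ≤ B.card ∧ (∀ x ∈ B, ∑ i, x i ^ 2 ≤ (R : ℤ) ^ 2) ∧
      κ ^ D * (B.card : ℝ) ^ 2 ≤ ((B ×ˢ B).filter (fun p => -(p.1 + p.2) ∈ B)).card := by
  obtain ⟨s, hs1, hs2⟩ : ∃ s : ℝ, κ < s ∧ s ^ 2 < 3 / 4 := by
    have : κ < √(3 / 4) := (Real.lt_sqrt hκ.le).2 hκ2
    obtain ⟨s, h1, h2⟩ := exists_between this
    exact ⟨s, h1, (Real.lt_sqrt (hκ.trans h1).le).1 h2⟩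
  have hs : 0 < s := hκ.trans hs1
  set η := (3 / 4 - s ^ 2) / s with hη
  have hη0 : 0 < η := div_pos (by linarith) hs
  have hsη : 1 / 4 + s ^ 2 + s * η ≤ 1 := by
    rw [hη]; field_simp; linarith
  obtain ⟨D, hD1, hD2, hD3⟩ : ∃ D : ℕ, 0 < D ∧ 2 ≤ D * η ^ 2 ∧ κ ^ D < s ^ D / 2 := by
    have h1 : ∀ᶠ D : ℕ in Filter.atTop, 2 ≤ D * η ^ 2 :=
      (Filter.Tendsto.atTop_mul_const (by positivity) tendsto_natCast_atTop_atTop).eventually_ge_atTop 2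
    have h2 : ∀ᶠ D : ℕ in Filter.atTop, (κ / s) ^ D < 1 / 2 :=
      (tendsto_pow_atTop_nhds_zero_of_lt_one (by positivity) ((div_lt_one hs).2 hs1)).eventually_lt_const
        (by norm_num)
    obtain ⟨D, h3, h4, h5⟩ := ((Filter.eventually_gt_atTop 0).and (h1.and h2)).exists
    refine ⟨D, h3, h4, ?_⟩
    rw [div_pow, div_lt_iff₀ (by positivity)] at h5
    linarith
  have hvol := TR_vol D η s hη0 hD2 hs hsη
  have hbb : Bornology.IsBounded (TRball D) := by
    refine (Metric.isBounded_closedBall (x := (0 : Fin D → ℝ)) (r := 1)).subset ?_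
    intro x hx
    rw [mem_closedBall_zero_iff, pi_norm_le_iff_of_nonneg zero_le_one]
    intro i
    have h : x i ^ 2 ≤ 1 := (Finset.single_le_sum (f := fun i => x i ^ 2) (fun _ _ => sq_nonneg _) (Finset.mem_univ i)).trans hx
    exact (sq_le_one_iff_abs_le_one _).1 h
  have hpb : Bornology.IsBounded (TRpair D) := by
    refine (Metric.isBounded_closedBall (x := (0 : Fin D ⊕ Fin D → ℝ)) (r := 1)).subset ?_
    intro x hx
    rw [mem_closedBall_zero_iff, pi_norm_le_iff_of_nonneg zero_le_one]
    intro i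
    have h : x i ^ 2 ≤ 1 := by
      rcases i with i | i
      · exact (Finset.single_le_sum (f := fun i => x (.inl i) ^ 2) (fun _ _ => sq_nonneg _) (Finset.mem_univ i)).trans hx.1
      · exact (Finset.single_le_sum (f := fun i => x (.inr i) ^ 2) (fun _ _ => sq_nonneg _) (Finset.mem_univ i)).trans hx.2.1
    exact (sq_le_one_iff_abs_le_one _).1 h
  have hbc : Convex ℝ (TRball D) := TR_sq_conv LinearMap.id
  have hpc : Convex ℝ (TRpair D) := by
    have h1 := TR_sq_conv (LinearMap.funLeft ℝ ℝ (Sum.inl : Fin D → Fin D ⊕ Fin D))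
    have h2 := TR_sq_conv (LinearMap.funLeft ℝ ℝ (Sum.inr : Fin D → Fin D ⊕ Fin D))
    have h3 := TR_sq_conv (LinearMap.funLeft ℝ ℝ (Sum.inl : Fin D → Fin D ⊕ Fin D) + LinearMap.funLeft ℝ ℝ (Sum.inr : Fin D → Fin D ⊕ Fin D))
    exact h1.inter (h2.inter h3)
  have tb := tendsto_card_div_pow_atTop_volume (TRball D) hbb (TR_ball_closed D).measurableSet
    (hbc.addHaar_frontier volume)
  have tp := tendsto_card_div_pow_atTop_volume (TRpair D) hpb (TR_pair_closed D).measurableSet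
    (hpc.addHaar_frontier volume)
  have hvb : 0 < volume.real (TRball D) := by
    rw [measureReal_def, ← TR_vol_ball]
    exact ENNReal.toReal_pos (Metric.measure_closedBall_pos _ _ one_pos).ne' measure_closedBall_lt_top.ne
  have hvol' : s ^ D / 2 * volume.real (TRball D) ^ 2 ≤ volume.real (TRpair D) := by
    have := ENNReal.toReal_mono hpb.measure_lt_top.ne hvol
    rwa [ENNReal.toReal_mul, ENNReal.toReal_pow, ENNReal.toReal_ofReal (by positivity)] at this
  have hlt : κ ^ D * volume.real (TRball D) ^ 2 < volume.real (TRpair D) :=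
    lt_of_lt_of_le (mul_lt_mul_of_pos_right hD3 (by positivity)) hvol'
  have ev1 := tb.eventually_const_lt (half_lt_self hvb)
  have ev2 := ((tb.pow 2).const_mul (κ ^ D)).eventually_lt tp hlt
  refine ⟨D, volume.real (TRball D) / 2, hD1, by positivity, ?_⟩
  filter_upwards [ev1, ev2, Filter.eventually_gt_atTop 0] with R h1 h2 hR
  rw [TR_count _ _ hR] at h1 h2
  rw [TR_count _ _ hR] at h2
  have hR' : (0:ℝ) < R := by exact_mod_cast hR
  have sc : ∀ x : Fin D → ℤ, ∑ i, ((x i : ℝ) / R) ^ 2 ≤ 1 ↔ ∑ i, x i ^ 2 ≤ (R : ℤ) ^ 2 := by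
    intro x
    simp only [div_pow]
    rw [← Finset.sum_div, div_le_one (by positivity)]
    exact_mod_cast Iff.rfl
  set S : Set (Fin D → ℤ) := {x | (fun i => (x i : ℝ) / R) ∈ TRball D} with hS
  have hSm : ∀ x, x ∈ S ↔ ∑ i, x i ^ 2 ≤ (R : ℤ) ^ 2 := fun x => sc x
  have hSf : S.Finite := by
    refine (Set.finite_Icc (fun _ : Fin D => -(R : ℤ)) (fun _ => (R : ℤ))).subset ?_
    intro x hx
    rw [hSm] at hx
    have : ∀ i, |x i| ≤ R := fun i => by
      have h : x i ^ 2 ≤ (R:ℤ) ^ 2 := (Finset.single_le_sum (f := fun i => x i ^ 2) (fun _ _ => sq_nonneg _) (Finset.mem_univ i)).trans hx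
      exact abs_le_of_sq_le_sq h (by positivity)
    exact ⟨fun i => (abs_le.1 (this i)).1, fun i => (abs_le.1 (this i)).2⟩
  have hcard : S.ncard = hSf.toFinset.card := Set.ncard_eq_toFinset_card _ hSf
  refine ⟨hSf.toFinset, ?_, ?_, ?_⟩
  · rw [hcard, lt_div_iff₀ (by positivity)] at h1
    simpa using h1.le
  · intro x hx
    exact (hSm x).1 (by simpa using hx)
  · set Pr := (hSf.toFinset ×ˢ hSf.toFinset).filter (fun p => -(p.1 + p.2) ∈ hSf.toFinset) with hPr
    have hc2 : {x : Fin D ⊕ Fin D → ℤ | (fun i => (x i : ℝ) / R) ∈ TRpair D}.ncard ≤ Pr.card := by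
      rw [← Set.ncard_coe_finset]
      refine Set.ncard_le_ncard_of_injOn (fun x => (fun i => x (.inl i), fun i => x (.inr i))) ?_ ?_
        (Finset.finite_toSet _)
      · rintro x ⟨a1, a2, a3⟩
        simp only [hPr, Finset.coe_filter, Finset.mem_product, Set.Finite.mem_toFinset, Set.mem_ofPred_eq, hSm]
        refine ⟨⟨(sc _).1 a1, (sc _).1 a2⟩, ?_⟩
        simp only [← add_div, ← Int.cast_add] at a3
        have := (sc (fun i => x (.inl i) + x (.inr i))).1 a3
        simpa [neg_sq, ← neg_add_rev, add_comm] using this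
      · intro x _ y _ h
        simp only [Prod.mk.injEq] at h
        ext i
        rcases i with i | i
        · exact congrFun h.1 i
        · exact congrFun h.2 i
    rw [hcard] at h2
    simp only [Fintype.card_fin, Fintype.card_sum] at h2
    rw [div_pow, ← pow_mul, ← mul_two, mul_div_assoc', div_lt_div_iff_of_pos_right (by positivity)] at h2
    exact h2.le.trans (by exact_mod_cast hc2)

lemma TR_fam (D k R : ℕ) (B : Finset (Fin D → ℤ)) (hB : ∀ x ∈ B, ∑ i, x i ^ 2 ≤ (R : ℤ) ^ 2) :
    ∃ G : SimpleGraph (Fin (3 * B.card ^ k)),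
      {t : Finset (Fin (3 * B.card ^ k)) | G.IsNClique 3 t}.ncard ≤ (B.card ^ k) ^ 2 ∧
      ∀ F : Set (Sym2 (Fin (3 * B.card ^ k))),
            (∀ t : Finset (Fin (3 * B.card ^ k)), G.IsNClique 3 t →
              ∃ u ∈ t, ∃ v ∈ t, u ≠ v ∧ s(u, v) ∈ F) →
            ((B ×ˢ B).filter (fun p => -(p.1 + p.2) ∈ B)).card ^ k ≤
              (10 * R ^ 2 * k + 1) * F.ncard := by
  set Pr := (B ×ˢ B).filter (fun p => -(p.1 + p.2) ∈ B) with hPr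
  let q : (Fin k → Fin D → ℤ) → ℕ := fun x => ∑ j, ∑ i, (x j i).natAbs ^ 2
  let Bk : Finset (Fin k → Fin D → ℤ) := Fintype.piFinset fun _ => B
  have hBk : Bk.card = B.card ^ k := by simp [Bk]
  let φ : (Fin k → (Fin D → ℤ) × (Fin D → ℤ)) → (Fin k → Fin D → ℤ) × (Fin k → Fin D → ℤ) :=
    fun p => (fun j => (p j).1, fun j => (p j).2)
  have hφ : Function.Injective φ := by
    intro p p' h
    simp only [φ, Prod.mk.injEq] at h
    ext1 j
    exact Prod.ext (congrFun h.1 j) (congrFun h.2 j)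
  let P := (Fintype.piFinset fun _ : Fin k => Pr).image φ
  have hPc : P.card = Pr.card ^ k := by
    rw [Finset.card_image_of_injective _ hφ]; simp
  have hqc : ∀ x, (q x : ℤ) = ∑ j, ∑ i, (x j i) ^ 2 := by
    intro x; simp [q]
  have := TR_graph q ?_ ?_ ?_ Bk (10 * R ^ 2 * k) ?_ P ?_
  · rw [hBk, hPc] at this
    exact this
  · intro x y z
    zify
    simp only [hqc, Finset.mul_sum, ← Finset.sum_add_distrib]
    refine Finset.sum_congr rfl fun j _ => Finset.sum_congr rfl fun i _ => ?_
    simp only [Pi.add_apply, Pi.sub_apply]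
    ring
  · intro x hx
    simp only [q, Finset.sum_eq_zero_iff, Finset.mem_univ, true_imp_iff] at hx
    ext j i
    have := hx j i
    simpa using this
  · intro x
    simp [q]
  · intro x hx y hy
    zify
    rw [hqc]
    simp only [Bk, Fintype.mem_piFinset] at hx hy
    calc ∑ j, ∑ i, ((x + x + y) j i) ^ 2 ≤ ∑ j : Fin k, 10 * (R : ℤ) ^ 2 := by
          refine Finset.sum_le_sum fun j _ => ?_
          calc ∑ i, ((x + x + y) j i) ^ 2 ≤ ∑ i, (8 * (x j i) ^ 2 + 2 * (y j i) ^ 2) := by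
                refine Finset.sum_le_sum fun i _ => ?_
                simp only [Pi.add_apply]
                nlinarith [sq_nonneg (2 * x j i - y j i)]
            _ = 8 * ∑ i, (x j i) ^ 2 + 2 * ∑ i, (y j i) ^ 2 := by
                rw [Finset.sum_add_distrib, Finset.mul_sum, Finset.mul_sum]
            _ ≤ _ := by linarith [hB _ (hx j), hB _ (hy j)]
      _ = _ := by simp; ring
  · intro p hp
    simp only [P, Finset.mem_image, Fintype.mem_piFinset] at hp
    obtain ⟨p, hp, rfl⟩ := hp
    simp only [hPr, Finset.mem_filter, Finset.mem_product] at hp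
    simp only [Bk, Fintype.mem_piFinset, φ]
    exact ⟨fun j => (hp j).1.1, fun j => (hp j).1.2, fun j => (hp j).2⟩

lemma TR_asym (c a b : ℝ) (D : ℕ) (hc : 0 < c) (ha : 0 < a) (hca : c < 1 / (8 * a))
    (hD : 0 < D) (hb : 0 < b) (Q : ℕ → Prop) (hQ : ∀ᶠ R in Filter.atTop, Q R) :
    ∀ᶠ L : ℝ in Filter.atTop, ∃ R k : ℕ, 0 < R ∧ Q R ∧
      9 * (2:ℝ) ^ (-L) * (10 * (R:ℝ) ^ 2 * k + 1) ≤ (((2:ℝ) ^ (-a)) ^ D) ^ k ∧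
      (2:ℝ) ^ (c * L ^ 2) < (b * (R:ℝ) ^ D) ^ k := by
  have hD' : (0:ℝ) < D := by exact_mod_cast hD
  obtain ⟨γ, hγ1, hγ2⟩ : ∃ γ : ℝ, 2 * a * c < γ ∧ γ < 1 / 4 := by
    apply exists_between
    rw [lt_div_iff₀ (by positivity)] at hca
    linarith
  have hγ : 0 < γ := lt_trans (by positivity) hγ1
  set β := 1 / (2 * a) with hβ
  have hβ0 : 0 < β := by positivity
  have hβγ : c < β * γ := by
    rw [hβ, one_div, ← div_eq_inv_mul, lt_div_iff₀ (by positivity)]; linarith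
  have hT : Filter.Tendsto (fun L : ℝ => (2:ℝ) ^ (γ * L)) Filter.atTop Filter.atTop :=
    (tendsto_rpow_atTop_of_base_gt_one 2 (by norm_num)).comp
      (Filter.tendsto_id.const_mul_atTop hγ)
  have e1 := (tendsto_nat_floor_atTop.comp hT).eventually hQ
  have e2 := hT.eventually_ge_atTop 1
  set m := -Real.logb 2 (b / 2 ^ D) with hm
  have hm2 : (2:ℝ) ^ (-m) = b / 2 ^ D := by
    rw [hm, neg_neg, Real.rpow_logb (by norm_num) (by norm_num) (by positivity)]
  have e3 : ∀ᶠ L : ℝ in Filter.atTop, 9 * (10 * (β * L / D) + 1) ≤ (2:ℝ) ^ ((1 / 2 - 2 * γ) * L) := by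
    have hδ : 0 < (1 / 2 - 2 * γ) * Real.log 2 := mul_pos (by linarith) (Real.log_pos (by norm_num))
    have h1 : (fun L : ℝ => 9 * (10 * (β * L / D) + 1)) =o[Filter.atTop] fun L => Real.exp ((1 / 2 - 2 * γ) * Real.log 2 * L) := by
      have ha1 := isLittleO_pow_exp_pos_mul_atTop 1 hδ
      have ha0 := isLittleO_pow_exp_pos_mul_atTop 0 hδ
      refine ((ha1.const_mul_left (90 * β / D)).add (ha0.const_mul_left 9)).congr_left ?_
      intro L; simp only [pow_one, pow_zero]; ring
    filter_upwards [h1.bound one_pos] with L hL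
    rw [Real.norm_eq_abs, Real.norm_eq_abs, abs_of_pos (Real.exp_pos _), one_mul] at hL
    rw [Real.rpow_def_of_pos (by norm_num)]
    refine (le_abs_self _).trans (hL.trans (le_of_eq ?_))
    congr 1; ring
  have e4 : ∀ᶠ L : ℝ in Filter.atTop, c * L ^ 2 < (γ * L * D - m) * (β * L / D - 1) := by
    have hT4 : Filter.Tendsto (fun L : ℝ => (β * γ - c) * L - (m * β / D + γ * D)) Filter.atTop Filter.atTop :=
      Filter.tendsto_atTop_add_const_right _ _ (Filter.tendsto_id.const_mul_atTop (by linarith))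
    filter_upwards [hT4.eventually_ge_atTop (|m| + 1), Filter.eventually_ge_atTop 1] with L h1 h2
    have : (γ * L * D - m) * (β * L / D - 1) - c * L ^ 2 =
        L * ((β * γ - c) * L - (m * β / D + γ * D)) + m := by
      field_simp; ring
    have h3 : 1 * (|m| + 1) ≤ L * ((β * γ - c) * L - (m * β / D + γ * D)) :=
      mul_le_mul h2 h1 (by positivity) (by linarith)
    linarith [neg_abs_le m]
  have e5 : ∀ᶠ L : ℝ in Filter.atTop, 0 ≤ γ * L * D - m := by
    have hT5 : Filter.Tendsto (fun L : ℝ => γ * D * L) Filter.atTop Filter.atTop :=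
      Filter.tendsto_id.const_mul_atTop (by positivity)
    filter_upwards [hT5.eventually_ge_atTop m] with L h
    linarith
  filter_upwards [e1, e2, e3, e4, e5, Filter.eventually_gt_atTop 0] with L h1 h2 h3 h4 h5 hL
  set R := ⌊(2:ℝ) ^ (γ * L)⌋₊ with hR
  set k := ⌊β * L / D⌋₊ with hk
  have hR1 : 0 < R := Nat.floor_pos.2 h2
  have hR1' : (1:ℝ) ≤ R := by exact_mod_cast hR1
  have hRle : (R:ℝ) ≤ (2:ℝ) ^ (γ * L) := Nat.floor_le (by positivity)
  have hRge : (2:ℝ) ^ (γ * L) / 2 ≤ R := by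
    have := Nat.lt_floor_add_one ((2:ℝ) ^ (γ * L))
    rw [← hR] at this
    linarith
  have hkle : (k:ℝ) ≤ β * L / D := Nat.floor_le (by positivity)
  have hkge : β * L / D - 1 ≤ k := by
    have := Nat.lt_floor_add_one (β * L / D)
    rw [← hk] at this
    linarith
  refine ⟨R, k, hR1, h1, ?_, ?_⟩
  · have p1 : (2:ℝ) ^ (-(L / 2)) ≤ (((2:ℝ) ^ (-a)) ^ D) ^ k := by
      rw [← pow_mul, ← Real.rpow_natCast, ← Real.rpow_mul (by norm_num)]
      push_cast
      apply Real.rpow_le_rpow_of_exponent_le (by norm_num)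
      have : a * (D * k) ≤ a * (β * L) := by
        apply mul_le_mul_of_nonneg_left _ ha.le
        rw [le_div_iff₀ hD'] at hkle; linarith
      have h6 : a * (β * L) = L / 2 := by rw [hβ]; field_simp
      linarith
    refine le_trans ?_ p1
    have p2 : (R:ℝ) ^ 2 ≤ (2:ℝ) ^ (2 * γ * L) := by
      calc (R:ℝ) ^ 2 ≤ ((2:ℝ) ^ (γ * L)) ^ 2 := by gcongr
        _ = _ := by rw [← Real.rpow_natCast, ← Real.rpow_mul (by norm_num)]; congr 1; push_cast; ring
    have p3 : (1:ℝ) ≤ (2:ℝ) ^ (2 * γ * L) := Real.one_le_rpow (by norm_num) (by positivity)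
    calc 9 * (2:ℝ) ^ (-L) * (10 * (R:ℝ) ^ 2 * k + 1)
        ≤ 9 * (2:ℝ) ^ (-L) * (10 * (2:ℝ) ^ (2 * γ * L) * (β * L / D) + (2:ℝ) ^ (2 * γ * L)) := by gcongr
      _ = (2:ℝ) ^ (-L) * (2:ℝ) ^ (2 * γ * L) * (9 * (10 * (β * L / D) + 1)) := by ring
      _ ≤ (2:ℝ) ^ (-L) * (2:ℝ) ^ (2 * γ * L) * (2:ℝ) ^ ((1 / 2 - 2 * γ) * L) := by gcongr
      _ = _ := by
        rw [← Real.rpow_add (by norm_num), ← Real.rpow_add (by norm_num)]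
        congr 1; ring
  · have p1 : (2:ℝ) ^ (γ * L * D - m) ≤ b * (R:ℝ) ^ D := by
      calc (2:ℝ) ^ (γ * L * D - m) = b * ((2:ℝ) ^ (γ * L) / 2) ^ D := by
            rw [sub_eq_add_neg, Real.rpow_add (by norm_num), hm2, Real.rpow_mul (by norm_num), Real.rpow_natCast, div_pow]
            ring
        _ ≤ _ := by gcongr
    calc (2:ℝ) ^ (c * L ^ 2) < (2:ℝ) ^ ((γ * L * D - m) * (β * L / D - 1)) :=
          Real.rpow_lt_rpow_of_exponent_lt (by norm_num) h4
      _ ≤ (2:ℝ) ^ ((γ * L * D - m) * k) := by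
          apply Real.rpow_le_rpow_of_exponent_le (by norm_num)
          gcongr
      _ = ((2:ℝ) ^ (γ * L * D - m)) ^ k := by rw [Real.rpow_mul (by norm_num), Real.rpow_natCast]
      _ ≤ _ := by gcongr

theorem stmt_2 :
    ∀ c' : ℝ, 0 < c' → c' < 1 / (4 * Real.logb 2 (4 / 3)) →
      ∃ ε₀ : ℝ, 0 < ε₀ ∧ ∀ ε : ℝ, 0 < ε → ε < ε₀ →
        ∃ (n : ℕ) (G : SimpleGraph (Fin n)), 0 < n ∧
          (({t : Finset (Fin n) | G.IsNClique 3 t}.ncard : ℝ)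
              < ε ^ (c' * Real.logb 2 (1 / ε)) * (n : ℝ) ^ 3) ∧
          ∀ F : Set (Sym2 (Fin n)), F ⊆ G.edgeSet →
            (∀ t : Finset (Fin n), G.IsNClique 3 t →
              ∃ u ∈ t, ∃ v ∈ t, u ≠ v ∧ s(u, v) ∈ F) →
            ε * (n : ℝ) ^ 2 ≤ (F.ncard : ℝ) := by
  intro c hc hcC
  set ℓ := Real.logb 2 (4 / 3) with hℓ
  have hℓ0 : 0 < ℓ := Real.logb_pos (by norm_num) (by norm_num)
  obtain ⟨a, ha1, ha2⟩ : ∃ a, ℓ / 2 < a ∧ a < 1 / (8 * c) := by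
    apply exists_between
    rw [lt_div_iff₀ (by positivity)] at hcC ⊢
    linarith
  have ha : 0 < a := lt_trans (by positivity) ha1
  have hca : c < 1 / (8 * a) := by
    rw [lt_div_iff₀ (by positivity)] at ha2 ⊢
    linarith
  have hκ : ((2:ℝ) ^ (-a)) ^ 2 < 3 / 4 := by
    calc ((2:ℝ) ^ (-a)) ^ 2 = (2:ℝ) ^ (-(2 * a)) := by
          rw [← Real.rpow_natCast, ← Real.rpow_mul (by norm_num)]; congr 1; push_cast; ring
      _ < (2:ℝ) ^ (-ℓ) := Real.rpow_lt_rpow_of_exponent_lt (by norm_num) (by linarith)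
      _ = 3 / 4 := by
          rw [Real.rpow_neg (by norm_num), hℓ, Real.rpow_logb (by norm_num) (by norm_num) (by norm_num)]
          norm_num
  obtain ⟨D, b, hD, hb, hlat⟩ := TR_lat ((2:ℝ) ^ (-a)) (by positivity) hκ
  obtain ⟨L0, hL0⟩ := Filter.eventually_atTop.1 (TR_asym c a b D hc ha hca hD hb _ hlat)
  refine ⟨(2:ℝ) ^ (-L0), by positivity, ?_⟩
  intro ε hε hεlt
  set L := Real.logb 2 (1 / ε) with hL
  have hεL : ε = (2:ℝ) ^ (-L) := by
    rw [Real.rpow_neg (by norm_num), hL, Real.rpow_logb (by norm_num) (by norm_num) (by positivity)]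
    simp
  have hLL : L0 ≤ L := by
    rw [hεL, Real.rpow_lt_rpow_left_iff (by norm_num)] at hεlt
    linarith
  clear_value L
  obtain ⟨R, k, hR, ⟨B, hB1, hB2, hB3⟩, h1, h2⟩ := hL0 L hLL
  have hR' : (0:ℝ) < R := by exact_mod_cast hR
  have hBpos' : (0:ℝ) < B.card := lt_of_lt_of_le (by positivity) hB1
  have hBpos : 0 < B.card := by exact_mod_cast hBpos'
  obtain ⟨G, hG1, hG2⟩ := TR_fam D k R B hB2
  refine ⟨3 * B.card ^ k, G, Nat.mul_pos (by norm_num) (pow_pos hBpos k), ?_, ?_⟩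
  · have hV : (2:ℝ) ^ (c * L ^ 2) < (B.card : ℝ) ^ k := h2.trans_le (by gcongr)
    have hd : ε ^ (c * L) = ((2:ℝ) ^ (c * L ^ 2))⁻¹ := by
      rw [hεL, ← Real.rpow_mul (by norm_num), ← Real.rpow_neg (by norm_num)]; congr 1; ring
    rw [hd]
    have hG1' : (({t : Finset (Fin (3 * B.card ^ k)) | G.IsNClique 3 t}.ncard : ℕ) : ℝ) ≤ ((B.card : ℝ) ^ k) ^ 2 := by
      exact_mod_cast hG1
    refine hG1'.trans_lt ?_
    push_cast
    set V := (B.card : ℝ) ^ k with hVd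
    have hV0 : 0 < V := pow_pos hBpos' k
    have hT0 : (0:ℝ) < 2 ^ (c * L ^ 2) := by positivity
    rw [inv_mul_eq_div, lt_div_iff₀ hT0]
    have hV2 : 0 < V ^ 2 := pow_pos hV0 2
    nlinarith [mul_lt_mul_of_pos_left hV hV2, pow_pos hV0 3]
  · intro F _ hF
    have h3 := hG2 F hF
    set N := ((B ×ˢ B).filter (fun p => -(p.1 + p.2) ∈ B)).card with hN
    have h3' : (N:ℝ) ^ k ≤ (10 * (R:ℝ) ^ 2 * k + 1) * F.ncard := by exact_mod_cast h3
    have h4 : (((2:ℝ) ^ (-a)) ^ D) ^ k * ((B.card : ℝ) ^ k) ^ 2 ≤ (N:ℝ) ^ k := by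
      calc _ = (((2:ℝ) ^ (-a)) ^ D * (B.card : ℝ) ^ 2) ^ k := by rw [mul_pow]; ring
        _ ≤ _ := pow_le_pow_left₀ (mul_nonneg (by positivity) (sq_nonneg _)) hB3 k
    rw [← hεL] at h1
    push_cast
    set V := (B.card : ℝ) ^ k with hVd
    have hK : (0:ℝ) < 10 * (R:ℝ) ^ 2 * k + 1 := by positivity
    have h5 : 9 * ε * (10 * (R:ℝ) ^ 2 * k + 1) * V ^ 2 ≤ (10 * (R:ℝ) ^ 2 * k + 1) * F.ncard :=
      (mul_le_mul_of_nonneg_right h1 (sq_nonneg V)).trans (h4.trans h3')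
    refine le_of_mul_le_mul_left ?_ hK
    linarith
end

section
/- Let G be an abelian group, let X, Y, Z, W be finite subsets of G with |X| = |Y| = |Z| = n (n ≥ 1), and suppose W is 3-AP-free. Then η(3n) ≥ (1/9) · #{(x,y) ∈ X × Y : x + y ∈ Z and x − y ∈ W} / n². -/
open SimpleGraph SimpleGraph.TripartiteFromTriangles in
theorem existsUnique_of_locallyLinear {V : Type*} {H : SimpleGraph V} (h : H.LocallyLinear)
    ⦃u v : V⦄ (huv : H.Adj u v) : ∃! w, H.Adj u w ∧ H.Adj v w := by
  classical
  obtain ⟨s, hs, hu, hv⟩ := h.2 huv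
  have hex : ∃ w, H.Adj u w ∧ H.Adj v w := by
    obtain ⟨a, b, c, hab, hac, hbc, rfl⟩ := is3Clique_iff.1 hs
    have hne := huv.ne
    simp only [Finset.mem_insert, Finset.mem_singleton] at hu hv
    have := hab.symm
    have := hac.symm
    have := hbc.symm
    rcases hu with rfl | rfl | rfl <;> rcases hv with rfl | rfl | rfl <;>
      first
      | exact absurd rfl hne
      | exact ⟨a, by assumption, by assumption⟩
      | exact ⟨b, by assumption, by assumption⟩
      | exact ⟨c, by assumption, by assumption⟩
      | exact ⟨_, by assumption, by assumption⟩
  obtain ⟨w, hw⟩ := hex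
  refine ⟨w, hw, fun w' hw' => ?_⟩
  by_contra hne
  have h1 : H.IsNClique 3 {u, v, w} := is3Clique_triple_iff.2 ⟨huv, hw.1, hw.2⟩
  have h2 : H.IsNClique 3 {u, v, w'} := is3Clique_triple_iff.2 ⟨huv, hw'.1, hw'.2⟩
  have hd : ({u, v, w} : Finset V) ≠ {u, v, w'} := by
    intro he
    have : w' ∈ ({u, v, w} : Finset V) := by rw [he]; simp
    simp only [Finset.mem_insert, Finset.mem_singleton] at this
    rcases this with h | h | h
    · exact hw'.1.ne h.symm
    · exact hw'.2.ne h.symm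
    · exact hne h
  exact huv.ne (h.1 h1 h2 hd (by simp) (by simp))

open SimpleGraph SimpleGraph.TripartiteFromTriangles in
theorem stmt_3 {G : Type*} [AddCommGroup G] [DecidableEq G]
    (X Y Z W : Finset G) (n : ℕ) (hn : 1 ≤ n)
    (hX : X.card = n) (hY : Y.card = n) (hZ : Z.card = n)
    (hW : ThreeAPFree (W : Set G)) :
    (1 / 9 : ℝ) *
      (((X ×ˢ Y).filter (fun p => p.1 + p.2 ∈ Z ∧ p.1 - p.2 ∈ W)).card : ℝ) / n ^ 2
      ≤ eta (3 * n) := by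
  classical
  let t : Finset (X × Y × Z) := Finset.univ.filter
    (fun p => (p.1 : G) + p.2.1 = p.2.2 ∧ (p.1 : G) - p.2.1 ∈ W)
  have ht : ∀ a b c, (a, b, c) ∈ t ↔ ((a : G) + b = c ∧ (a : G) - b ∈ W) := by
    intro a b c; simp [t]
  haveI h1 : ExplicitDisjoint t := by
    refine ⟨?_, ?_, ?_⟩
    · intro a b c a' h h'
      rw [ht] at h h'
      exact Subtype.ext (add_right_cancel (h.1.trans h'.1.symm))
    · intro a b c a' h h'
      rw [ht] at h h'
      exact Subtype.ext (add_left_cancel (h.1.trans h'.1.symm))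
    · intro a b c a' h h'
      rw [ht] at h h'
      exact Subtype.ext (h.1.symm.trans h'.1)
  haveI h2 : NoAccidental t := by
    refine ⟨?_⟩
    intro a a' b b' c c' hA hB hC
    rw [ht] at hA hB hC
    right; left
    obtain ⟨hA1, hA2⟩ := hA
    obtain ⟨hB1, hB2⟩ := hB
    obtain ⟨hC1, hC2⟩ := hC
    have e := hW hA2 hC2 hB2 (by
      have e1 : (a' : G) = c - b := eq_sub_of_add_eq hA1
      have e2 : (b' : G) = c - a := eq_sub_of_add_eq' hB1
      rw [e1, e2]; abel)
    have e3 := hW hB2 hC2 hA2 (by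
      have e1 : (a' : G) = c - b := eq_sub_of_add_eq hA1
      have e2 : (b' : G) = c - a := eq_sub_of_add_eq' hB1
      rw [e1, e2]; abel)
    exact Subtype.ext (sub_right_injective e3.symm)
  have hcard : ((X ×ˢ Y).filter (fun p => p.1 + p.2 ∈ Z ∧ p.1 - p.2 ∈ W)).card ≤ t.card := by
    have : ((X ×ˢ Y).filter (fun p => p.1 + p.2 ∈ Z ∧ p.1 - p.2 ∈ W)) ⊆
        t.image (fun p => ((p.1 : G), (p.2.1 : G))) := by
      rintro ⟨x, y⟩ h
      simp only [Finset.mem_filter, Finset.mem_product] at h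
      rw [Finset.mem_image]
      exact ⟨(⟨x, h.1.1⟩, ⟨y, h.1.2⟩, ⟨x + y, h.2.1⟩), (ht _ _ _).2 ⟨rfl, h.2.2⟩, rfl⟩
    exact (Finset.card_le_card this).trans Finset.card_image_le
  have hL := locallyLinear t
  let f : (X ⊕ Y ⊕ Z) ≃ Fin (3 * n) := Fintype.equivFinOfCardEq (by simp [hX, hY, hZ]; ring)
  let H := (graph t).map f.toEmbedding
  have hHL : H.LocallyLinear := hL.map _
  have hHe : H.edgeSet.ncard = 3 * t.card := by
    rw [← card_triangles t, ← hL.card_edgeFinset, ← card_edgeFinset_map f.toEmbedding (graph t),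
      ← coe_edgeFinset, Set.ncard_coe_finset]
  have hle : (H.edgeSet.ncard : ℝ) / ((3 * n : ℕ) : ℝ) ^ 2 ≤ eta (3 * n) := by
    apply le_csSup
    · apply Set.Finite.bddAbove
      apply (Set.finite_range (fun K : SimpleGraph (Fin (3 * n)) =>
        (K.edgeSet.ncard : ℝ) / ((3 * n : ℕ) : ℝ) ^ 2)).subset
      rintro x ⟨K, -, rfl⟩
      exact ⟨K, rfl⟩
    · exact ⟨H, existsUnique_of_locallyLinear hHL, rfl⟩
  refine le_trans ?_ hle
  rw [hHe]
  have hc : (((X ×ˢ Y).filter (fun p => p.1 + p.2 ∈ Z ∧ p.1 - p.2 ∈ W)).card : ℝ) ≤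
      ((3 * t.card : ℕ) : ℝ) := by
    exact_mod_cast (by omega)
  have hn' : (0 : ℝ) < n := by exact_mod_cast hn
  have : ((3 * t.card : ℕ) : ℝ) / ((3 * n : ℕ) : ℝ) ^ 2 =
      (1 / 9 : ℝ) * ((3 * t.card : ℕ) : ℝ) / n ^ 2 := by
    push_cast; field_simp; ring
  rw [this]
  gcongr
end

section
/- Let A be a finite set, let n ≥ 1, and let f₁ : A → V₁, f₂ : A → V₂, f₃ : A → V₃ be maps with |fᵢ(A)| ≤ n for i = 1, 2, 3. Suppose that whenever (a₁, a₂, a₃) ∈ A³ satisfies f₁(a₂) = f₁(a₃), f₂(a₃) = f₂(a₁), and f₃(a₁) = f₃(a₂), we have a₁ = a₂ = a₃. Then η(3n) ≥ |A| / (9n²). -/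
theorem exists_idx {α V : Type*} [DecidableEq V] (A : Finset α) (f : α → V) (n : ℕ) (hn : 1 ≤ n)
    (h : (A.image f).card ≤ n) :
    ∃ g : α → ℕ, (∀ a, g a < n) ∧ ∀ a ∈ A, ∀ b ∈ A, g a = g b → f a = f b := by
  classical
  let e := (A.image f).equivFin
  refine ⟨fun a => if h : f a ∈ A.image f then (e ⟨f a, h⟩ : ℕ) else 0, ?_, ?_⟩
  · intro a
    dsimp only
    split_ifs with h'
    · exact lt_of_lt_of_le (e ⟨f a, h'⟩).2 h
    · exact hn
  · intro a ha b hb hab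
    have ha' := Finset.mem_image_of_mem f ha
    have hb' := Finset.mem_image_of_mem f hb
    simp only [ha', hb', dif_pos] at hab
    have := e.injective (Fin.ext hab)
    simpa using this

theorem graph_aux {α : Type*} (m : ℕ) (A : Finset α) (T : Fin 3 → α → Fin m)
    (hT : ∀ i j a b, T i a = T j b → i = j)
    (H : ∀ i j k, i ≠ j → i ≠ k → j ≠ k → ∀ a ∈ A, ∀ b ∈ A, ∀ c ∈ A,
      T i a = T i b → T j a = T j c → T k b = T k c → a = b ∧ b = c) :
    ∃ G : SimpleGraph (Fin m), (∀ ⦃u v⦄, G.Adj u v → ∃! w, G.Adj u w ∧ G.Adj v w) ∧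
      A.card ≤ G.edgeSet.ncard := by
  classical
  let G : SimpleGraph (Fin m) :=
    { Adj := fun u v => ∃ a ∈ A, ∃ i j, i ≠ j ∧ u = T i a ∧ v = T j a
      symm := ⟨by
        rintro u v ⟨a, ha, i, j, hij, hu, hv⟩
        exact ⟨a, ha, j, i, hij.symm, hv, hu⟩⟩
      loopless := ⟨by
        rintro u ⟨a, ha, i, j, hij, hu, hv⟩
        exact hij (hT i j a a (hu.symm.trans hv))⟩ }
  refine ⟨G, ?_, ?_⟩
  · rintro u v ⟨a, ha, i, j, hij, rfl, rfl⟩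
    obtain ⟨k, hik, hjk, hk⟩ : ∃ k : Fin 3, i ≠ k ∧ j ≠ k ∧ ∀ l, i ≠ l → j ≠ l → l = k := by
      revert i j; decide
    refine ⟨T k a, ⟨⟨a, ha, i, k, hik, rfl, rfl⟩, ⟨a, ha, j, k, hjk, rfl, rfl⟩⟩, ?_⟩
    rintro w ⟨⟨b, hb, i', k', hik', h1, rfl⟩, ⟨c, hc, j', k'', hjk', h2, h3⟩⟩
    obtain rfl := hT _ _ _ _ h1
    obtain rfl := hT _ _ _ _ h2
    obtain rfl := hT _ _ _ _ h3
    obtain rfl := hk k' hik' hjk'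
    obtain ⟨rfl, rfl⟩ := H i j k' hij hik hjk a ha b hb c hc h1 h2 h3
    rfl
  · rw [← Set.ncard_coe_finset A]
    refine Set.ncard_le_ncard_of_injOn (fun a => s(T 0 a, T 1 a)) ?_ ?_ (Set.toFinite _)
    · intro a ha
      exact ⟨a, ha, 0, 1, by decide, rfl, rfl⟩
    · intro a ha b hb hab
      rcases Sym2.eq_iff.1 hab with ⟨h1, h2⟩ | ⟨h1, h2⟩
      · exact (H 0 1 2 (by decide) (by decide) (by decide) a ha b hb b hb h1 h2 rfl).1
      · exact absurd (hT _ _ _ _ h1) (by decide)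

theorem stmt_4 {α V₁ V₂ V₃ : Type*} [DecidableEq V₁] [DecidableEq V₂] [DecidableEq V₃]
    (A : Finset α) (f₁ : α → V₁) (f₂ : α → V₂) (f₃ : α → V₃) (n : ℕ) (hn : 1 ≤ n)
    (h₁ : (A.image f₁).card ≤ n) (h₂ : (A.image f₂).card ≤ n) (h₃ : (A.image f₃).card ≤ n)
    (hA : ∀ a₁ ∈ A, ∀ a₂ ∈ A, ∀ a₃ ∈ A,
      f₁ a₂ = f₁ a₃ → f₂ a₃ = f₂ a₁ → f₃ a₁ = f₃ a₂ → a₁ = a₂ ∧ a₂ = a₃) :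
    (A.card : ℝ) / (9 * n ^ 2) ≤ eta (3 * n) := by
  obtain ⟨g₁, b₁, k₁⟩ := exists_idx A f₁ n hn h₁
  obtain ⟨g₂, b₂, k₂⟩ := exists_idx A f₂ n hn h₂
  obtain ⟨g₃, b₃, k₃⟩ := exists_idx A f₃ n hn h₃
  let T : Fin 3 → α → Fin (3 * n) := ![fun a => ⟨g₁ a, by have := b₁ a; omega⟩,
    fun a => ⟨n + g₂ a, by have := b₂ a; omega⟩, fun a => ⟨2 * n + g₃ a, by have := b₃ a; omega⟩]
  obtain ⟨G, hG, hc⟩ := graph_aux (3 * n) A T (by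
      intro i j a b h
      have := b₁ a
      have := b₂ a
      have := b₃ a
      have := b₁ b
      have := b₂ b
      have := b₃ b
      fin_cases i <;> fin_cases j <;> simp [T] at h ⊢ <;> omega) (by
      have e₁ : ∀ a ∈ A, ∀ b ∈ A, T 0 a = T 0 b → f₁ a = f₁ b := fun a ha b hb h =>
        k₁ a ha b hb (by simpa [T] using h)
      have e₂ : ∀ a ∈ A, ∀ b ∈ A, T 1 a = T 1 b → f₂ a = f₂ b := fun a ha b hb h =>
        k₂ a ha b hb (by simpa [T] using h)
      have e₃ : ∀ a ∈ A, ∀ b ∈ A, T 2 a = T 2 b → f₃ a = f₃ b := fun a ha b hb h =>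
        k₃ a ha b hb (by simpa [T] using h)
      clear_value T
      intro i j k hij hik hjk a ha b hb c hc h1 h2 h3
      fin_cases i <;> fin_cases j <;> fin_cases k <;> simp at hij hik hjk h1 h2 h3 <;> grind)
  have hfin : {x : ℝ | ∃ G : SimpleGraph (Fin (3 * n)),
      (∀ ⦃u v⦄, G.Adj u v → ∃! w, G.Adj u w ∧ G.Adj v w) ∧
      x = (G.edgeSet.ncard : ℝ) / (3 * n : ℕ) ^ 2}.Finite := by
    refine (Set.finite_range (fun G : SimpleGraph (Fin (3 * n)) =>
      (G.edgeSet.ncard : ℝ) / (3 * n : ℕ) ^ 2)).subset ?_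
    rintro x ⟨G, -, rfl⟩
    exact ⟨G, rfl⟩
  refine le_trans ?_ (le_csSup hfin.bddAbove ⟨G, hG, rfl⟩)
  have : ((3 * n : ℕ) : ℝ) ^ 2 = 9 * n ^ 2 := by push_cast; ring
  rw [this]
  gcongr
end

section
/- Fix integers M ≥ 1 and D ≥ 1, and define C : (ℤ^D)² → ℤ by C(x, y) = ‖x − y‖₂² = Σᵢ₌₁^D (xᵢ − yᵢ)². Then: (i) for all (x, y) ∈ ([M+1]^D)² (i.e., x, y ∈ {1,...,M+1}^D), C(x,y) ∈ {0, 1, ..., D·M²}; and (ii) for every k ∈ ℤ, the color class {(x,y) ∈ ([M+1]^D)² : C(x,y) = k} is corner-free. In particular, there exists a coloring of ([M+1]^D)² with D·M² + 1 colors all of whose color classes are corner-free. -/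
/-- A subset `A` of `G × G` is corner-free if there are no `x, y ∈ G` and nonzero `d ∈ G`
with `(x, y)`, `(x + d, y)`, `(x, y + d)` all in `A`. -/
def CornerFree {G : Type*} [AddCommGroup G] (A : Set (G × G)) : Prop :=
  ¬∃ (x y d : G), d ≠ 0 ∧ (x, y) ∈ A ∧ (x + d, y) ∈ A ∧ (x, y + d) ∈ A

/-- The grid `[M+1]^D = {1, ..., M+1}^D ⊆ ℤ^D`. -/
def grid (M D : ℕ) : Set (Fin D → ℤ) := {x | ∀ i, 1 ≤ x i ∧ x i ≤ M + 1}

/-- The Behrend-type coloring `C(x, y) = ‖x - y‖₂²`. -/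
def behrendColor {D : ℕ} (x y : Fin D → ℤ) : ℤ := ∑ i, (x i - y i) ^ 2

theorem stmt_6 (M D : ℕ) (hM : 1 ≤ M) (hD : 1 ≤ D) :
    (∀ x ∈ grid M D, ∀ y ∈ grid M D,
        0 ≤ behrendColor x y ∧ behrendColor x y ≤ D * M ^ 2) ∧
    (∀ k : ℤ, CornerFree
        {p : (Fin D → ℤ) × (Fin D → ℤ) |
          (p.1 ∈ grid M D ∧ p.2 ∈ grid M D) ∧ behrendColor p.1 p.2 = k}) := by
  refine ⟨fun x hx y hy => ⟨Finset.sum_nonneg fun i _ => sq_nonneg _, ?_⟩, ?_⟩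
  · have h : ∀ i ∈ (Finset.univ : Finset (Fin D)), (x i - y i) ^ 2 ≤ (M : ℤ) ^ 2 := by
      intro i _
      have h1 := hx i
      have h2 := hy i
      exact sq_le_sq' (by linarith) (by linarith)
    have h3 := Finset.sum_le_sum h
    simpa [behrendColor] using h3
  · rintro k ⟨x, y, d, hd, ⟨-, h0⟩, ⟨-, h1⟩, ⟨-, h2⟩⟩
    apply hd
    simp only [behrendColor, Pi.add_apply] at h0 h1 h2
    have key : ∑ i, 2 * (d i) ^ 2 = (0 : ℤ) := by
      have e : ∑ i, 2 * (d i) ^ 2 = ∑ i, (x i + d i - y i) ^ 2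
          + ∑ i, (x i - (y i + d i)) ^ 2 - 2 * ∑ i, (x i - y i) ^ 2 := by
        rw [Finset.mul_sum, ← Finset.sum_add_distrib, ← Finset.sum_sub_distrib]
        exact Finset.sum_congr rfl fun i _ => by ring
      rw [e, h0, h1, h2]; ring
    rw [Finset.sum_eq_zero_iff_of_nonneg (fun i _ => by positivity)] at key
    funext i
    have := key i (Finset.mem_univ i)
    simpa using this
end

section
/- There exist absolute constants c > 0 and K > 0 such that for every integer D ≥ 1, letting B = {x ∈ ℝ^D : ‖x‖₂ ≤ 1} be the closed unit Euclidean ball, the 2D-dimensional Lebesgue measure of {(x, y) ∈ ℝ^D × ℝ^D : x ∈ B, y ∈ B, x + y ∈ B} is at least c · D^{-K} · (3/4)^{D/2} · vol(B)², where vol(B) is the D-dimensional Lebesgue measure of B. Equivalently, for x, y drawn independently and uniformly from B, the probability that x + y ∈ B is at least c · D^{-K} · (3/4)^{D/2}. -/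
open MeasureTheory

lemma slab_bound {D : ℕ} (N : ℕ) (hN : 1 ≤ N) (ρ : ℝ) (hρ : ρ ≤ 1)
    (x : EuclideanSpace ℝ (Fin D)) (hx : ‖x‖ ≤ 1) :
    volume (Metric.closedBall (0 : EuclideanSpace ℝ (Fin D)) ρ) ≤
      ((2 * N + 1 : ℕ) : ENNReal) *
        volume {z : EuclideanSpace ℝ (Fin D) | ‖z‖ ≤ ρ ∧ |inner ℝ x z| ≤ 1 / (N : ℝ)} := by
  set C := {z : EuclideanSpace ℝ (Fin D) | ‖z‖ ≤ ρ ∧ |inner ℝ x z| ≤ 1 / (N : ℝ)} with hC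
  have hN0 : (0 : ℝ) < N := by exact_mod_cast hN
  by_cases hx0 : x = 0
  · have h1 : Metric.closedBall (0 : EuclideanSpace ℝ (Fin D)) ρ ⊆ C := by
      intro z hz
      refine ⟨by simpa using hz, ?_⟩
      simp [hx0]
    calc _ ≤ volume C := measure_mono h1
      _ = 1 * volume C := by simp
      _ ≤ _ := by gcongr; exact_mod_cast (by omega : 1 ≤ 2 * N + 1)
  have hxp : 0 < ‖x‖ := norm_pos_iff.mpr hx0
  let v : ℤ → EuclideanSpace ℝ (Fin D) := fun k => (-((k : ℝ) / N / ‖x‖ ^ 2)) • x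
  have hcov : Metric.closedBall (0 : EuclideanSpace ℝ (Fin D)) ρ ⊆
      ⋃ k ∈ Finset.Icc (-(N : ℤ)) N, (fun z => z + v k) ⁻¹' C := by
    intro z hz
    have hz : ‖z‖ ≤ ρ := by simpa using hz
    set t := inner ℝ x z with ht
    have ht1 : |t| ≤ 1 := by
      have := abs_real_inner_le_norm x z
      nlinarith [norm_nonneg x, norm_nonneg z]
    obtain ⟨ht2, ht3⟩ := abs_le.mp ht1
    set k := round (t * N) with hk
    have hr := abs_sub_round (t * N)
    rw [← hk] at hr
    obtain ⟨hr1, hr2⟩ := abs_le.mp hr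
    have hkN : k ≤ N := by
      have : (k : ℝ) < N + 1 := by nlinarith
      have : k < (N : ℤ) + 1 := by exact_mod_cast this
      omega
    have hkN' : -(N : ℤ) ≤ k := by
      have : -((N : ℝ) + 1) < k := by nlinarith
      have : -((N : ℤ) + 1) < k := by exact_mod_cast this
      omega
    have hkk : (k : ℝ) ^ 2 ≤ 2 * k * (t * N) := by
      rcases lt_trichotomy k 0 with h | h | h
      · have : (k : ℝ) ≤ -1 := by exact_mod_cast (by omega : k ≤ -1)
        nlinarith
      · simp [h]
      · have : (1 : ℝ) ≤ k := by exact_mod_cast h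
        nlinarith
    simp only [Set.mem_iUnion, Finset.mem_Icc]
    refine ⟨k, ⟨hkN', hkN⟩, ?_⟩
    show ‖z + v k‖ ≤ ρ ∧ |inner ℝ x (z + v k)| ≤ 1 / (N : ℝ)
    constructor
    · refine le_trans ?_ hz
      refine (sq_le_sq₀ (norm_nonneg _) (norm_nonneg _)).mp ?_
      rw [norm_add_sq_real, norm_smul, mul_pow, Real.norm_eq_abs, sq_abs, inner_smul_right,
        real_inner_comm, ← ht]
      have : 2 * (-((k : ℝ) / N / ‖x‖ ^ 2) * t) + (-((k : ℝ) / N / ‖x‖ ^ 2)) ^ 2 * ‖x‖ ^ 2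
          = (k ^ 2 - 2 * k * (t * N)) / (N ^ 2 * ‖x‖ ^ 2) := by
        field_simp
        ring
      have h2 : (k ^ 2 - 2 * k * (t * N)) / (N ^ 2 * ‖x‖ ^ 2) ≤ 0 :=
        div_nonpos_of_nonpos_of_nonneg (by linarith) (by positivity)
      linarith
    · rw [inner_add_right, inner_smul_right, ← ht, real_inner_self_eq_norm_sq]
      have : t + -((k : ℝ) / N / ‖x‖ ^ 2) * ‖x‖ ^ 2 = (t * N - k) / N := by
        field_simp
        ring
      rw [this, abs_div, abs_of_pos hN0]
      gcongr
      linarith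
  calc _ ≤ volume (⋃ k ∈ Finset.Icc (-(N : ℤ)) N, (fun z => z + v k) ⁻¹' C) := measure_mono hcov
    _ ≤ ∑ k ∈ Finset.Icc (-(N : ℤ)) N, volume ((fun z => z + v k) ⁻¹' C) :=
        measure_biUnion_finset_le _ _
    _ = ∑ k ∈ Finset.Icc (-(N : ℤ)) N, volume C := by
        simp only [measure_preimage_add_right]
    _ = _ := by
        rw [Finset.sum_const, Int.card_Icc, nsmul_eq_mul]
        congr 3
        omega

lemma lens_bound {D : ℕ} (hD : 1 ≤ D) (x : EuclideanSpace ℝ (Fin D)) (hx : ‖x‖ ≤ 1) :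
    volume (Metric.closedBall (0 : EuclideanSpace ℝ (Fin D)) (√(3 / 4 - 1 / ((4 * D : ℕ) : ℝ)))) ≤
      ((2 * (4 * D) + 1 : ℕ) : ENNReal) *
        volume {y : EuclideanSpace ℝ (Fin D) | ‖y‖ ≤ 1 ∧ ‖x + y‖ ≤ 1} := by
  have hD' : (1 : ℝ) ≤ D := by exact_mod_cast hD
  have hs : 1 / ((4 * D : ℕ) : ℝ) ≤ 1 / 4 := by
    push_cast
    apply one_div_le_one_div_of_le <;> linarith
  have hs0 : 0 ≤ 1 / ((4 * D : ℕ) : ℝ) := by positivity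
  refine (slab_bound (4 * D) (by omega) _ ?_ x hx).trans ?_
  · apply Real.sqrt_le_iff.2; constructor <;> linarith
  refine mul_le_mul_right ?_ _
  rw [← measure_preimage_add_right volume ((1 / 2 : ℝ) • x)]
  apply measure_mono
  intro y hy
  obtain ⟨h1, h2⟩ := hy
  set s := 1 / ((4 * D : ℕ) : ℝ)
  set z := y + (1 / 2 : ℝ) • x with hz
  have h1 : ‖z‖ ^ 2 ≤ 3 / 4 - s := by
    have := pow_le_pow_left₀ (norm_nonneg z) h1 2
    rwa [Real.sq_sqrt (by linarith)] at this
  have e1 : y = z - (1 / 2 : ℝ) • x := by rw [hz]; abel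
  have e2 : x + y = z + (1 / 2 : ℝ) • x := by rw [hz]; module
  obtain ⟨h3, h4⟩ := abs_le.mp h2
  have hx2 : ‖x‖ ^ 2 ≤ 1 := pow_le_one₀ (norm_nonneg _) hx
  have hn : ‖(1 / 2 : ℝ) • x‖ ^ 2 = ‖x‖ ^ 2 / 4 := by
    rw [norm_smul, mul_pow]; norm_num; ring
  constructor
  · rw [e1]
    refine (sq_le_one_iff₀ (norm_nonneg _)).mp ?_
    rw [norm_sub_sq_real, hn, inner_smul_right, real_inner_comm]
    linarith
  · rw [e2]
    refine (sq_le_one_iff₀ (norm_nonneg _)).mp ?_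
    rw [norm_add_sq_real, hn, inner_smul_right, real_inner_comm]
    linarith

lemma num_bound (D : ℕ) (hD : 1 ≤ D) :
    2 / 3 * ((3 : ℝ) / 4) ^ ((D : ℝ) / 2) ≤ √(3 / 4 - 1 / ((4 * D : ℕ) : ℝ)) ^ D := by
  have hD' : (1 : ℝ) ≤ D := by exact_mod_cast hD
  have e : 3 / 4 - 1 / ((4 * D : ℕ) : ℝ) = 3 / 4 * (1 - 1 / (3 * D)) := by
    push_cast; field_simp
  have hu : 1 / (3 * (D : ℝ)) ≤ 1 / 3 := by
    apply one_div_le_one_div_of_le <;> linarith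
  have hu0 : 0 ≤ 1 / (3 * (D : ℝ)) := by positivity
  have e2 : ((3 : ℝ) / 4) ^ ((D : ℝ) / 2) = √(3 / 4) ^ D := by
    rw [Real.sqrt_eq_rpow, ← Real.rpow_natCast, ← Real.rpow_mul (by norm_num)]
    congr 1; ring
  rw [e, Real.sqrt_mul (by norm_num), mul_pow, e2, mul_comm]
  gcongr
  have hb := one_add_mul_le_pow (a := -(1 / (3 * (D : ℝ)))) (by linarith) D
  have : 1 + (D : ℝ) * -(1 / (3 * (D : ℝ))) = 2 / 3 := by field_simp; try norm_num
  rw [this] at hb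
  refine hb.trans ?_
  gcongr
  · linarith
  apply Real.le_sqrt_of_sq_le
  nlinarith

theorem stmt_9 :
    ∃ c K : ℝ, 0 < c ∧ 0 < K ∧ ∀ D : ℕ, 1 ≤ D →
      c * (D : ℝ) ^ (-K) * ((3 : ℝ) / 4) ^ ((D : ℝ) / 2) *
          ((volume (Metric.closedBall (0 : EuclideanSpace ℝ (Fin D)) 1)).toReal) ^ 2
        ≤ (volume {p : EuclideanSpace ℝ (Fin D) × EuclideanSpace ℝ (Fin D) |
            p.1 ∈ Metric.closedBall (0 : EuclideanSpace ℝ (Fin D)) 1 ∧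
            p.2 ∈ Metric.closedBall (0 : EuclideanSpace ℝ (Fin D)) 1 ∧
            p.1 + p.2 ∈ Metric.closedBall (0 : EuclideanSpace ℝ (Fin D)) 1}).toReal := by
  refine ⟨2 / 27, 1, by norm_num, by norm_num, fun D hD => ?_⟩
  have hD' : (1 : ℝ) ≤ D := by exact_mod_cast hD
  set B := Metric.closedBall (0 : EuclideanSpace ℝ (Fin D)) 1 with hB
  set S := {p : EuclideanSpace ℝ (Fin D) × EuclideanSpace ℝ (Fin D) |
            p.1 ∈ B ∧ p.2 ∈ B ∧ p.1 + p.2 ∈ B} with hS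
  set ρ := √(3 / 4 - 1 / ((4 * D : ℕ) : ℝ)) with hρ
  have hBm : MeasurableSet B := measurableSet_closedBall
  have hSm : MeasurableSet S :=
    (measurable_fst hBm).inter ((measurable_snd hBm).inter
      ((measurable_fst.add measurable_snd) hBm))
  have hBf : volume B ≠ ⊤ := measure_closedBall_lt_top.ne
  have hSf : volume S ≠ ⊤ := by
    have h : S ⊆ B ×ˢ B := fun p hp => ⟨hp.1, hp.2.1⟩
    refine ne_top_of_le_ne_top ?_ (measure_mono h)
    rw [Measure.volume_eq_prod, Measure.prod_prod]
    exact ENNReal.mul_ne_top hBf hBf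
  have key : volume (Metric.closedBall (0 : EuclideanSpace ℝ (Fin D)) ρ) * volume B ≤
      ((2 * (4 * D) + 1 : ℕ) : ENNReal) * volume S := by
    rw [Measure.volume_eq_prod, Measure.prod_apply hSm,
      ← lintegral_const_mul _ (measurable_measure_prodMk_left hSm), ← setLIntegral_const]
    refine (setLIntegral_mono' hBm ?_).trans (setLIntegral_le_lintegral B _)
    intro x hx
    have hx1 : ‖x‖ ≤ 1 := by simpa [hB] using hx
    refine (lens_bound hD x hx1).trans ?_
    refine mul_le_mul_right ?_ _
    apply measure_mono
    intro y hy
    refine ⟨hx, ?_, ?_⟩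
    · simpa [hB] using hy.1
    · simpa [hB] using hy.2
  have hρ0 : 0 ≤ ρ := Real.sqrt_nonneg _
  rw [Measure.addHaar_closedBall' _ _ hρ0, finrank_euclideanSpace_fin] at key
  have key2 := ENNReal.toReal_mono (ENNReal.mul_ne_top (ENNReal.natCast_ne_top _) hSf) key
  rw [ENNReal.toReal_mul, ENNReal.toReal_mul, ENNReal.toReal_mul, ENNReal.toReal_natCast,
    ENNReal.toReal_ofReal (by positivity)] at key2
  have hnum := num_bound D hD
  rw [← hρ] at hnum
  rw [← hB] at key2
  set b := (volume B).toReal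
  set m := (volume S).toReal
  have hm : 0 ≤ m := ENNReal.toReal_nonneg
  push_cast at key2
  have h1 : 2 / 3 * ((3 : ℝ) / 4) ^ ((D : ℝ) / 2) * b ^ 2 ≤ 9 * D * m := by
    calc _ ≤ ρ ^ D * b ^ 2 := by gcongr
      _ = ρ ^ D * b * b := by ring
      _ ≤ _ := key2
      _ ≤ _ := by gcongr; linarith
  rw [Real.rpow_neg_one]
  calc _ = (2 / 3 * ((3 : ℝ) / 4) ^ ((D : ℝ) / 2) * b ^ 2) / (9 * D) := by
        field_simp; try norm_num
        try ring
    _ ≤ m := by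
        rw [div_le_iff₀ (by positivity)]; linarith
end

section
/- Let D ≥ 1 and let S ⊆ ℝ^D be a Lebesgue-measurable set of finite measure. Then there exists t ∈ [0,1)^D such that the number of integer lattice points in t + S is at least μ(S), i.e., |(t + S) ∩ ℤ^D| ≥ μ(S), where μ denotes Lebesgue measure. -/
open MeasureTheory

theorem stmt_10 (D : ℕ) (hD : 1 ≤ D) (S : Set (Fin D → ℝ))
    (hS : MeasurableSet S) (hfin : volume S < ⊤) :
    ∃ t : Fin D → ℝ, (∀ i, 0 ≤ t i ∧ t i < 1) ∧
      volume S ≤ (((t + ·) '' S ∩ {x : Fin D → ℝ | ∀ i, ∃ m : ℤ, x i = m}).encard : ENNReal) := by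
  classical
  let c : (Fin D → ℤ) → (Fin D → ℝ) := fun n i => (n i : ℝ)
  have hc : Function.Injective c := by
    intro a b h
    funext i
    have : (a i : ℝ) = b i := congrFun h i
    exact_mod_cast this
  let Q : Set (Fin D → ℝ) := Set.univ.pi fun _ => Set.Ico (0:ℝ) 1
  have hQ : MeasurableSet Q := MeasurableSet.univ_pi fun _ => measurableSet_Ico
  have hvQ : volume Q = 1 := by
    simp [Q, Real.volume_pi_Ico, volume_pi_pi]
  let f : (Fin D → ℝ) → ENNReal := fun t => ∑' n, ((fun t => c n - t) ⁻¹' S).indicator 1 t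
  have hm : ∀ n, MeasurableSet ((fun t => c n - t) ⁻¹' S) := fun n =>
    hS.preimage (measurable_const.sub measurable_id)
  have hf : ∀ t, f t = (((t + ·) '' S ∩ {x : Fin D → ℝ | ∀ i, ∃ m : ℤ, x i = m}).encard : ENNReal) := by
    intro t
    have h1 : ((t + ·) '' S ∩ {x : Fin D → ℝ | ∀ i, ∃ m : ℤ, x i = m}) = c '' {n | c n - t ∈ S} := by
      ext x
      constructor
      · rintro ⟨⟨s, hs, rfl⟩, hx⟩
        choose m hm using hx
        have : c m = t + s := by funext i; exact (hm i).symm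
        exact ⟨m, by simpa [this] using hs, this⟩
      · rintro ⟨n, hn, rfl⟩
        exact ⟨⟨c n - t, hn, by simp⟩, fun i => ⟨n i, rfl⟩⟩
    rw [h1, hc.encard_image, ← ENNReal.tsum_set_one, tsum_subtype {n | c n - t ∈ S} (fun _ => (1:ENNReal))]
    rfl
  have hint : volume S ≤ ∫⁻ t in Q, f t := by
    have hm' : ∀ n, MeasurableSet (S ∩ (fun t => c n - t) ⁻¹' Q) := fun n =>
      hS.inter (hQ.preimage (measurable_const.sub measurable_id))
    have h2 : ∀ n, ∫⁻ t in Q, ((fun t => c n - t) ⁻¹' S).indicator 1 t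
        = volume (S ∩ (fun t => c n - t) ⁻¹' Q) := by
      intro n
      rw [lintegral_indicator_one (hm n), Measure.restrict_apply (hm n),
        ← (Measure.measurePreserving_sub_left volume (c n)).measure_preimage (hm' n).nullMeasurableSet]
      congr 1
      ext t
      simp
    simp only [f]
    rw [lintegral_tsum fun n => (measurable_one.indicator (hm n)).aemeasurable]
    simp only [h2]
    refine le_trans (measure_mono ?_) (measure_iUnion_le _)
    intro x hx
    refine Set.mem_iUnion.2 ⟨fun i => ⌈x i⌉, hx, ?_⟩
    intro i _
    have h3 := Int.ceil_lt_add_one (x i)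
    have h4 := Int.le_ceil (x i)
    simp only [c, Pi.sub_apply, Set.mem_Ico]
    constructor <;> linarith
  by_contra! hcon
  have hlt : ∫⁻ t in Q, f t < ∫⁻ t in Q, volume S := by
    refine setLIntegral_strict_mono hQ (by simp [hvQ]) measurable_const ?_ ?_
    · refine ((lintegral_mono_ae (g := fun _ => volume S) ?_).trans_lt ?_).ne
      · filter_upwards [ae_restrict_mem hQ] with t ht
        rw [hf]
        exact (hcon t fun i => ht i trivial).le
      · simpa [hvQ] using hfin
    · refine Filter.Eventually.of_forall fun t ht => ?_
      rw [hf]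
      exact hcon t fun i => ht i trivial
  rw [setLIntegral_const, hvQ, mul_one] at hlt
  exact absurd hint hlt.not_ge
end

section
/- Let D ≥ 1 and let S ⊆ ℝ^D be a Lebesgue-measurable set of finite measure. Then there exists t ∈ [0,1)^D such that the number of integer lattice points in t + S is at most μ(S), i.e., |(t + S) ∩ ℤ^D| ≤ μ(S), where μ denotes Lebesgue measure. -/
open MeasureTheory

theorem stmt_11 (D : ℕ) (hD : 1 ≤ D) (S : Set (Fin D → ℝ))
    (hS : MeasurableSet S) (hfin : volume S < ⊤) :
    ∃ t : Fin D → ℝ, (∀ i, 0 ≤ t i ∧ t i < 1) ∧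
      (((t + ·) '' S ∩ {x : Fin D → ℝ | ∀ i, ∃ m : ℤ, x i = m}).encard : ENNReal) ≤ volume S := by
  classical
  let b := Pi.basisFun ℝ (Fin D)
  let L := Submodule.span ℤ (Set.range b)
  have hF : IsAddFundamentalDomain L (ZSpan.fundamentalDomain b) volume :=
    ZSpan.isAddFundamentalDomain b volume
  have hmeasQ : MeasurableSet (ZSpan.fundamentalDomain b) := ZSpan.fundamentalDomain_measurableSet b
  have hvol : volume (ZSpan.fundamentalDomain b) = 1 := by
    rw [ZSpan.fundamentalDomain_pi_basisFun, volume_pi, Measure.pi_pi]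
    simp
  have hnS : MeasurableSet (-S) := hS.neg
  let f : (Fin D → ℝ) → ENNReal := (-S).indicator 1
  have hfm : Measurable f := measurable_one.indicator hnS
  haveI : VAddInvariantMeasure L (Fin D → ℝ) volume :=
    ⟨fun c s _ => measure_preimage_add volume (c : Fin D → ℝ) s⟩
  haveI : Countable L := inferInstanceAs (Countable (Submodule.span ℤ (Set.range b)))
  have h1 := hF.lintegral_eq_tsum'' f
  have h2 : ∫⁻ x, f x = volume S := by
    rw [lintegral_indicator_one hnS, Measure.measure_neg]
  have hcm : ∀ g : L, Measurable fun x : Fin D → ℝ => f (g +ᵥ x) := fun g =>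
    hfm.comp (measurable_const_vadd g)
  rw [h2, ← lintegral_tsum (fun g => (hcm g).aemeasurable)] at h1
  obtain ⟨t, htQ, ht⟩ := exists_le_setLAverage (μ := volume) (s := ZSpan.fundamentalDomain b)
    (f := fun x => ∑' g : L, f (g +ᵥ x)) (by simp [hvol]) (by simp [hvol])
    (Measurable.tsum hcm).aemeasurable
  rw [setLAverage_eq, ← h1, hvol, div_one] at ht
  refine ⟨t, ?_, le_trans ?_ ht⟩
  · intro i
    have := (ZSpan.mem_fundamentalDomain b).1 htQ i
    simpa [b] using this
  · have hsum : ∑' g : L, f (g +ᵥ t) = (({g : L | -((g : Fin D → ℝ) + t) ∈ S}).encard : ENNReal) := by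
      rw [← ENNReal.tsum_set_one, tsum_subtype {g : L | -((g : Fin D → ℝ) + t) ∈ S} (fun _ => (1 : ENNReal))]
      rfl
    rw [hsum]
    have hsub : ((t + ·) '' S ∩ {x : Fin D → ℝ | ∀ i, ∃ m : ℤ, x i = m}) ⊆
        (fun g : L => -(g : Fin D → ℝ)) '' {g : L | -((g : Fin D → ℝ) + t) ∈ S} := by
      rintro _ ⟨⟨s, hs, rfl⟩, hx⟩
      refine ⟨⟨-(t + s), ?_⟩, ?_, ?_⟩
      · refine neg_mem ?_
        rw [Module.Basis.mem_span_iff_repr_mem]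
        intro i
        obtain ⟨m, hm⟩ := hx i
        exact ⟨m, by simpa [b] using hm.symm⟩
      · simpa using hs
      · simp
    exact_mod_cast (Set.encard_le_encard hsub).trans (Set.encard_image_le _ _)
end

section
/- Let D ≥ 1 and let x, y ∈ ℝ^D be nonzero vectors such that ⟨x/‖x‖₂, y/‖y‖₂⟩ ≤ −1/2, where ⟨·,·⟩ is the standard inner product. Then ‖x + y‖₂ ≤ max(‖x‖₂, ‖y‖₂). In particular, if x and y both lie in the closed unit Euclidean ball and their normalizations u = x/‖x‖₂, v = y/‖y‖₂ satisfy ‖u + v‖₂ ≤ 1, then x + y also lies in the closed unit ball. -/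
open RealInnerProductSpace

theorem stmt_12 (D : ℕ) (hD : 1 ≤ D) (x y : EuclideanSpace ℝ (Fin D))
    (hx : x ≠ 0) (hy : y ≠ 0) :
    (⟪‖x‖⁻¹ • x, ‖y‖⁻¹ • y⟫ ≤ -(1 / 2) → ‖x + y‖ ≤ max ‖x‖ ‖y‖) ∧
    (‖x‖ ≤ 1 → ‖y‖ ≤ 1 → ‖‖x‖⁻¹ • x + ‖y‖⁻¹ • y‖ ≤ 1 → ‖x + y‖ ≤ 1) := by
  have ha : 0 < ‖x‖ := norm_pos_iff.mpr hx
  have hb : 0 < ‖y‖ := norm_pos_iff.mpr hy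
  have key : ⟪‖x‖⁻¹ • x, ‖y‖⁻¹ • y⟫ ≤ -(1 / 2) → ‖x + y‖ ≤ max ‖x‖ ‖y‖ := by
    intro h
    rw [real_inner_smul_left, real_inner_smul_right] at h
    have h1 : ⟪x, y⟫ ≤ -(1 / 2) * (‖x‖ * ‖y‖) := by
      have h2 := mul_le_mul_of_nonneg_right h (mul_pos ha hb).le
      have h3 : ‖x‖⁻¹ * (‖y‖⁻¹ * ⟪x, y⟫) * (‖x‖ * ‖y‖) = ⟪x, y⟫ := by
        field_simp
      rwa [h3] at h2
    have h4 := norm_add_sq_real x y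
    refine (abs_le_of_sq_le_sq' ?_ (le_max_of_le_left ha.le)).2
    rcases le_total ‖x‖ ‖y‖ with hab | hab
    · rw [max_eq_right hab]
      nlinarith
    · rw [max_eq_left hab]
      nlinarith
  refine ⟨key, fun h1 h2 h3 => (key ?_).trans (max_le h1 h2)⟩
  have h4 := norm_add_sq_real (‖x‖⁻¹ • x) (‖y‖⁻¹ • y)
  have h5 : ‖‖x‖⁻¹ • x‖ = 1 := by
    rw [norm_smul, norm_inv, norm_norm, inv_mul_cancel₀ ha.ne']
  have h6 : ‖‖y‖⁻¹ • y‖ = 1 := by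
    rw [norm_smul, norm_inv, norm_norm, inv_mul_cancel₀ hb.ne']
  rw [h5, h6] at h4
  have h7 := norm_nonneg (‖x‖⁻¹ • x + ‖y‖⁻¹ • y)
  nlinarith
end

section
/- For every integer n ≥ 1 there exist finite sets X, Y, Z ⊆ ℤ each of cardinality n and a 3-AP-free set W ⊆ ℤ such that #{(x,y) ∈ X × Y : x + y ∈ Z and x − y ∈ W} ≥ r₃(n) · n² / (4(3n + 1)). In particular, p₃(n) ≥ r₃(n)/(4(3n+1)), where p₃(n) is the maximum of the probability P_{x∼X, y∼Y}(x + y ∈ Z and x − y ∈ W) over all such configurations with |X| = |Y| = |Z| = n and W 3-AP-free. -/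
/-- `r3 n` is the maximum cardinality of a 3-AP-free subset of `{1, ..., n}`. -/
noncomputable def r3 (n : ℕ) : ℕ :=
  sSup {k : ℕ | ∃ A : Finset ℤ, A ⊆ Finset.Icc 1 (n : ℤ) ∧ ThreeAPFree (A : Set ℤ) ∧ A.card = k}

theorem stmt_15 (n : ℕ) (hn : 1 ≤ n) :
    ∃ (X Y Z : Finset ℤ) (W : Set ℤ),
      X.card = n ∧ Y.card = n ∧ Z.card = n ∧ ThreeAPFree W ∧
      (r3 n : ℝ) * n ^ 2 / (4 * (3 * n + 1))
        ≤ ({p : ℤ × ℤ | p.1 ∈ X ∧ p.2 ∈ Y ∧ p.1 + p.2 ∈ Z ∧ p.1 - p.2 ∈ W}.ncard : ℝ) := by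
  obtain ⟨A, hA, hfree, hcard⟩ : r3 n ∈ {k : ℕ | ∃ A : Finset ℤ, A ⊆ Finset.Icc 1 (n : ℤ) ∧
      ThreeAPFree (A : Set ℤ) ∧ A.card = k} := by
    apply Nat.sSup_mem
    · exact ⟨0, ∅, by simp, by simp, by simp⟩
    · refine ⟨n, ?_⟩
      rintro k ⟨A, hA, -, rfl⟩
      simpa using Finset.card_le_card hA
  refine ⟨Finset.Icc 1 (n : ℤ), Finset.Icc (-(((n : ℤ) - 1) / 2)) (-(((n : ℤ) - 1) / 2) + n - 1),
    Finset.Icc 1 (n : ℤ), A, by simp, by simp, by simp, hfree, ?_⟩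
  set T : Set (ℤ × ℤ) := {p : ℤ × ℤ | p.1 ∈ Finset.Icc 1 (n : ℤ) ∧
    p.2 ∈ Finset.Icc (-(((n : ℤ) - 1) / 2)) (-(((n : ℤ) - 1) / 2) + n - 1) ∧
    p.1 + p.2 ∈ Finset.Icc 1 (n : ℤ) ∧ p.1 - p.2 ∈ (A : Set ℤ)} with hT
  have hfin : T.Finite := by
    apply Set.Finite.subset (Finset.finite_toSet (Finset.Icc 1 (n : ℤ) ×ˢ
      Finset.Icc (-(((n : ℤ) - 1) / 2)) (-(((n : ℤ) - 1) / 2) + n - 1)))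
    rintro p ⟨h1, h2, -, -⟩
    exact Finset.mem_coe.2 (Finset.mem_product.2 ⟨h1, h2⟩)
  let S : Finset ((_ : ℤ) × ℤ) := A.sigma fun w => Finset.Icc ((w + 2) / 2) (((n : ℤ) + w) / 2)
  have hinj : Function.Injective (fun q : ((_ : ℤ) × ℤ) => ((q.2, q.2 - q.1) : ℤ × ℤ)) := by
    rintro ⟨a, b⟩ ⟨c, d⟩ h
    simp only [Prod.mk.injEq] at h
    obtain ⟨rfl, h⟩ := h
    obtain rfl : a = c := by omega
    rfl
  have hle : S.card ≤ T.ncard := by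
    rw [← Finset.card_image_of_injective S hinj, ← Set.ncard_coe_finset]
    apply Set.ncard_le_ncard _ hfin
    intro p hp
    obtain ⟨⟨w, k⟩, hq, rfl⟩ := Finset.mem_image.1 (Finset.mem_coe.1 hp)
    obtain ⟨hw, hk⟩ := Finset.mem_sigma.1 hq
    have hw' := Finset.mem_Icc.1 (hA hw)
    have hk' := Finset.mem_Icc.1 hk
    simp only at hw hw' hk'
    simp only [hT, Set.mem_ofPred_eq, Finset.mem_Icc, sub_sub_cancel, Finset.mem_coe]
    refine ⟨?_, ?_, ?_, hw⟩ <;> constructor <;> omega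
  have hsum : (r3 n : ℝ) * n ^ 2 / (4 * (3 * n + 1)) ≤ (S.card : ℝ) := by
    rw [Finset.card_sigma, ← hcard]
    push_cast
    rw [mul_div_assoc, ← nsmul_eq_mul]
    apply Finset.card_nsmul_le_sum
    intro w hw
    have hw' := Finset.mem_Icc.1 (hA hw)
    rw [div_le_iff₀ (by positivity)]
    have h1 : 1 ≤ n → n ≤ 2 * (Finset.Icc ((w + 2) / 2) (((n : ℤ) + w) / 2)).card + 1 ∧
        1 ≤ (Finset.Icc ((w + 2) / 2) (((n : ℤ) + w) / 2)).card := by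
      rw [Int.card_Icc]
      omega
    obtain ⟨h2, h3⟩ := h1 hn
    generalize (Finset.Icc ((w + 2) / 2) (((n : ℤ) + w) / 2)).card = c at h2 h3
    have h2' : (n : ℝ) ≤ 2 * c + 1 := by exact_mod_cast h2
    have h3' : (1 : ℝ) ≤ c := by exact_mod_cast h3
    have hn' : (1 : ℝ) ≤ n := by exact_mod_cast hn
    nlinarith
  exact hsum.trans (by exact_mod_cast hle)
end
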